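/- Let G be a t-regular planar bipartite multigraph, t ≥ 2. Then all proper t-edge-colorings of G are Kempe-equivalent; that is, χ'_trans(G) = 2. -/

import Mathlib

/-!
The proof represents edge colorings by height functions on the faces of the graph and connects
any two of them through a canonical coloring.

Algebraic duals. A planar graph `K` has an algebraic dual (`Planar.hasDual`): faces on the two
sides of each directed edge such that the integral circulations of `K` are exactly the functions
of the form height on the left minus height on the right (`IsDual`). As planarity is given by forbidden
minors, this is proved along the lines of Thomassen's proof of Kuratowski's theorem. Separations of
order at most two are handled by gluing duals (`HasDual.glue_one`, `HasDual.glue_two`). In the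
3-connected case an edge `xy` is contracted so that no further vertex separates together with
`x` and `y` (`exists_contractible`); deleting the contracted vertex leaves a face bounded by a cycle
through all neighbours of `x` and `y` (`exists_face_around`). The two neighbourhoods neither
alternate on this cycle nor share three vertices, because of `K₃,₃` and `K₅`
(`Planar.not_alternating`, `Planar.not_three_common`), so `x` and `y` can be placed into the
face one after the other (`IsDual.addVertex`). Inserting digon faces between parallel edges
extends the dual to bipartite multigraphs, with edges directed from one side of the bipartition to
the other (`exists_multi_dual`).

Heights. Let `m` be the indicator function of one color class of a proper `t`-edge-coloring. In a
`t`-regular graph every color class meets every vertex exactly once, so the indicator of the class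
of color `i` in any proper coloring is `m` plus the difference of a height function `H i` across
the edges; conversely such heights yield proper colorings (`Rep`, `Rep.isProper`).

Averaging. Replacing `H i` and `H j`, `i < j`, by their average, rounded up for `i` and down for
`j`, is a Kempe change (`Rep.step`). It preserves `∑ H k` on each face and decreases
`∑ (t H k + k) ^ 2` unless already `H i - H j ∈ {0, 1}` everywhere (`energy_avg`). Hence every
coloring is Kempe-equivalent to one with balanced heights and the same height sums
(`Rep.exists_balanced`). Balanced heights are determined by their sums (`Balanced.unique`), and
the sums can be made equal for any two colorings, because the indicators of all colors add up to
`1` on each edge. So any two colorings reach the same balanced one (`Rep.connected`).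

The value of the transformation index follows, since the chromatic index is `t` by König's theorem
(`exists_isProper`).
-/

open SimpleGraph Set

namespace EdgeTrans

universe u v

variable {V : Type*} {W : Type*}

/-- The degree of a vertex. -/
noncomputable def deg (G : SimpleGraph V) (x : V) : ℕ :=
  (G.neighborSet x).ncard

/-- The maximum degree `Δ(G)`. -/
noncomputable def maxDeg (G : SimpleGraph V) : ℕ :=
  ⨆ x, deg G x

/-- A proper `t`-edge-coloring of `G`, using the colors `1, …, t`. -/
def IsProperEdgeColoring (G : SimpleGraph V) (t : ℕ) (f : Sym2 V → ℕ) : Prop :=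
  (∀ e ∈ G.edgeSet, f e ∈ Finset.Icc 1 t) ∧
  ∀ e₁ ∈ G.edgeSet, ∀ e₂ ∈ G.edgeSet, e₁ ≠ e₂ → (∃ x, x ∈ e₁ ∧ x ∈ e₂) → f e₁ ≠ f e₂

/-- The color class `M(f, j)`: the set of edges of `G` colored `j` by `f`. -/
def colorClass (G : SimpleGraph V) (f : Sym2 V → ℕ) (j : ℕ) : Set (Sym2 V) :=
  {e | e ∈ G.edgeSet ∧ f e = j}

/-- `f` and `g` differ by at most `n` color classes. -/
def DifferAtMost (G : SimpleGraph V) (n : ℕ) (f g : Sym2 V → ℕ) : Prop :=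
  {j : ℕ | colorClass G f j ≠ colorClass G g j}.ncard ≤ n

/-- `f` and `g` are `n`-equivalent proper `t`-edge-colorings: one can be transformed into the
other by a sequence of proper `t`-edge-colorings in which consecutive colorings differ by at
most `n` color classes. -/
def NEquiv (G : SimpleGraph V) (t n : ℕ) (f g : Sym2 V → ℕ) : Prop :=
  ∃ (k : ℕ) (F : ℕ → Sym2 V → ℕ), 1 ≤ k ∧ F 0 = f ∧ F k = g ∧
    (∀ i ≤ k, IsProperEdgeColoring G t (F i)) ∧
    ∀ i < k, DifferAtMost G n (F i) (F (i + 1))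

/-- The chromatic index `χ'(G)`. -/
noncomputable def chromIdx (G : SimpleGraph V) : ℕ :=
  sInf {t | ∃ f, IsProperEdgeColoring G t f}

/-- The edge chromatic transformation index `χ'_trans(G)`: the minimum `n ≥ 2` such that any
two proper `χ'(G)`-edge-colorings of `G` are `n`-equivalent. -/
noncomputable def transIdx (G : SimpleGraph V) : ℕ :=
  sInf {n | 2 ≤ n ∧ ∀ f g, IsProperEdgeColoring G (chromIdx G) f →
      IsProperEdgeColoring G (chromIdx G) g → NEquiv G (chromIdx G) n f g}

/-- `v` is a cutvertex of `G`: some two other vertices are connected in `G`, but every walk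
between them passes through `v`. -/
def IsCutVertex (G : SimpleGraph V) (x : V) : Prop :=
  ∃ a b : V, a ≠ x ∧ b ≠ x ∧ G.Reachable a b ∧ ∀ p : G.Walk a b, x ∈ p.support

/-- A block of `G`: a maximal connected subgraph without a cutvertex of the subgraph. -/
def IsBlock (G : SimpleGraph V) (B : G.Subgraph) : Prop :=
  B.coe.Connected ∧ (∀ x, ¬ IsCutVertex B.coe x) ∧
    ∀ B' : G.Subgraph, B ≤ B' → B'.coe.Connected →
      (∀ x, ¬ IsCutVertex B'.coe x) → B' = B

/-- Membership in the class `𝒜(q)`: every subgraph `H` of `G` with `Δ(H) ≤ q` has a proper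
`q`-edge-coloring. -/
def MemA (q : ℕ) (G : SimpleGraph V) : Prop :=
  ∀ H : SimpleGraph V, H ≤ G → maxDeg H ≤ q → ∃ f, IsProperEdgeColoring H q f

/-- `G` is `k`-degenerate: every (nonempty) subgraph of `G` contains a vertex of degree
at most `k` in the subgraph. -/
def Degenerate (k : ℕ) (G : SimpleGraph V) : Prop :=
  ∀ H : G.Subgraph, H.verts.Nonempty → ∃ x ∈ H.verts, (H.neighborSet x).ncard ≤ k

/-- `G` has `H` as a minor (via branch sets). -/
def HasMinor (G : SimpleGraph V) (H : SimpleGraph W) : Prop :=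
  ∃ F : W → Set V,
    (∀ w, (G.induce (F w)).Connected) ∧
    (∀ w₁ w₂, w₁ ≠ w₂ → Disjoint (F w₁) (F w₂)) ∧
    (∀ w₁ w₂, H.Adj w₁ w₂ → ∃ v₁ ∈ F w₁, ∃ v₂ ∈ F w₂, G.Adj v₁ v₂)

/-- Planarity, via Wagner's characterization: no `K₅` minor and no `K₃,₃` minor. -/
def Planar (G : SimpleGraph V) : Prop :=
  ¬ HasMinor G (completeGraph (Fin 5)) ∧
  ¬ HasMinor G (completeBipartiteGraph (Fin 3) (Fin 3))

/-- Series-parallel: no `K₄` minor. -/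
def SeriesParallel (G : SimpleGraph V) : Prop :=
  ¬ HasMinor G (completeGraph (Fin 4))

/-- `G` is chordless: in every cycle, any two nonconsecutive vertices are non-adjacent,
i.e. every edge of `G` joining two vertices of a cycle is an edge of the cycle. -/
def Chordless (G : SimpleGraph V) : Prop :=
  ∀ (x : V) (c : G.Walk x x), c.IsCycle →
    ∀ a ∈ c.support, ∀ b ∈ c.support, G.Adj a b → s(a, b) ∈ c.edges

/-- The wheel graph with hub `none` and cycle `ZMod n`. -/
def wheelGraph (n : ℕ) : SimpleGraph (Option (ZMod n)) :=
  SimpleGraph.fromRel (fun a b =>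
    a = none ∨ ∃ i : ZMod n, a = some i ∧ b = some (i + 1))

/-- `G` is a wheel graph. -/
def IsWheel (G : SimpleGraph V) : Prop :=
  ∃ n : ℕ, 3 ≤ n ∧ Nonempty (G ≃g wheelGraph n)

/-- `G` is a Halin graph: `G` is planar and is the edge-disjoint union of a spanning tree `T`
on at least four vertices having no vertex of degree two, and a cycle through exactly the
leaves of `T`. -/
def IsHalin (G : SimpleGraph V) : Prop :=
  Planar G ∧ 4 ≤ Nat.card V ∧
  ∃ T : SimpleGraph V, T ≤ G ∧ T.IsTree ∧ (∀ x : V, deg T x ≠ 2) ∧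
    ∃ (x₀ : V) (c : G.Walk x₀ x₀), c.IsCycle ∧
      (∀ e : Sym2 V, e ∈ c.edges ↔ e ∈ G.edgeSet \ T.edgeSet) ∧
      (∀ u : V, u ∈ c.support ↔ deg T u = 1)

/-- The subgraph `G(f,g,t)`: the (spanning) subgraph of `G` with edge set
`M(f,t) △ M(g,t)`. -/
def diffGraph (G : SimpleGraph V) (t : ℕ) (f g : Sym2 V → ℕ) : SimpleGraph V :=
  SimpleGraph.fromEdgeSet (symmDiff (colorClass G f t) (colorClass G g t))

/-- The walk `p` (a path or a cycle) is an entire connected component of its ambient graph: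
every edge incident with a vertex of `p` is an edge of `p`. -/
def IsComponentWalk {G : SimpleGraph V} {u x : V} (p : G.Walk u x) : Prop :=
  ∀ a ∈ p.support, ∀ b, G.Adj a b → s(a, b) ∈ p.edges

/-- The color `i` is missing at `x` under `f`. -/
def MissingAt (G : SimpleGraph V) (f : Sym2 V → ℕ) (i : ℕ) (x : V) : Prop :=
  ∀ e ∈ G.edgeSet, x ∈ e → f e ≠ i

/-- The path `p` is alternately colored with colors `a` and `b` under `f`
(an `(a,b)`-colored path). -/
def AltColored (f : Sym2 V → ℕ) (a b : ℕ) {G : SimpleGraph V} {u x : V}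
    (p : G.Walk u x) : Prop :=
  (∀ i : Fin p.edges.length, f (p.edges.get i) = if Even i.1 then a else b) ∨
  (∀ i : Fin p.edges.length, f (p.edges.get i) = if Even i.1 then b else a)

/-- The path `p` is `t`-alternating: of any two consecutive edges, one is colored `t`. -/
def AltPath (f : Sym2 V → ℕ) (t : ℕ) {G : SimpleGraph V} {u x : V}
    (p : G.Walk u x) : Prop :=
  ∀ (i : ℕ) (h : i + 1 < p.edges.length),
    f (p.edges.get ⟨i, Nat.lt_of_succ_lt h⟩) = t ∨ f (p.edges.get ⟨i + 1, h⟩) = t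

/-- The cycle `c` is `t`-alternating: of any two (cyclically) consecutive edges, one is
colored `t`. -/
def IsAltCycle (f : Sym2 V → ℕ) (t : ℕ) {G : SimpleGraph V} {u : V}
    (c : G.Walk u u) : Prop :=
  ∀ i : Fin c.edges.length,
    f (c.edges.get i) = t ∨
    f (c.edges.get ⟨(i.1 + 1) % c.edges.length, Nat.mod_lt _ i.pos⟩) = t

/-- `G` is 2-connected. -/
def TwoConnected (G : SimpleGraph V) : Prop :=
  G.Connected ∧ 3 ≤ Nat.card V ∧ ∀ x, ¬ IsCutVertex G x

/-- The union of the cycle `c` and the ears `P j` for `j < i`, as a subgraph. -/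
noncomputable def earPrefix {G : SimpleGraph V} {v₀ : V} (c : G.Walk v₀ v₀) {n : ℕ}
    {x y : Fin n → V} (P : ∀ i : Fin n, G.Walk (x i) (y i)) (i : ℕ) : G.Subgraph :=
  c.toSubgraph ⊔ ⨆ j : Fin n, ⨆ _ : (j : ℕ) < i, (P j).toSubgraph

/-- `c, P 0, …, P (n-1)` is a `t`-alternating ear decomposition with respect to the cycle `c`:
`c` is a `t`-alternating cycle, and each `P i` is a `(cᵢ, t)`-colored path (`cᵢ ≤ t - 1`) which
is an ear of `c ∪ P 0 ∪ … ∪ P i`, i.e. its endpoints lie in the previous part and its internal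
vertices have degree 2 in `c ∪ P 0 ∪ … ∪ P i`. -/
def IsEarDecomp (G : SimpleGraph V) (f : Sym2 V → ℕ) (t : ℕ) {v₀ : V} (c : G.Walk v₀ v₀)
    (n : ℕ) (x y : Fin n → V) (P : ∀ i : Fin n, G.Walk (x i) (y i)) : Prop :=
  c.IsCycle ∧ IsAltCycle f t c ∧
  ∀ i : Fin n,
    (P i).IsPath ∧ 1 ≤ (P i).length ∧
    (∃ ci : ℕ, ci ≤ t - 1 ∧ AltColored f ci t (P i)) ∧
    x i ∈ (earPrefix c P (i : ℕ)).verts ∧ y i ∈ (earPrefix c P (i : ℕ)).verts ∧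
    ∀ a ∈ (P i).support, a ≠ x i → a ≠ y i →
      ((earPrefix c P ((i : ℕ) + 1)).neighborSet a).ncard = 2

/-- The line graph of `G`. -/
def lineGr (G : SimpleGraph V) : SimpleGraph G.edgeSet :=
  SimpleGraph.fromRel (fun e₁ e₂ => ∃ x, x ∈ (e₁ : Sym2 V) ∧ x ∈ (e₂ : Sym2 V))

/-- The clique number (in `ℕ∞`). -/
noncomputable def cliqueNumE (G : SimpleGraph V) : ℕ∞ :=
  sSup {n : ℕ∞ | ∃ (m : ℕ) (s : Finset V), n = (m : ℕ∞) ∧ G.IsNClique m s}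

/-- `G` is a perfect graph: every induced subgraph has chromatic number equal to its
clique number. -/
def IsPerfect (G : SimpleGraph V) : Prop :=
  ∀ s : Set V, (G.induce s).chromaticNumber = cliqueNumE (G.induce s)

/-- A partition of the vertex set of `G` into `n` cliques, each of size `sz`. -/
def IsCliquePartition (G : SimpleGraph V) (n sz : ℕ) (P : Set (Set V)) : Prop :=
  P.ncard = n ∧ (∀ s ∈ P, G.IsClique s ∧ s.ncard = sz) ∧
  ⋃₀ P = Set.univ ∧ P.Pairwise fun s₁ s₂ => Disjoint s₁ s₂

/-- A proper vertex `n`-coloring of `G`, viewed as a partition of the vertex set into `n`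
independent sets (color classes). -/
def IsIndepPartition (G : SimpleGraph V) (n : ℕ) (P : Set (Set V)) : Prop :=
  P.ncard = n ∧ (∀ s ∈ P, ∀ a ∈ s, ∀ b ∈ s, ¬ G.Adj a b) ∧
  ⋃₀ P = Set.univ ∧ P.Pairwise fun s₁ s₂ => Disjoint s₁ s₂

/-- The graph `H(p,n)`: vertex classes `V_1, …, V_{2n}` of size `p` (indexed here by
`ZMod (2n)`), with two vertices adjacent iff they lie in the same class or in (cyclically)
consecutive classes. -/
def Hgraph (p n : ℕ) : SimpleGraph (ZMod (2 * n) × Fin p) :=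
  SimpleGraph.fromRel (fun a b => a.1 = b.1 ∨ a.1 + 1 = b.1)

/-- The clique partition `{C_1, …, C_n}` of `H(p,n)`, `C_i = V_{2i-1} ∪ V_{2i}`. -/
def Cpart (p n : ℕ) : Set (Set (ZMod (2 * n) × Fin p)) :=
  {s | ∃ i : Fin n, s = {x | x.1 = ((2 * (i : ℕ) : ℕ) : ZMod (2 * n)) ∨
      x.1 = ((2 * (i : ℕ) + 1 : ℕ) : ZMod (2 * n))}}

/-- The clique partition `{R_1, …, R_n}` of `H(p,n)`, `R_1 = V_{2n} ∪ V_1` and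
`R_i = V_{2i-2} ∪ V_{2i-1}`. -/
def Rpart (p n : ℕ) : Set (Set (ZMod (2 * n) × Fin p)) :=
  {s | ∃ i : Fin n, s = {x | x.1 = ((2 * (i : ℕ) : ℕ) : ZMod (2 * n)) - 1 ∨
      x.1 = ((2 * (i : ℕ) : ℕ) : ZMod (2 * n))}}

/-- A multigraph on vertices `α` with edges `β`: each edge has two distinct endpoints. -/
structure Multigraph (α : Type u) (β : Type v) where
  ends : β → Sym2 α
  not_isDiag : ∀ e, ¬ (ends e).IsDiag

namespace Multigraph

variable {α : Type u} {β : Type v}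

/-- A proper `t`-edge-coloring of a multigraph, with colors `1, …, t`. -/
def IsProper (G : Multigraph α β) (t : ℕ) (f : β → ℕ) : Prop :=
  (∀ e, f e ∈ Finset.Icc 1 t) ∧
  ∀ e₁ e₂ : β, e₁ ≠ e₂ → (∃ x, x ∈ G.ends e₁ ∧ x ∈ G.ends e₂) → f e₁ ≠ f e₂

/-- The color class `M(f,j)` of a multigraph edge coloring. -/
def mColorClass (f : β → ℕ) (j : ℕ) : Set β := {e | f e = j}

/-- `f` and `g` differ by at most `n` color classes. -/
def MDifferAtMost (n : ℕ) (f g : β → ℕ) : Prop :=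
  {j : ℕ | mColorClass f j ≠ mColorClass g j}.ncard ≤ n

/-- `n`-equivalence of proper `t`-edge-colorings of a multigraph. -/
def MNEquiv (G : Multigraph α β) (t n : ℕ) (f g : β → ℕ) : Prop :=
  ∃ (k : ℕ) (F : ℕ → β → ℕ), 1 ≤ k ∧ F 0 = f ∧ F k = g ∧
    (∀ i ≤ k, G.IsProper t (F i)) ∧ ∀ i < k, MDifferAtMost n (F i) (F (i + 1))

/-- The chromatic index of a multigraph. -/
noncomputable def mChromIdx (G : Multigraph α β) : ℕ :=
  sInf {t | ∃ f, G.IsProper t f}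

/-- The edge chromatic transformation index of a multigraph. -/
noncomputable def mTransIdx (G : Multigraph α β) : ℕ :=
  sInf {n | 2 ≤ n ∧ ∀ f g, G.IsProper G.mChromIdx f → G.IsProper G.mChromIdx g →
      G.MNEquiv G.mChromIdx n f g}

/-- The degree of a vertex in a multigraph. -/
noncomputable def mDeg (G : Multigraph α β) (x : α) : ℕ := {e | x ∈ G.ends e}.ncard

/-- The underlying simple graph of a multigraph. -/
def toSimple (G : Multigraph α β) : SimpleGraph α :=
  SimpleGraph.fromEdgeSet (Set.range G.ends)

end Multigraph

/-! ### Connected vertex sets, flows and circulations -/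

section Flows

open scoped Classical

/-- `T` is nonempty and induces a connected subgraph of `G`, in cut form: a nonempty part of `T`
that no edge inside `T` leaves is all of `T`. -/
def ConnOn (G : SimpleGraph V) (T : Set V) : Prop :=
  T.Nonempty ∧ ∀ A, A ⊆ T → A.Nonempty → (∀ a ∈ A, ∀ b ∈ T, G.Adj a b → b ∈ A) → T ⊆ A

theorem ConnOn.connected {G : SimpleGraph V} {T : Set V} (h : ConnOn G T) :
    (G.induce T).Connected := by
  obtain ⟨⟨x, hx⟩, h2⟩ := h
  rw [SimpleGraph.connected_iff_exists_forall_reachable]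
  refine ⟨⟨x, hx⟩, fun ⟨y, hy⟩ => ?_⟩
  have := h2 {z | ∃ hz : z ∈ T, (G.induce T).Reachable ⟨x, hx⟩ ⟨z, hz⟩} (fun z hz => hz.1)
    ⟨x, hx, SimpleGraph.Reachable.refl _⟩ (by
      rintro a ⟨ha, hr⟩ b hb hab
      exact ⟨hb, hr.trans (SimpleGraph.Adj.reachable (by simpa using hab))⟩) hy
  exact this.2

theorem connOn_of_connected {G : SimpleGraph V} {T : Set V} (h : (G.induce T).Connected) :
    ConnOn G T := by
  obtain ⟨⟨x, hx⟩⟩ := h.nonempty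
  refine ⟨⟨x, hx⟩, fun A hA ⟨a, ha⟩ hcl y hy => ?_⟩
  have hr : ∀ u v : T, (G.induce T).Walk u v → (u : V) ∈ A → (v : V) ∈ A := by
    intro u v p
    induction p with
    | nil => exact id
    | cons hadj _ ih => exact fun hu => ih (hcl _ hu _ (Subtype.prop _) (by simpa using hadj))
  obtain ⟨p⟩ := h.preconnected ⟨a, hA ha⟩ ⟨y, hy⟩
  exact hr _ _ p ha

theorem connOn_singleton (G : SimpleGraph V) (x : V) : ConnOn G {x} := by
  refine ⟨⟨x, rfl⟩, fun A hA ⟨a, ha⟩ _ y hy => ?_⟩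
  have h1 : a = x := hA ha
  have h2 : y = x := hy
  rw [h2, ← h1]; exact ha

/-- A non-connected nonempty vertex set splits into two nonempty parts with no edge between. -/
theorem exists_split {G : SimpleGraph V} {T : Set V} (hT : T.Nonempty) (h : ¬ ConnOn G T) :
    ∃ A B : Set V, A.Nonempty ∧ B.Nonempty ∧ Disjoint A B ∧ A ∪ B = T ∧
      ∀ a ∈ A, ∀ b ∈ B, ¬ G.Adj a b := by
  simp only [ConnOn, not_and, not_forall] at h
  obtain ⟨A, hA, hne, hcl, hn⟩ := h hT
  obtain ⟨b, hb, hbA⟩ := Set.not_subset.1 hn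
  refine ⟨A, T \ A, hne, ⟨b, hb, hbA⟩, disjoint_sdiff_self_right, Set.union_sdiff_cancel hA, ?_⟩
  intro a ha c hc hac
  exact hc.2 (hcl a ha c hc.1 hac)

theorem ConnOn.exists_adj {G : SimpleGraph V} {T A : Set V} (h : ConnOn G T) (hA : A ⊆ T)
    (hne : A.Nonempty) {c : V} (hc : c ∈ T) (hcA : c ∉ A) :
    ∃ a ∈ A, ∃ b ∈ T, b ∉ A ∧ G.Adj a b := by
  by_contra hcon
  push Not at hcon
  refine hcA (h.2 A hA hne (fun a ha b hb hab => ?_) hc)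
  by_contra hbA
  exact hcon a ha b hb hbA hab

theorem ConnOn.mono {G H : SimpleGraph V} {T : Set V} (h : ConnOn G T)
    (hGH : ∀ a ∈ T, ∀ b ∈ T, G.Adj a b → H.Adj a b) : ConnOn H T :=
  ⟨h.1, fun A hA hne hcl => h.2 A hA hne fun a ha b hb hab =>
    hcl a ha b hb (hGH a (hA ha) b hb hab)⟩

/-- The unit flow along the single pair `(a, b)`. -/
noncomputable def unitFlow (a b : V) (u v : V) : ℤ :=
  (if u = a ∧ v = b then 1 else 0) - (if u = b ∧ v = a then 1 else 0)

theorem unitFlow_anti (a b u v : V) : unitFlow a b u v = - unitFlow a b v u := by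
  unfold unitFlow
  simp only [and_comm (a := v = a), and_comm (a := v = b)]; ring

/-- The tension of the potential `h` on faces: the dart `uv` of `K` receives the value of `h` on
its left face `L u v` minus the value on its right face `L v u`. -/
noncomputable def pot {Φ : Type*} (K : SimpleGraph V) (L : V → V → Φ) (h : Φ → ℤ) (u v : V) : ℤ :=
  if K.Adj u v then h (L u v) - h (L v u) else 0

theorem pot_anti {Φ : Type*} (K : SimpleGraph V) (L : V → V → Φ) (h : Φ → ℤ) (u v : V) :
    pot K L h u v = - pot K L h v u := by
  unfold pot
  by_cases huv : K.Adj u v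
  · rw [if_pos huv, if_pos huv.symm]; ring
  · rw [if_neg huv, if_neg (fun h => huv h.symm)]; ring

variable [Fintype V]

/-- The integral circulations of `K`: antisymmetric functions on the darts of `K` (extended by
zero to all pairs of vertices) obeying the conservation law at every vertex. -/
structure IsCirc (K : SimpleGraph V) (f : V → V → ℤ) : Prop where
  anti : ∀ u v, f u v = - f v u
  supp : ∀ u v, ¬ K.Adj u v → f u v = 0
  bal : ∀ v, ∑ u, f v u = 0

theorem unitFlow_div (a b v : V) :
    ∑ u, unitFlow a b v u = (if v = a then 1 else 0) - (if v = b then 1 else 0) := by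
  unfold unitFlow
  rw [Finset.sum_sub_distrib]
  congr 1
  · by_cases h : v = a <;> simp [h]
  · by_cases h : v = b <;> simp [h]

theorem IsCirc.sub {K : SimpleGraph V} {f g : V → V → ℤ} (hf : IsCirc K f) (hg : IsCirc K g) :
    IsCirc K (fun u v => f u v - g u v) where
  anti u v := by rw [hf.anti, hg.anti]; ring
  supp u v h := by rw [hf.supp u v h, hg.supp u v h]; ring
  bal v := by rw [Finset.sum_sub_distrib, hf.bal, hg.bal]; ring

/-- Balance at all vertices but one implies balance everywhere. -/
theorem sum_eq_zero_of_others {f : V → V → ℤ} (anti : ∀ u v, f u v = - f v u) (v : V)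
    (h : ∀ w, w ≠ v → ∑ u, f w u = 0) : ∑ u, f v u = 0 := by
  have h0 : ∑ w, ∑ u, f w u = 0 := by
    have h1 : ∑ w, ∑ u, f w u = - ∑ w, ∑ u, f w u := by
      conv_lhs => rw [Finset.sum_comm]
      rw [← Finset.sum_neg_distrib]
      refine Finset.sum_congr rfl fun w _ => ?_
      rw [← Finset.sum_neg_distrib]
      exact Finset.sum_congr rfl fun u _ => anti u w
    omega
  rwa [Finset.sum_eq_single v (fun w _ hw => h w hw) (by simp)] at h0

/-- Within a connected set a unit of flow can be sent from any vertex to any other. -/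
theorem ConnOn.exists_flow {G : SimpleGraph V} {T : Set V} (h : ConnOn G T) {a b : V}
    (ha : a ∈ T) (hb : b ∈ T) :
    ∃ f : V → V → ℤ, (∀ u v, f u v = - f v u) ∧
      (∀ u v, ¬ (G.Adj u v ∧ u ∈ T ∧ v ∈ T) → f u v = 0) ∧
      ∀ v, ∑ u, f v u = (if v = a then 1 else 0) - (if v = b then 1 else 0) := by
  refine (h.2 {b | b ∈ T ∧ ∃ f : V → V → ℤ, (∀ u v, f u v = - f v u) ∧
      (∀ u v, ¬ (G.Adj u v ∧ u ∈ T ∧ v ∈ T) → f u v = 0) ∧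
      ∀ v, ∑ u, f v u = (if v = a then 1 else 0) - (if v = b then 1 else 0)}
      (fun _ hb => hb.1) ⟨a, ha, fun _ _ => 0, by simp, by simp, by simp⟩ ?_ hb).2
  rintro c ⟨hc, f, hf1, hf2, hf3⟩ d hd hcd
  refine ⟨hd, fun u v => f u v + unitFlow c d u v, fun u v => ?_, fun u v huv => ?_, fun v => ?_⟩
  · simp only [hf1 u v, unitFlow_anti c d u v]; ring
  · have h1 : ¬ (u = c ∧ v = d) := fun h => huv ⟨by rw [h.1, h.2]; exact hcd, by
      rw [h.1]; exact hc, by rw [h.2]; exact hd⟩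
    have h2 : ¬ (u = d ∧ v = c) := fun h => huv ⟨by rw [h.1, h.2]; exact hcd.symm, by
      rw [h.1]; exact hd, by rw [h.2]; exact hc⟩
    simp only [hf2 u v huv, unitFlow, if_neg h1, if_neg h2]; ring
  · rw [Finset.sum_add_distrib, hf3, unitFlow_div]; ring

/-- If `v` has neighbours `a` and `b` in a connected set avoiding `v`, some circulation uses
exactly the edges `va` and `bv` at `v`. -/
theorem exists_circ_through {K : SimpleGraph V} {T : Set V} (h : ConnOn K T) {v a b : V}
    (hv : v ∉ T) (ha : a ∈ T) (hb : b ∈ T) (hva : K.Adj v a) (hvb : K.Adj v b) :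
    ∃ f, IsCirc K f ∧
      ∀ u, f v u = (if u = a then 1 else 0) - (if u = b then 1 else 0) := by
  obtain ⟨g, hg1, hg2, hg3⟩ := h.exists_flow ha hb
  have hav : a ≠ v := fun h => hv (h ▸ ha)
  have hbv : b ≠ v := fun h => hv (h ▸ hb)
  refine ⟨fun u w => g u w + unitFlow v a u w + unitFlow b v u w, ⟨?_, ?_, ?_⟩, ?_⟩
  · intro u w
    rw [hg1, unitFlow_anti v a, unitFlow_anti b v]; ring
  · intro u w huw
    have e1 : ¬ (u = v ∧ w = a) := fun h => huw (by rw [h.1, h.2]; exact hva)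
    have e2 : ¬ (u = a ∧ w = v) := fun h => huw (by rw [h.1, h.2]; exact hva.symm)
    have e3 : ¬ (u = b ∧ w = v) := fun h => huw (by rw [h.1, h.2]; exact hvb.symm)
    have e4 : ¬ (u = v ∧ w = b) := fun h => huw (by rw [h.1, h.2]; exact hvb)
    simp only [hg2 u w (fun h => huw h.1), unitFlow, if_neg e1, if_neg e2, if_neg e3, if_neg e4]
    ring
  · intro w
    rw [Finset.sum_add_distrib, Finset.sum_add_distrib, hg3, unitFlow_div, unitFlow_div]; ring
  · intro u
    simp only [hg2 v u (fun h => hv h.2.1), unitFlow, hav.symm, hbv.symm, true_and, false_and]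
    simp [sub_eq_add_neg]

/-! ### Algebraic duals -/

/-- `L` (assigning to each dart the face on its left) is an algebraic dual of `K`: the
circulations of `K` are exactly the functions derived from potentials on the faces. The face
type may contain faces incident with no dart. -/
structure IsDual {Φ : Type*} (K : SimpleGraph V) (L : V → V → Φ) : Prop where
  bal : ∀ h v, ∑ u, pot K L h v u = 0
  exact : ∀ f, IsCirc K f → ∃ h, f = pot K L h

/-- `K` has an algebraic dual. -/
def HasDual (K : SimpleGraph V) : Prop :=
  ∃ (Φ : Type) (L : V → V → Φ), IsDual K L

theorem IsDual.isCirc {Φ : Type*} {K : SimpleGraph V} {L : V → V → Φ} (hL : IsDual K L)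
    (h : Φ → ℤ) : IsCirc K (pot K L h) :=
  ⟨pot_anti K L h, fun _ _ huv => if_neg huv, hL.bal h⟩

/-- The relation on faces generated by removing the edges of `K` not in `K'`. -/
def mergeRel {Φ : Type*} (K K' : SimpleGraph V) (L : V → V → Φ) (p q : Φ) : Prop :=
  ∃ u v, K.Adj u v ∧ ¬ K'.Adj u v ∧ p = L u v ∧ q = L v u

/-- Deleting edges merges the faces on their two sides. -/
theorem IsDual.merge {Φ : Type*} {K K' : SimpleGraph V} {L : V → V → Φ} (hL : IsDual K L)
    (hK : K' ≤ K) : IsDual K' (fun u v => Quot.mk (mergeRel K K' L) (L u v)) := by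
  have key : ∀ h : Quot (mergeRel K K' L) → ℤ,
      pot K' (fun u v => Quot.mk (mergeRel K K' L) (L u v)) h
        = pot K L (fun p => h (Quot.mk _ p)) := by
    intro h
    funext u v
    unfold pot
    by_cases h1 : K'.Adj u v
    · rw [if_pos h1, if_pos (hK h1)]
    · by_cases h2 : K.Adj u v
      · have h3 : Quot.mk (mergeRel K K' L) (L u v) = Quot.mk (mergeRel K K' L) (L v u) :=
          Quot.sound ⟨u, v, h2, h1, rfl, rfl⟩
        rw [if_neg h1, if_pos h2]
        simp only [h3, sub_self]
      · rw [if_neg h1, if_neg h2]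
  refine ⟨fun h v => ?_, fun f hf => ?_⟩
  · rw [key]; exact hL.bal _ v
  · obtain ⟨h, hh⟩ := hL.exact f ⟨hf.anti, fun u v huv => hf.supp u v (fun h => huv (hK h)),
      hf.bal⟩
    have hr : ∀ p q, mergeRel K K' L p q → h p = h q := by
      rintro p q ⟨u, v, h1, h2, rfl, rfl⟩
      have h3 := hf.supp u v h2
      rw [hh, pot, if_pos h1] at h3
      omega
    exact ⟨Quot.lift h hr, by rw [key]; exact hh⟩

theorem HasDual.mono {K K' : SimpleGraph V} (h : HasDual K) (hK : K' ≤ K) : HasDual K' := by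
  obtain ⟨Φ, L, hL⟩ := h
  exact ⟨_, _, hL.merge hK⟩

end Flows

/-! ### Gluing duals along small separations -/

section Glue

open scoped Classical

variable [Fintype V]

/-- Graphs sharing at most one vertex. -/
theorem HasDual.glue_one {H₁ H₂ : SimpleGraph V} (d₁ : HasDual H₁) (d₂ : HasDual H₂) (t : V)
    (hsep : ∀ w, w ≠ t → (∀ b, ¬ H₁.Adj w b) ∨ ∀ b, ¬ H₂.Adj w b) : HasDual (H₁ ⊔ H₂) := by
  obtain ⟨Φ₁, L₁, hL₁⟩ := d₁
  obtain ⟨Φ₂, L₂, hL₂⟩ := d₂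
  have hdis : ∀ a b, H₁.Adj a b → ¬ H₂.Adj a b := by
    intro a b h1 h2
    have ha : a = t := by
      by_contra ha
      rcases hsep a ha with h | h
      · exact h b h1
      · exact h b h2
    have hb : b = t := by
      by_contra hb
      rcases hsep b hb with h | h
      · exact h a h1.symm
      · exact h a h2.symm
    exact h1.ne (ha.trans hb.symm)
  let L : V → V → Φ₁ ⊕ Φ₂ := fun a b =>
    if H₁.Adj a b then Sum.inl (L₁ a b) else Sum.inr (L₂ a b)
  have key : ∀ h : Φ₁ ⊕ Φ₂ → ℤ, pot (H₁ ⊔ H₂) L h =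
      fun a b => pot H₁ L₁ (fun p => h (Sum.inl p)) a b
        + pot H₂ L₂ (fun p => h (Sum.inr p)) a b := by
    intro h
    funext a b
    by_cases h1 : H₁.Adj a b
    · simp [pot, L, h1, h1.symm, hdis a b h1]
    · have h1' : ¬ H₁.Adj b a := fun h => h1 h.symm
      simp [pot, L, h1, h1']
  refine ⟨Φ₁ ⊕ Φ₂, L, fun h v => ?_, fun f hf => ?_⟩
  · rw [key, Finset.sum_add_distrib, hL₁.bal, hL₂.bal, add_zero]
  · let g : V → V → ℤ := fun a b => if H₁.Adj a b then f a b else 0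
    have ganti : ∀ a b, g a b = - g b a := by
      intro a b
      simp only [g, H₁.adj_comm a b]
      split_ifs
      · exact hf.anti a b
      · simp
    have gbal : ∀ w, w ≠ t → ∑ b, g w b = 0 := by
      intro w hw
      rcases hsep w hw with h | h
      · exact Finset.sum_eq_zero fun b _ => if_neg (h b)
      · rw [← hf.bal w]
        refine Finset.sum_congr rfl fun b _ => ?_
        by_cases h1 : H₁.Adj w b
        · exact if_pos h1
        · rw [hf.supp w b (by simp [h1, h b])]; exact if_neg h1
    have gcirc : IsCirc H₁ g := by
      refine ⟨ganti, fun a b h => if_neg h, fun w => ?_⟩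
      by_cases hw : w = t
      · rw [hw]; exact sum_eq_zero_of_others ganti t gbal
      · exact gbal w hw
    have g2 : IsCirc H₂ (fun a b => f a b - g a b) := by
      refine ⟨fun a b => ?_, fun a b h => ?_, fun w => ?_⟩
      · rw [hf.anti a b, ganti a b]; ring
      · by_cases h1 : H₁.Adj a b
        · simp [g, h1]
        · simp [g, h1, hf.supp a b (by simp [h1, h])]
      · rw [Finset.sum_sub_distrib, hf.bal, gcirc.bal, sub_zero]
    obtain ⟨h₁, e₁⟩ := hL₁.exact _ gcirc
    obtain ⟨h₂, e₂⟩ := hL₂.exact _ g2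
    refine ⟨Sum.elim h₁ h₂, ?_⟩
    rw [key]
    funext a b
    have e1 := congrFun (congrFun e₁ a) b
    have e2 := congrFun (congrFun e₂ a) b
    simp only [Sum.elim_inl, Sum.elim_inr] at *
    linarith

/-- Graphs sharing exactly the edge `uv` (and no further vertices): the left face of `vu` in the
first dual is identified with the left face of `uv` in the second. -/
theorem HasDual.glue_two {H₁ H₂ : SimpleGraph V} (d₁ : HasDual H₁) (d₂ : HasDual H₂) {u v : V}
    (h₁uv : H₁.Adj u v) (h₂uv : H₂.Adj u v)
    (hsep : ∀ w, w ≠ u → w ≠ v → (∀ b, ¬ H₁.Adj w b) ∨ ∀ b, ¬ H₂.Adj w b) :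
    HasDual (H₁ ⊔ H₂) := by
  obtain ⟨Φ₁, L₁, hL₁⟩ := d₁
  obtain ⟨Φ₂, L₂, hL₂⟩ := d₂
  have huv : u ≠ v := h₁uv.ne
  have hin : ∀ a b, H₁.Adj a b → H₂.Adj a b → a = u ∨ a = v := by
    intro a b h1 h2
    by_contra hcon
    push Not at hcon
    rcases hsep a hcon.1 hcon.2 with h | h
    · exact h b h1
    · exact h b h2
  have hdis : ∀ a b, H₁.Adj a b → H₂.Adj a b → (a = u ∧ b = v) ∨ (a = v ∧ b = u) := by
    intro a b h1 h2
    rcases hin a b h1 h2 with rfl | rfl <;> rcases hin b _ h1.symm h2.symm with rfl | rfl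
    · exact absurd rfl h1.ne
    · exact Or.inl ⟨rfl, rfl⟩
    · exact Or.inr ⟨rfl, rfl⟩
    · exact absurd rfl h1.ne
  let r : Φ₁ ⊕ Φ₂ → Φ₁ ⊕ Φ₂ → Prop := fun p q => p = Sum.inl (L₁ v u) ∧ q = Sum.inr (L₂ u v)
  let L : V → V → Quot r := fun a b => Quot.mk r
    (if H₁.Adj a b ∧ ¬ (a = v ∧ b = u) then Sum.inl (L₁ a b) else Sum.inr (L₂ a b))
  have hq : Quot.mk r (Sum.inl (L₁ v u)) = Quot.mk r (Sum.inr (L₂ u v)) :=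
    Quot.sound ⟨rfl, rfl⟩
  have key : ∀ h : Quot r → ℤ, pot (H₁ ⊔ H₂) L h =
      fun a b => pot H₁ L₁ (fun p => h (Quot.mk r (Sum.inl p))) a b
        + pot H₂ L₂ (fun p => h (Quot.mk r (Sum.inr p))) a b := by
    intro h
    funext a b
    by_cases h1 : H₁.Adj a b
    · by_cases h2 : H₂.Adj a b
      · rcases hdis a b h1 h2 with ⟨rfl, rfl⟩ | ⟨rfl, rfl⟩
        · simp [pot, L, h1, h1.symm, h2, huv, hq]
        · simp [pot, L, h1, h1.symm, h2, huv, huv.symm, hq]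
      · have e1 : a = v → ¬ b = u := fun h h' => h2 (by rw [h, h']; exact h₂uv.symm)
        have e2 : b = v → ¬ a = u := fun h h' => h2 (by rw [h, h']; exact h₂uv)
        simp only [pot, L, h1, h1.symm, h2, SimpleGraph.sup_adj, true_or, if_true, if_false,
          true_and, not_and]
        rw [if_pos e1, if_pos e2, add_zero]
    · have h1' : ¬ H₁.Adj b a := fun h => h1 h.symm
      simp [pot, L, h1, h1']
  refine ⟨Quot r, L, fun h v => ?_, fun f hf => ?_⟩
  · rw [key, Finset.sum_add_distrib, hL₁.bal, hL₂.bal, add_zero]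
  · let g : V → V → ℤ := fun a b => if H₁.Adj a b ∧ ¬ H₂.Adj a b then f a b else 0
    -- the flow of the first part, closed up through the edge `uv`
    let k : ℤ := - ∑ b, g u b
    let g' : V → V → ℤ := fun a b => g a b + k * unitFlow u v a b
    have ganti : ∀ a b, g a b = - g b a := by
      intro a b
      simp only [g, H₁.adj_comm a b, H₂.adj_comm a b]
      split_ifs
      · exact hf.anti a b
      · simp
    have ganti' : ∀ a b, g' a b = - g' b a := by
      intro a b
      simp only [g', ganti a b, unitFlow_anti u v a b]; ring
    have gdiv : ∀ w, ∑ b, g' w b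
        = ∑ b, g w b + k * ((if w = u then 1 else 0) - (if w = v then 1 else 0)) := by
      intro w
      simp only [g']
      rw [Finset.sum_add_distrib, ← Finset.mul_sum, unitFlow_div]
    have gbal : ∀ w, w ≠ v → ∑ b, g' w b = 0 := by
      intro w hwv
      rw [gdiv]
      by_cases hwu : w = u
      · simp [hwu, huv, k]
      · have : ∑ b, g w b = 0 := by
          rcases hsep w hwu hwv with h | h
          · exact Finset.sum_eq_zero fun b _ => if_neg fun h' => h b h'.1
          · rw [← hf.bal w]
            refine Finset.sum_congr rfl fun b _ => ?_
            by_cases h1 : H₁.Adj w b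
            · exact if_pos ⟨h1, h b⟩
            · rw [hf.supp w b (by simp [h1, h b])]; exact if_neg fun h' => h1 h'.1
        simp [this, hwu, hwv]
    have usupp : ∀ a b, ¬ (H₁.Adj a b ∧ H₂.Adj a b) → unitFlow u v a b = 0 := by
      intro a b hab
      have e1 : ¬ (a = u ∧ b = v) := fun h => hab (by rw [h.1, h.2]; exact ⟨h₁uv, h₂uv⟩)
      have e2 : ¬ (a = v ∧ b = u) := fun h => hab (by
        rw [h.1, h.2]; exact ⟨h₁uv.symm, h₂uv.symm⟩)
      simp only [unitFlow, if_neg e1, if_neg e2, sub_zero]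
    have gcirc : IsCirc H₁ g' := by
      refine ⟨ganti', fun a b h => ?_, fun w => ?_⟩
      · simp only [g', g, usupp a b (fun h' => h h'.1), if_neg (fun h' : _ ∧ _ => h h'.1)]
        simp
      · by_cases hw : w = v
        · rw [hw]; exact sum_eq_zero_of_others ganti' v gbal
        · exact gbal w hw
    have g2 : IsCirc H₂ (fun a b => f a b - g' a b) := by
      refine ⟨fun a b => ?_, fun a b h => ?_, fun w => ?_⟩
      · rw [hf.anti a b, ganti' a b]; ring
      · by_cases h1 : H₁.Adj a b
        · simp [g', g, h1, h, usupp a b (fun h' => h h'.2)]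
        · simp [g', g, h1, hf.supp a b (by simp [h1, h]), usupp a b (fun h' => h h'.2)]
      · rw [Finset.sum_sub_distrib, hf.bal, gcirc.bal, sub_zero]
    obtain ⟨h₁, e₁⟩ := hL₁.exact _ gcirc
    obtain ⟨h₂, e₂⟩ := hL₂.exact _ g2
    let c : ℤ := h₁ (L₁ v u) - h₂ (L₂ u v)
    refine ⟨Quot.lift (Sum.elim h₁ (fun p => h₂ p + c)) ?_, ?_⟩
    · rintro p q ⟨rfl, rfl⟩
      simp [c]
    rw [key]
    funext a b
    have e1 := congrFun (congrFun e₁ a) b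
    have e2 := congrFun (congrFun e₂ a) b
    have e3 : pot H₂ L₂ (fun p => h₂ p + c) a b = pot H₂ L₂ h₂ a b := by
      simp only [pot]
      split_ifs
      · ring
      · rfl
    simp only [Sum.elim_inl, Sum.elim_inr] at *
    rw [e3, ← e1, ← e2]; ring

end Glue

/-! ### Graphs on at most four vertices -/

section Small

/-- The left faces of the darts of `K₄` drawn in the plane with the triangle `0 1 2`
counterclockwise around the vertex `3`; face `i` is the triangle avoiding the vertex `i`. -/
def tetraFace : Fin 4 → Fin 4 → Fin 4 :=
  ![![0, 2, 3, 1], ![3, 0, 0, 2], ![1, 3, 0, 0], ![2, 0, 1, 0]]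

theorem tetra_isDual : IsDual (⊤ : SimpleGraph (Fin 4)) tetraFace := by
  refine ⟨fun h v => ?_, fun f hf => ⟨![f 1 2, f 2 0, f 0 1, 0], ?_⟩⟩
  · fin_cases v <;> simp [pot, tetraFace, Fin.sum_univ_four]
  · have b0 := hf.bal 0
    have b1 := hf.bal 1
    have b2 := hf.bal 2
    have s := fun i => hf.supp i i (by simp)
    rw [Fin.sum_univ_four] at b0 b1 b2
    have s0 := s 0
    have s1 := s 1
    have s2 := s 2
    have s3 := s 3
    have a01 := hf.anti 0 1
    have a02 := hf.anti 0 2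
    have a03 := hf.anti 0 3
    have a12 := hf.anti 1 2
    have a13 := hf.anti 1 3
    have a23 := hf.anti 2 3
    funext a b
    fin_cases a <;> fin_cases b <;> simp [pot, tetraFace] <;> linarith

open scoped Classical in
theorem hasDual_of_ncard_le_four [Fintype V] {K : SimpleGraph V} {S : Set V}
    (hS : S.ncard ≤ 4) (hK : ∀ a b, K.Adj a b → a ∈ S) : HasDual K := by
  obtain ⟨e, he⟩ : ∃ e : V → Fin 4, Set.InjOn e S := by
    have h1 : Fintype.card S ≤ Fintype.card (Fin 4) := by
      rw [← Nat.card_eq_fintype_card, Nat.card_coe_set_eq, Fintype.card_fin]; exact hS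
    obtain ⟨e⟩ := Function.Embedding.nonempty_of_card_le h1
    refine ⟨fun v => if h : v ∈ S then e ⟨v, h⟩ else 0, fun a ha b hb hab => ?_⟩
    simp only [dif_pos ha, dif_pos hb] at hab
    simpa using e.injective hab
  have hK' : ∀ a b, K.Adj a b → b ∈ S := fun a b h => hK b a h.symm
  let K' : SimpleGraph (Fin 4) :=
    { Adj := fun p q => ∃ a b, K.Adj a b ∧ e a = p ∧ e b = q
      symm := ⟨fun p q ⟨a, b, h, h1, h2⟩ => ⟨b, a, h.symm, h2, h1⟩⟩
      loopless := ⟨fun p ⟨a, b, h, h1, h2⟩ => h.ne (he (hK a b h) (hK' a b h) (h1.trans h2.symm))⟩ }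
  obtain ⟨Φ, L, hL⟩ : HasDual K' := HasDual.mono ⟨_, _, tetra_isDual⟩ le_top
  have hadj : ∀ a b, a ∈ S → b ∈ S → (K'.Adj (e a) (e b) ↔ K.Adj a b) := by
    intro a b ha hb
    constructor
    · rintro ⟨c, d, h, h1, h2⟩
      rwa [← he (hK c d h) ha h1, ← he (hK' c d h) hb h2]
    · intro h
      exact ⟨a, b, h, rfl, rfl⟩
  refine ⟨Φ, fun a b => L (e a) (e b), fun h v => ?_, fun f hf => ?_⟩
  · by_cases hv : v ∈ S
    swap
    · exact Finset.sum_eq_zero fun u _ => if_neg fun h => hv (hK v u h)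
    rw [← hL.bal h (e v), ← Finset.sum_fiberwise Finset.univ e]
    refine Finset.sum_congr rfl fun p _ => ?_
    by_cases hp : K'.Adj (e v) p
    · obtain ⟨c, d, h1, h2, rfl⟩ := hp
      obtain rfl := he (hK c d h1) hv h2
      rw [Finset.sum_eq_single d]
      · simp [pot, h1, (hadj c d hv (hK' c d h1)).2 h1]
      · intro b hb hbd
        refine if_neg fun hcb => hbd (he (hK' c b hcb) (hK' c d h1) ?_)
        simpa using hb
      · simp
    · rw [pot, if_neg hp]
      refine Finset.sum_eq_zero fun u hu => if_neg fun hvu => hp ?_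
      exact ⟨v, u, hvu, rfl, by simpa using hu⟩
  · let f' : Fin 4 → Fin 4 → ℤ := fun p q => ∑ a with e a = p, ∑ b with e b = q, f a b
    have hf' : IsCirc K' f' := by
      refine ⟨fun p q => ?_, fun p q hpq => ?_, fun p => ?_⟩
      · simp only [f']
        rw [Finset.sum_comm, ← Finset.sum_neg_distrib]
        refine Finset.sum_congr rfl fun a _ => ?_
        rw [← Finset.sum_neg_distrib]
        exact Finset.sum_congr rfl fun b _ => hf.anti b a
      · refine Finset.sum_eq_zero fun a ha => Finset.sum_eq_zero fun b hb => hf.supp a b ?_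
        intro hab
        exact hpq ⟨a, b, hab, by simpa using ha, by simpa using hb⟩
      · simp only [f']
        rw [Finset.sum_comm]
        refine Finset.sum_eq_zero fun a _ => ?_
        rw [Finset.sum_fiberwise]
        exact hf.bal a
    obtain ⟨h, hh⟩ := hL.exact _ hf'
    refine ⟨h, ?_⟩
    funext a b
    by_cases hab : K.Adj a b
    · have ha := hK a b hab
      have hb := hK' a b hab
      have h1 : f' (e a) (e b) = f a b := by
        simp only [f']
        rw [Finset.sum_eq_single a, Finset.sum_eq_single b]
        · intro c hc hcb
          exact hf.supp a c fun h => hcb (he (hK' a c h) hb (by simpa using hc))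
        · simp
        · intro c hc hca
          refine Finset.sum_eq_zero fun d _ => hf.supp c d fun h => hca ?_
          exact he (hK c d h) ha (by simpa using hc)
        · simp
      rw [← h1, hh, pot, pot, if_pos hab, if_pos ((hadj a b ha hb).2 hab)]
    · rw [hf.supp a b hab, pot, if_neg hab]

end Small

/-! ### Minors -/

section Minors

theorem ConnOn.biUnion {G K : SimpleGraph V} {F : Set V} {B : V → Set V} (hF : ConnOn K F)
    (hB : ∀ v ∈ F, ConnOn G (B v))
    (hadj : ∀ u ∈ F, ∀ v ∈ F, K.Adj u v → ∃ a ∈ B u, ∃ b ∈ B v, G.Adj a b) :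
    ConnOn G (⋃ v ∈ F, B v) := by
  obtain ⟨⟨v₀, hv₀⟩, hF2⟩ := hF
  refine ⟨?_, fun A hA hne hcl => ?_⟩
  · obtain ⟨x, hx⟩ := (hB v₀ hv₀).1
    exact ⟨x, Set.mem_biUnion hv₀ hx⟩
  have hsat : ∀ v ∈ F, (A ∩ B v).Nonempty → B v ⊆ A := by
    intro v hv hne
    have := (hB v hv).2 (A ∩ B v) Set.inter_subset_right hne
      (fun a ha b hb hab => ⟨hcl a ha.1 b (Set.mem_biUnion hv hb) hab, hb⟩)
    exact fun x hx => (this hx).1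
  have hall := hF2 {v | v ∈ F ∧ B v ⊆ A} (fun v hv => hv.1) (by
      obtain ⟨a, ha⟩ := hne
      obtain ⟨v, hv, hav⟩ := Set.mem_iUnion₂.1 (hA ha)
      exact ⟨v, hv, hsat v hv ⟨a, ha, hav⟩⟩) (by
      rintro u ⟨hu, huA⟩ v hv huv
      obtain ⟨a, ha, b, hb, hab⟩ := hadj u hu v hv huv
      exact ⟨hv, hsat v hv ⟨b, hcl a (huA ha) b (Set.mem_biUnion hv hb) hab, hb⟩⟩)
  exact Set.iUnion₂_subset fun v hv => (hall hv).2

/-- If the non-isolated vertices of `K` are replaced by disjoint connected sets of `G` so that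
the edges of `K` are realised, then minors of `K` without isolated vertices are minors of `G`. -/
theorem HasMinor.lift {G K : SimpleGraph V} {H : SimpleGraph W} {S : Set V} (B : V → Set V)
    (hS : ∀ u v, K.Adj u v → u ∈ S)
    (hB : ∀ v ∈ S, ConnOn G (B v))
    (hdis : ∀ u ∈ S, ∀ v ∈ S, u ≠ v → Disjoint (B u) (B v))
    (hadj : ∀ u v, K.Adj u v → ∃ a ∈ B u, ∃ b ∈ B v, G.Adj a b)
    (hH : ∀ w, ∃ w', H.Adj w w') (hm : HasMinor K H) : HasMinor G H := by
  obtain ⟨F, hF1, hF2, hF3⟩ := hm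
  have hFS : ∀ w, F w ⊆ S := by
    intro w v hv
    have hc := connOn_of_connected (hF1 w)
    by_cases h : F w ⊆ {v}
    · obtain ⟨w', hw'⟩ := hH w
      obtain ⟨a, ha, b, -, hab⟩ := hF3 w w' hw'
      have : a = v := h ha
      exact hS v b (this ▸ hab)
    · obtain ⟨c, hc1, hc2⟩ := Set.not_subset.1 h
      obtain ⟨a, ha, b, -, -, hab⟩ := hc.exists_adj (A := {v}) (by simpa using hv) ⟨v, rfl⟩ hc1 hc2
      have : a = v := ha
      exact hS v b (this ▸ hab)
  refine ⟨fun w => ⋃ v ∈ F w, B v, fun w => ?_, fun w₁ w₂ hne => ?_, fun w₁ w₂ h => ?_⟩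
  · exact ((connOn_of_connected (hF1 w)).biUnion (fun v hv => hB v (hFS w hv))
      fun u _ v _ huv => hadj u v huv).connected
  · simp only [Set.disjoint_iUnion_left, Set.disjoint_iUnion_right]
    intro u hu v hv
    refine hdis v (hFS _ hv) u (hFS _ hu) ?_
    rintro rfl
    exact Set.disjoint_left.1 (hF2 w₁ w₂ hne) hv hu
  · obtain ⟨u, hu, v, hv, huv⟩ := hF3 w₁ w₂ h
    obtain ⟨a, ha, b, hb, hab⟩ := hadj u v huv
    exact ⟨a, Set.mem_biUnion hu ha, b, Set.mem_biUnion hv hb, hab⟩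

theorem Planar.lift {G K : SimpleGraph V} {S : Set V} (hG : Planar G) (B : V → Set V)
    (hS : ∀ u v, K.Adj u v → u ∈ S)
    (hB : ∀ v ∈ S, ConnOn G (B v))
    (hdis : ∀ u ∈ S, ∀ v ∈ S, u ≠ v → Disjoint (B u) (B v))
    (hadj : ∀ u v, K.Adj u v → ∃ a ∈ B u, ∃ b ∈ B v, G.Adj a b) : Planar K := by
  refine ⟨fun h => hG.1 (h.lift B hS hB hdis hadj fun w => ⟨w + 1, ?_⟩),
    fun h => hG.2 (h.lift B hS hB hdis hadj ?_)⟩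
  · revert w; decide
  · rintro (i | i)
    · exact ⟨Sum.inr 0, by simp⟩
    · exact ⟨Sum.inl 0, by simp⟩

/-- The subgraph of `G` with the same vertices and only the edges inside `T`. -/
def res (G : SimpleGraph V) (T : Set V) : SimpleGraph V where
  Adj a b := G.Adj a b ∧ a ∈ T ∧ b ∈ T
  symm := ⟨fun _ _ h => ⟨h.1.symm, h.2.2, h.2.1⟩⟩
  loopless := ⟨fun _ h => h.1.ne rfl⟩

/-- Restricting to `S` after contracting the connected set `M` to the vertex `x ∈ M`; the
vertices of `M` other than `x` are meant to lie outside `S`. -/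
def contract (G : SimpleGraph V) (M S : Set V) (x : V) : SimpleGraph V where
  Adj a b := a ≠ b ∧ a ∈ S ∧ b ∈ S ∧
    (G.Adj a b ∨ (a = x ∧ ∃ m ∈ M, G.Adj m b) ∨ (b = x ∧ ∃ m ∈ M, G.Adj m a))
  symm := ⟨fun _ _ h => ⟨h.1.symm, h.2.2.1, h.2.1, by
    rcases h.2.2.2 with h | h | h
    · exact Or.inl h.symm
    · exact Or.inr (Or.inr h)
    · exact Or.inr (Or.inl h)⟩⟩
  loopless := ⟨fun _ h => h.1 rfl⟩

theorem Planar.contract {G : SimpleGraph V} (hG : Planar G) {M S : Set V} {x : V} (hx : x ∈ M)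
    (hM : ConnOn G M) (hMS : ∀ m ∈ M, m ∈ S → m = x) : Planar (contract G M S x) := by
  classical
  refine hG.lift (S := S) (fun v => if v = x then M else {v}) (fun u v h => h.2.1) ?_ ?_ ?_
  · intro v _
    split_ifs
    · exact hM
    · exact connOn_singleton G v
  · intro u hu v hv huv
    split_ifs with h1 h2 h2
    · exact absurd (h1.trans h2.symm) huv
    · exact Set.disjoint_singleton_right.2 fun h => h2 (hMS v h hv)
    · exact Set.disjoint_singleton_left.2 fun h => h1 (hMS u h hu)
    · simpa using huv
  · rintro u v ⟨huv, hu, hv, h | ⟨rfl, m, hm, h⟩ | ⟨rfl, m, hm, h⟩⟩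
    · refine ⟨u, ?_, v, ?_, h⟩
      · split_ifs with h1
        · rwa [h1]
        · rfl
      · split_ifs with h1
        · rwa [h1]
        · rfl
    · exact ⟨m, by simpa using hm, v, by simp [huv.symm], h⟩
    · exact ⟨u, by simp [huv], m, by simpa using hm, h.symm⟩

theorem Planar.res {G : SimpleGraph V} (hG : Planar G) (T : Set V) : Planar (res G T) :=
  hG.lift (S := T) (fun v => {v}) (fun _ _ h => h.2.1) (fun v _ => connOn_singleton G v)
    (fun u _ v _ huv => by simpa using huv) fun u v h => ⟨u, rfl, v, rfl, h.1⟩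

/-! ### Contractible edges in 3-connected graphs -/

/-- In a connected set, adding a vertex that has a neighbour in it keeps it connected. -/
theorem ConnOn.insert {G : SimpleGraph V} {T : Set V} (h : ConnOn G T) {x a : V} (ha : a ∈ T)
    (hxa : G.Adj x a) : ConnOn G (insert x T) := by
  refine ⟨⟨x, Set.mem_insert _ _⟩, fun A hA ⟨c, hc⟩ hcl => ?_⟩
  have key : (A ∩ T).Nonempty := by
    rcases hA hc with rfl | hcT
    · exact ⟨a, hcl _ hc a (Set.mem_insert_of_mem _ ha) hxa, ha⟩
    · exact ⟨c, hc, hcT⟩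
  have h1 : T ⊆ A := fun t ht => (h.2 (A ∩ T) Set.inter_subset_right key
    (fun p hp q hq hpq => ⟨hcl p hp.1 q (Set.mem_insert_of_mem _ hq) hpq, hq⟩) ht).1
  exact Set.insert_subset (hcl a (h1 ha) x (Set.mem_insert _ _) hxa.symm) h1

/-- Thomassen's lemma: if no two vertices separate `S` and `S` has at least five elements, then
some edge `xy` forms a separating triple with no further vertex. -/
theorem exists_contractible [Finite V] {G : SimpleGraph V} {S : Set V} (hS : 5 ≤ S.ncard)
    (h3 : ∀ u v, ConnOn G (S \ {u, v})) :
    ∃ x y, G.Adj x y ∧ ∀ w, ConnOn G (S \ {x, y, w}) := by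
  by_contra hcon
  push Not at hcon
  have hne : ∀ x y w : V, (S \ {x, y, w}).Nonempty := by
    intro x y w
    by_contra h
    rw [Set.not_nonempty_iff_eq_empty, Set.sdiff_eq_empty] at h
    have h1 := Set.ncard_le_ncard h
    have h2 : ({x, y, w} : Set V).ncard ≤ 3 := by
      refine (Set.ncard_insert_le _ _).trans ?_
      have := Set.ncard_insert_le y {w}
      rw [Set.ncard_singleton] at this
      omega
    omega
  have main : ∀ n, ∀ x y w (B : Set V), B.ncard = n → G.Adj x y → B ⊆ S \ {x, y, w} →
      B.Nonempty → (∀ a ∈ B, ∀ b ∈ S \ {x, y, w}, G.Adj a b → b ∈ B) →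
      (∃ a ∈ S \ {x, y, w}, a ∉ B) → False := by
    intro n
    induction n using Nat.strong_induction_on with
    | _ n ih =>
    intro x y w B hn hxy hBS hBne hBcl ⟨a₀, ha₀, ha₀B⟩
    have hB : ∀ b ∈ B, b ∈ S ∧ b ≠ x ∧ b ≠ y ∧ b ≠ w := by
      intro b hb
      simpa using hBS hb
    have hwS : w ∈ S ∧ w ≠ x ∧ w ≠ y := by
      by_contra h
      have e : S \ {x, y, w} = S \ {x, y} := by
        ext z
        simp only [Set.mem_sdiff, Set.mem_insert_iff, Set.mem_singleton_iff, not_or]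
        refine ⟨fun h => ⟨h.1, h.2.1, h.2.2.1⟩, fun h' => ⟨h'.1, h'.2.1, h'.2.2, ?_⟩⟩
        rintro rfl
        exact h h'
      rw [e] at hBS hBcl ha₀
      exact ha₀B ((h3 x y).2 B hBS hBne hBcl ha₀)
    -- the vertex `w` has a neighbour in `B`, since `x` and `y` alone do not separate
    obtain ⟨u, huB, huw⟩ : ∃ u ∈ B, G.Adj u w := by
      by_contra hu
      push Not at hu
      refine (hB w ?_).2.2.2 rfl
      refine (h3 x y).2 B (fun b hb => ?_) hBne (fun a ha b hb hab => ?_) ?_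
      · have := hB b hb
        simp [this]
      · refine hBcl a ha b ?_ hab
        simp only [Set.mem_sdiff, Set.mem_insert_iff, Set.mem_singleton_iff, not_or] at hb ⊢
        exact ⟨hb.1, hb.2.1, hb.2.2, fun h => hu a ha (h ▸ hab)⟩
      · simp [hwS]
    obtain ⟨v, hv⟩ := hcon w u huw.symm
    obtain ⟨D, E, hD, hE, hDE, hun, hno⟩ := exists_split (hne w u v) hv
    have hvu : u ≠ v := by
      rintro rfl
      have e : S \ {w, u, u} = S \ {w, u} := by simp
      exact hv (e ▸ h3 w u)
    have step : ∀ D E : Set V, D.Nonempty → E.Nonempty → Disjoint D E →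
        D ∪ E = S \ {w, u, v} → (∀ a ∈ D, ∀ b ∈ E, ¬ G.Adj a b) → x ∉ D → y ∉ D → False := by
      intro D E hD hE hDE hun hno hxD hyD
      have hDS : ∀ d ∈ D, d ∈ S ∧ d ≠ w ∧ d ≠ u ∧ d ≠ v := by
        intro d hd
        have : d ∈ S \ {w, u, v} := hun ▸ Or.inl hd
        simpa using this
      have hDcl : ∀ a ∈ D, ∀ b ∈ S \ {w, u, v}, G.Adj a b → b ∈ D := by
        intro a ha b hb hab
        rw [← hun] at hb
        exact hb.resolve_right fun hbE => hno a ha b hbE hab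
      have hDB : D ⊆ B := by
        by_contra hDB
        obtain ⟨d, hd, hdB⟩ := Set.not_subset.1 hDB
        have hu' : u ∈ D \ B := by
          refine (h3 w v).2 (D \ B) (fun d hd => ?_) ⟨d, hd, hdB⟩ (fun a ha b hb hab => ?_) ?_
          · have := hDS d hd.1
            simp [this]
          · have haD := hDS a ha.1
            have hbB : b ∉ B := by
              intro hbB
              refine ha.2 (hBcl b hbB a ?_ hab.symm)
              simp only [Set.mem_sdiff, Set.mem_insert_iff, Set.mem_singleton_iff, not_or]
              exact ⟨haD.1, fun h => hxD (h ▸ ha.1), fun h => hyD (h ▸ ha.1), haD.2.1⟩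
            refine ⟨hDcl a ha.1 b ?_ hab, hbB⟩
            simp only [Set.mem_sdiff, Set.mem_insert_iff, Set.mem_singleton_iff, not_or] at hb ⊢
            exact ⟨hb.1, hb.2.1, fun h => hbB (h ▸ huB), hb.2.2⟩
          · have := hB u huB
            simp [this, hvu]
        exact hu'.2 huB
      have hlt : D.ncard < n := by
        rw [← hn]
        exact Set.ncard_lt_ncard ⟨hDB, fun h => (hDS u (h huB)).2.2.1 rfl⟩
      obtain ⟨e, he⟩ := hE
      exact ih _ hlt w u v D rfl huw.symm (hun ▸ Set.subset_union_left) hD hDcl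
        ⟨e, hun ▸ Or.inr he, fun h => Set.disjoint_left.1 hDE h he⟩
    by_cases hxD : x ∈ D
    · exact step E D hE hD hDE.symm (by rw [Set.union_comm, hun])
        (fun a ha b hb hab => hno b hb a ha hab.symm) (Set.disjoint_left.1 hDE hxD)
        (fun hy => hno x hxD y hy hxy)
    · by_cases hyD : y ∈ D
      · exact step E D hE hD hDE.symm (by rw [Set.union_comm, hun])
          (fun a ha b hb hab => hno b hb a ha hab.symm)
          (fun hx => hno y hyD x hx hxy.symm) (Set.disjoint_left.1 hDE hyD)
      · exact step D E hD hE hDE hun hno hxD hyD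
  -- there is an edge to start from
  obtain ⟨p, hp⟩ : S.Nonempty := Set.nonempty_of_ncard_ne_zero (by omega)
  obtain ⟨q, hq⟩ := hne p p p
  obtain ⟨r, hr⟩ := hne p q q
  simp only [Set.mem_sdiff, Set.mem_insert_iff, Set.mem_singleton_iff, not_or] at hq hr
  obtain ⟨a, rfl, b, hb, -, hab⟩ := (h3 r r).exists_adj (A := {p}) (c := q)
    (by simp [hp, Ne.symm hr.2.1]) ⟨p, rfl⟩ (by simp [hq.1, Ne.symm hr.2.2.1]) (by simp [hq.2.1])
  obtain ⟨w, hw⟩ := hcon a b hab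
  obtain ⟨D, E, hD, hE, hDE, hun, hno⟩ := exists_split (hne a b w) hw
  obtain ⟨e, he⟩ := hE
  refine main _ a b w D rfl hab (hun ▸ Set.subset_union_left) hD (fun c hc d hd hcd => ?_)
    ⟨e, hun ▸ Or.inr he, fun h => Set.disjoint_left.1 hDE h he⟩
  rw [← hun] at hd
  exact hd.resolve_right fun hdE => hno c hc d hdE hcd

end Minors

/-! ### Faces of 2-connected graphs are cycles -/

section Faces

open scoped Classical

variable [Fintype V]

/-- Let `χ` be a set of faces such that every edge at `v` with exactly one side in
`χ` has `φ₀` on its other side. If `v` is not a cutvertex, then either all edges at `v` have a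
side in `χ` or none has: otherwise a circulation passing from an edge of the first kind to one of
the second kind would, restricted to the edges with a side in `χ`, still be a tension, and yet
not be balanced at `v`. -/
theorem IsDual.side_iff {Φ : Type*} {K : SimpleGraph V} {L : V → V → Φ} (hL : IsDual K L)
    {T : Set V} (hT : ConnOn K T) {v : V} (hv : v ∉ T) (hvT : ∀ u, K.Adj v u → u ∈ T)
    (χ : Φ → Prop) (φ₀ : Φ)
    (h₁ : ∀ u, K.Adj v u → χ (L v u) → ¬ χ (L u v) → L u v = φ₀)
    (h₂ : ∀ u, K.Adj v u → χ (L u v) → ¬ χ (L v u) → L v u = φ₀)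
    {a b : V} (ha : K.Adj v a) (hb : K.Adj v b) (hχ : χ (L v a) ∨ χ (L a v)) :
    χ (L v b) ∨ χ (L b v) := by
  by_contra hcon
  have hab : a ≠ b := by
    rintro rfl
    exact hcon hχ
  obtain ⟨f, hf, hfv⟩ := exists_circ_through hT hv (hvT a ha) (hvT b hb) ha hb
  obtain ⟨g, rfl⟩ := hL.exact f hf
  have hsum := hL.bal (fun p => if χ p then g p - g φ₀ else 0) v
  have key : ∀ u, pot K L (fun p => if χ p then g p - g φ₀ else 0) v u
      = if u = a then 1 else 0 := by
    intro u
    have e := hfv u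
    unfold pot at e ⊢
    by_cases hu : K.Adj v u
    swap
    · rw [if_neg hu, if_neg]
      rintro rfl
      exact hu ha
    rw [if_pos hu] at e ⊢
    have hside : u = b → ¬ χ (L v u) ∧ ¬ χ (L u v) := by
      rintro rfl
      exact not_or.1 hcon
    by_cases c1 : χ (L v u) <;> by_cases c2 : χ (L u v)
    · have hub : u ≠ b := fun h => (hside h).1 c1
      simp only [c1, c2, if_true, hub, if_false] at e ⊢
      linarith
    · have hub : u ≠ b := fun h => (hside h).1 c1
      simp only [c1, c2, if_true, hub, if_false] at e ⊢
      rw [h₁ u hu c1 c2] at e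
      linarith
    · have hub : u ≠ b := fun h => (hside h).2 c2
      simp only [c1, c2, if_true, hub, if_false] at e ⊢
      rw [h₂ u hu c2 c1] at e
      linarith
    · have hua : u ≠ a := by
        rintro rfl
        exact hχ.elim c1 c2
      simp [c1, c2, hua]
  rw [Finset.sum_congr rfl fun u _ => key u] at hsum
  simp at hsum

/-- If no edge at the non-cutvertex `v` has exactly one side in `χ`, then all darts leaving `v`
have their left face in `χ`, or none. -/
theorem IsDual.side_iff' {Φ : Type*} {K : SimpleGraph V} {L : V → V → Φ} (hL : IsDual K L)
    {T : Set V} (hT : ConnOn K T) {v : V} (hv : v ∉ T) (hvT : ∀ u, K.Adj v u → u ∈ T)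
    (χ : Φ → Prop) (h : ∀ u, K.Adj v u → (χ (L v u) ↔ χ (L u v)))
    {a b : V} (ha : K.Adj v a) (hb : K.Adj v b) (hχ : χ (L v a)) : χ (L v b) := by
  by_contra hcon
  have := hL.side_iff hT hv hvT χ (L v b) (fun u hu h1 h2 => absurd ((h u hu).1 h1) h2)
    (fun u hu h1 h2 => absurd ((h u hu).2 h1) h2) ha hb (Or.inl hχ)
  rcases this with h1 | h1
  · exact hcon h1
  · exact hcon ((h b hb).2 h1)

/-- An edge at a non-cutvertex of degree at least two has distinct faces on its two sides. -/
theorem IsDual.ne_of_two {Φ : Type*} {K : SimpleGraph V} {L : V → V → Φ} (hL : IsDual K L)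
    {T : Set V} (hT : ConnOn K T) {v : V} (hv : v ∉ T) (hvT : ∀ u, K.Adj v u → u ∈ T)
    {a b : V} (ha : K.Adj v a) (hb : K.Adj v b) (hab : a ≠ b) : L v a ≠ L a v := by
  intro h
  obtain ⟨f, hf, hfv⟩ := exists_circ_through hT hv (hvT a ha) (hvT b hb) ha hb
  obtain ⟨g, rfl⟩ := hL.exact f hf
  have e := hfv a
  simp [pot, ha, h, hab] at e

/-- The darts of `K` with left face `φ₀` form a single directed cycle `w 0, w 1, …` of
length `n`. -/
structure IsFaceCycle {Φ : Type*} (K : SimpleGraph V) (L : V → V → Φ) (φ₀ : Φ) (n : ℕ)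
    (w : ℕ → V) : Prop where
  pos : 0 < n
  inj : ∀ i j, w i = w j ↔ i ≡ j [MOD n]
  dart : ∀ a b, (K.Adj a b ∧ L a b = φ₀) ↔ ∃ i, w i = a ∧ w (i + 1) = b

theorem IsDual.exists_faceCycle {Φ : Type*} {K : SimpleGraph V} {L : V → V → Φ}
    (hL : IsDual K L) {T : Set V} (hKT : ∀ a b, K.Adj a b → a ∈ T) (hT : ConnOn K T)
    (hT' : ∀ v, ConnOn K (T \ {v})) (hbr : ∀ a b, K.Adj a b → L a b ≠ L b a) (φ₀ : Φ)
    (hne : ∃ a b, K.Adj a b ∧ L a b = φ₀) : ∃ n w, IsFaceCycle K L φ₀ n w := by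
  -- a dart of the face can be continued, by balance of the tension of the face at its head
  have hnext : ∀ a b, K.Adj a b → L a b = φ₀ → ∃ d, K.Adj b d ∧ L b d = φ₀ := by
    intro a b hab h
    by_contra hcon
    push Not at hcon
    have hsum := hL.bal (fun p => if p = φ₀ then 1 else 0) b
    have hle : ∀ u ∈ Finset.univ, pot K L (fun p => if p = φ₀ then 1 else 0) b u ≤ 0 := by
      intro u _
      unfold pot
      split_ifs with h1
      · simp only [hcon u h1, if_false]
        split_ifs <;> simp
      · exact le_rfl
    have h0 := (Finset.sum_eq_zero_iff_of_nonpos hle).1 hsum a (Finset.mem_univ a)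
    have h1 := hcon a hab.symm
    simp [pot, hab.symm, h, h1] at h0
  let X := {a // ∃ b, K.Adj a b ∧ L a b = φ₀}
  have hstep : ∀ a : X, ∃ b : X, K.Adj a b ∧ L a b = φ₀ := by
    rintro ⟨a, b, hab, h⟩
    exact ⟨⟨b, hnext a b hab h⟩, hab, h⟩
  choose nxt hnxt using hstep
  obtain ⟨a₀, b₀, hab₀⟩ := hne
  obtain ⟨p, hp⟩ : ∃ p, p ∈ Function.periodicPts nxt := by
    obtain ⟨i, j, hij, he⟩ := Finite.exists_ne_map_eq_of_infinite
      (fun i : ℕ => nxt^[i] (⟨a₀, b₀, hab₀⟩ : X))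
    have aux : ∀ i j : ℕ, i < j → nxt^[i] (⟨a₀, b₀, hab₀⟩ : X) = nxt^[j] ⟨a₀, b₀, hab₀⟩ →
        ∃ p, p ∈ Function.periodicPts nxt := by
      intro i j hij he
      refine ⟨nxt^[i] ⟨a₀, b₀, hab₀⟩, j - i, by omega, ?_⟩
      rw [Function.IsPeriodicPt, Function.IsFixedPt, ← Function.iterate_add_apply,
        Nat.sub_add_cancel hij.le, he]
    rcases Nat.lt_or_gt_of_ne hij with h | h
    · exact aux i j h he
    · exact aux j i h he.symm
  let n := Function.minimalPeriod nxt p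
  let w : ℕ → V := fun i => (nxt^[i] p : X)
  have hn : 0 < n := Function.minimalPeriod_pos_of_mem_periodicPts hp
  have hw : ∀ i, K.Adj (w i) (w (i + 1)) ∧ L (w i) (w (i + 1)) = φ₀ := by
    intro i
    simp only [w, Function.iterate_succ_apply']
    exact hnxt _
  have hinj : ∀ i j, w i = w j ↔ i ≡ j [MOD n] := by
    intro i j
    simp only [w, Subtype.coe_inj]
    rw [← Function.iterate_mod_minimalPeriod_eq (n := i),
      ← Function.iterate_mod_minimalPeriod_eq (n := j)]
    exact Function.iterate_eq_iterate_iff_of_lt_minimalPeriod (Nat.mod_lt _ hn) (Nat.mod_lt _ hn)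
  refine ⟨n, w, hn, hinj, fun a b => ⟨fun hab => ?_, ?_⟩⟩
  swap
  · rintro ⟨i, rfl, rfl⟩
    exact hw i
  by_contra hcyc
  -- the unit circulation around the cycle just found
  let c : V → V → ℤ := fun a b => ∑ i ∈ Finset.range n, unitFlow (w i) (w (i + 1)) a b
  have hcanti : ∀ a b, c a b = - c b a := by
    intro a b
    simp only [c]
    rw [← Finset.sum_neg_distrib]
    exact Finset.sum_congr rfl fun i _ => unitFlow_anti _ _ _ _
  have hc0 : ∀ a b, (¬ ∃ i, w i = a ∧ w (i + 1) = b) → (¬ ∃ i, w i = b ∧ w (i + 1) = a) →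
      c a b = 0 := by
    intro a b h1 h2
    refine Finset.sum_eq_zero fun i _ => ?_
    have e1 : ¬ (a = w i ∧ b = w (i + 1)) := fun h => h1 ⟨i, h.1.symm, h.2.symm⟩
    have e2 : ¬ (a = w (i + 1) ∧ b = w i) := fun h => h2 ⟨i, h.2.symm, h.1.symm⟩
    simp [unitFlow, e1, e2]
  have hcpos : 0 < c (w 0) (w 1) := by
    have hnon : ∀ i, 0 ≤ unitFlow (w i) (w (i + 1)) (w 0) (w 1) := by
      intro i
      have e2 : ¬ (w 0 = w (i + 1) ∧ w 1 = w i) := by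
        rintro ⟨h1, h2⟩
        refine hbr _ _ (hw 0).1 ?_
        rw [(hw 0).2, zero_add, h1, h2, (hw i).2]
      unfold unitFlow
      rw [if_neg e2]
      split_ifs <;> simp
    refine Finset.sum_pos' (fun i _ => hnon i) ⟨0, Finset.mem_range.2 hn, ?_⟩
    simp [unitFlow, (hw 0).1.ne, -not_and]
  have hcirc : IsCirc K c := by
    refine ⟨hcanti, fun a b h => hc0 a b ?_ ?_, fun v => ?_⟩
    · rintro ⟨i, rfl, rfl⟩
      exact h (hw i).1
    · rintro ⟨i, rfl, rfl⟩
      exact h (hw i).1.symm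
    · simp only [c]
      rw [Finset.sum_comm]
      simp only [unitFlow_div]
      rw [Finset.sum_range_sub' (fun i => if v = w i then (1 : ℤ) else 0),
        (hinj n 0).2 (by simp [Nat.ModEq]), sub_self]
  obtain ⟨h, hh⟩ := hL.exact c hcirc
  -- the edges with a side at a height different from `φ₀`
  let χ : Φ → Prop := fun p => h p ≠ h φ₀
  have hpot : ∀ a b, K.Adj a b → c a b = h (L a b) - h (L b a) := by
    intro a b hab
    rw [hh, pot, if_pos hab]
  have hcross : ∀ u v, K.Adj v u → χ (L v u) → ¬ χ (L u v) → L u v = φ₀ := by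
    intro u v huv h1 h2
    simp only [χ, not_not] at h1 h2
    by_contra h3
    refine h1 ?_
    have h4 : c v u = 0 := by
      refine hc0 v u ?_ ?_
      · rintro ⟨i, rfl, rfl⟩
        exact h1 (by rw [(hw i).2])
      · rintro ⟨i, rfl, rfl⟩
        exact h3 (hw i).2
    rw [hpot v u huv] at h4
    omega
  have hside : ∀ v a b, K.Adj v a → K.Adj v b → (χ (L v a) ∨ χ (L a v)) →
      (χ (L v b) ∨ χ (L b v)) := by
    intro v a b ha hb h1
    refine hL.side_iff (hT' v) (by simp) (fun u hu => ⟨hKT u v hu.symm, hu.ne'⟩) χ φ₀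
      (fun u hu => hcross u v hu) (fun u hu => hcross v u hu.symm) ha hb h1
  have hall : T ⊆ {v | v ∈ T ∧ ∀ u, K.Adj v u → χ (L v u) ∨ χ (L u v)} := by
    refine hT.2 _ (fun v hv => hv.1) ⟨w 0, hKT _ _ (hw 0).1, fun u hu => ?_⟩ ?_
    · refine hside _ _ u (hw 0).1 hu (Or.inr ?_)
      have := hpot _ _ (hw 0).1
      rw [(hw 0).2] at this
      simp only [zero_add] at this
      simp only [χ, zero_add]
      omega
    · rintro v ⟨hv, hvu⟩ u hu huv
      exact ⟨hu, fun t ht => hside u v t huv.symm ht (hvu u huv).symm⟩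
  have hlast := (hall (hKT a b hab.1)).2 b hab.1
  have h5 : c a b = 0 := by
    refine hc0 a b hcyc ?_
    rintro ⟨i, rfl, rfl⟩
    exact hbr _ _ hab.1 (hab.2.trans (hw i).2.symm)
  rw [hpot a b hab.1, hab.2] at h5
  rcases hlast with h6 | h6
  · exact h6 (by rw [hab.2])
  · exact h6 (by omega)

end Faces

/-! ### Adding a vertex inside a face -/

section AddVertex

open scoped Classical

/-- The graph `K` together with edges from `x` to all vertices of `N`. -/
def addNbrs (K : SimpleGraph V) (x : V) (N : Set V) : SimpleGraph V where
  Adj a b := K.Adj a b ∨ (a = x ∧ b ∈ N ∧ b ≠ x) ∨ (b = x ∧ a ∈ N ∧ a ≠ x)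
  symm := ⟨fun _ _ h => by
    rcases h with h | h | h
    · exact Or.inl h.symm
    · exact Or.inr (Or.inr h)
    · exact Or.inr (Or.inl h)⟩
  loopless := ⟨fun _ h => by
    rcases h with h | h | h
    · exact h.ne rfl
    · exact h.2.2 h.1
    · exact h.2.2 h.1⟩

/-- The darts of `K` with left face `φ₀` form the closed path `w 0, …, w n = w 0`. Values of `w`
beyond `n` are irrelevant. -/
structure IsFacePath {Φ : Type*} (K : SimpleGraph V) (L : V → V → Φ) (φ₀ : Φ) (n : ℕ)
    (w : ℕ → V) : Prop where
  pos : 0 < n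
  inj : ∀ i < n, ∀ j < n, w i = w j → i = j
  closed : w n = w 0
  dart : ∀ a b, (K.Adj a b ∧ L a b = φ₀) ↔ ∃ i < n, w i = a ∧ w (i + 1) = b

/-- The largest element of `X ∪ {0}` that is at most `i`. -/
noncomputable def lastSpoke (X : Set ℕ) : ℕ → ℕ
  | 0 => 0
  | i + 1 => if i + 1 ∈ X then i + 1 else lastSpoke X i

theorem lastSpoke_of_mem {X : Set ℕ} {k : ℕ} (hk : k ∈ X) : lastSpoke X k = k := by
  cases k with
  | zero => rfl
  | succ k => exact if_pos hk

theorem lastSpoke_eq_zero_iff {X : Set ℕ} {k : ℕ} (hk0 : 0 < k) (hk : k ∈ X)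
    (hmin : ∀ j, 0 < j → j < k → j ∉ X) (i : ℕ) : lastSpoke X i = 0 ↔ i < k := by
  induction i with
  | zero => simp [lastSpoke, hk0]
  | succ i ih =>
    unfold lastSpoke
    split_ifs with h
    · have : ¬ i + 1 < k := fun h' => hmin _ (by omega) h' h
      simpa using this
    · rw [ih]
      have : i + 1 ≠ k := by
        rintro rfl
        exact h hk
      omega

/-- The cyclic predecessor in `{0, …, n - 1}`. -/
def cycPred (n k : ℕ) : ℕ := if k = 0 then n - 1 else k - 1

/-- The unit circulation around the triangle `x, a, b`. -/
noncomputable def triFlow (x a b : V) (u v : V) : ℤ :=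
  unitFlow x a u v + unitFlow a b u v + unitFlow b x u v

theorem triFlow_anti (x a b u v : V) : triFlow x a b u v = - triFlow x a b v u := by
  unfold triFlow
  rw [unitFlow_anti x a, unitFlow_anti a b, unitFlow_anti b x]; ring

variable [Fintype V]

theorem triFlow_bal (x a b v : V) : ∑ u, triFlow x a b v u = 0 := by
  unfold triFlow
  rw [Finset.sum_add_distrib, Finset.sum_add_distrib, unitFlow_div, unitFlow_div, unitFlow_div]
  ring

/-- A vertex `x` placed inside a face and joined to the vertices `w k`, `k ∈ X`, of its boundary.
The new faces are named `inr k` for `k ∈ X`, the face `inr k` lying to the left of the dart from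
`x` to `w k`. The new tensions differ from the old ones by combinations of the triangles
`x, w i, w (i + 1)`. The last clause describes the boundary of the face `inr 0`. -/
theorem IsDual.addVertex {Φ : Type*} {K : SimpleGraph V} {L : V → V → Φ} (hL : IsDual K L)
    {φ₀ : Φ} {n : ℕ} {w : ℕ → V} (hw : IsFacePath K L φ₀ n w) {x : V} (hx : ∀ u, ¬ K.Adj x u)
    {X : Set ℕ} (hX0 : 0 ∈ X) (hXn : ∀ k ∈ X, k < n) :
    ∃ L' : V → V → Φ ⊕ ℕ, IsDual (addNbrs K x (w '' X)) L' ∧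
      ∀ k, 0 < k → k ∈ X → (∀ j, 0 < j → j < k → j ∉ X) →
        IsFacePath (addNbrs K x (w '' X)) L' (Sum.inr 0) (k + 2)
          (fun j => if j = 0 ∨ j = k + 2 then x else w (j - 1)) := by
  obtain ⟨hn, hinj, hclosed, hdart⟩ := hw
  have hwadj : ∀ i < n, K.Adj (w i) (w (i + 1)) ∧ L (w i) (w (i + 1)) = φ₀ :=
    fun i hi => (hdart _ _).2 ⟨i, hi, rfl, rfl⟩
  have hwx : ∀ i ≤ n, w i ≠ x := by
    intro i hi h
    rcases hi.lt_or_eq with h1 | rfl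
    · exact hx _ (h ▸ (hwadj i h1).1)
    · exact hx _ ((hclosed ▸ h) ▸ (hwadj 0 hn).1)
  have hadjx : ∀ a b, K.Adj a b → a ≠ x ∧ b ≠ x := by
    intro a b hab
    refine ⟨?_, ?_⟩
    · rintro rfl; exact hx _ hab
    · rintro rfl; exact hx _ hab.symm
  -- position of a vertex on the boundary
  obtain ⟨idx, hidx⟩ : ∃ idx : V → ℕ, ∀ i < n, idx (w i) = i := by
    refine ⟨fun a => if h : ∃ i < n, w i = a then h.choose else 0, fun i hi => ?_⟩
    have h : ∃ j < n, w j = w i := ⟨i, hi, rfl⟩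
    dsimp only
    rw [dif_pos h]
    exact hinj _ h.choose_spec.1 _ hi h.choose_spec.2
  have hpred : ∀ k < n, cycPred n k < n := by
    intro k hk
    unfold cycPred
    split_ifs <;> omega
  have hpred' : ∀ i < n, ∀ k < n, w (i + 1) = w k ↔ i = cycPred n k := by
    intro i hi k hk
    unfold cycPred
    by_cases h1 : i + 1 = n
    · rw [h1, hclosed]
      split_ifs with h2
      · subst h2; simp; omega
      · refine iff_of_false (fun h => h2 (hinj _ hk _ hn h.symm)) (by omega)
    · constructor
      · intro h
        have := hinj _ (by omega) _ hk h
        split_ifs <;> omega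
      · intro h
        split_ifs at h
        · omega
        · congr 1; omega
  have hmemN : ∀ k < n, w k ∈ w '' X ↔ k ∈ X := by
    intro k hk
    refine ⟨?_, fun h => ⟨k, h, rfl⟩⟩
    rintro ⟨j, hj, hjk⟩
    rwa [← hinj j (hXn j hj) k hk hjk]
  set K' := addNbrs K x (w '' X) with hK'
  have hK'x : ∀ b, K'.Adj x b ↔ ∃ k ∈ X, w k = b := by
    intro b
    constructor
    · rintro (h | ⟨-, h, -⟩ | ⟨rfl, -, h⟩)
      · exact absurd h (hx b)
      · exact h
      · exact absurd rfl h
    · rintro ⟨k, hk, rfl⟩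
      exact Or.inr (Or.inl ⟨rfl, ⟨k, hk, rfl⟩, hwx k (hXn k hk).le⟩)
  have hK'o : ∀ a b, a ≠ x → b ≠ x → (K'.Adj a b ↔ K.Adj a b) := by
    intro a b ha hb
    simp [hK', addNbrs, ha, hb]
  let D : (ℕ → ℤ) → V → V → ℤ := fun q a b =>
    ∑ i ∈ Finset.range n, q i * triFlow x (w i) (w (i + 1)) a b
  have hDanti : ∀ q a b, D q a b = - D q b a := by
    intro q a b
    simp only [D]
    rw [← Finset.sum_neg_distrib]
    refine Finset.sum_congr rfl fun i _ => ?_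
    rw [triFlow_anti]; ring
  have hDbal : ∀ q v, ∑ u, D q v u = 0 := by
    intro q v
    simp only [D]
    rw [Finset.sum_comm]
    refine Finset.sum_eq_zero fun i _ => ?_
    rw [← Finset.mul_sum, triFlow_bal, mul_zero]
  have hDx : ∀ q, ∀ k < n, D q x (w k) = q k - q (cycPred n k) := by
    intro q k hk
    have e : ∀ i ∈ Finset.range n, q i * triFlow x (w i) (w (i + 1)) x (w k)
        = (if i = k then q i else 0) - (if i = cycPred n k then q i else 0) := by
      intro i hi
      have hi := Finset.mem_range.1 hi
      have h1 : w k = w i ↔ i = k := ⟨fun h => (hinj _ hk _ hi h).symm, fun h => h ▸ rfl⟩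
      have h2 := hpred' i hi k hk
      simp only [triFlow, unitFlow, (hwx i hi.le).symm, (hwx (i + 1) hi).symm, hwx k hk.le,
        true_and, false_and, and_false, if_false, h1, eq_comm (a := w k) (b := w (i + 1)), h2]
      split_ifs <;> ring
    simp only [D]
    rw [Finset.sum_congr rfl e, Finset.sum_sub_distrib, Finset.sum_ite_eq', Finset.sum_ite_eq',
      if_pos (Finset.mem_range.2 hk), if_pos (Finset.mem_range.2 (hpred k hk))]
  have hDx0 : ∀ q b, (∀ k < n, w k ≠ b) → D q x b = 0 := by
    intro q b hb
    refine Finset.sum_eq_zero fun i hi => ?_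
    have hi := Finset.mem_range.1 hi
    have h1 : b ≠ w i := (hb i hi).symm
    have h2 : b ≠ w (i + 1) := by
      rcases Nat.lt_or_ge (i + 1) n with h | h
      · exact (hb _ h).symm
      · rw [show i + 1 = n by omega, hclosed]
        exact (hb 0 hn).symm
    simp [triFlow, unitFlow, (hwx i hi.le).symm, (hwx (i + 1) hi).symm, h1, h2]
  have hDo : ∀ q a b, a ≠ x → b ≠ x → D q a b =
      (if K.Adj a b ∧ L a b = φ₀ then q (idx a) else 0)
        - (if K.Adj b a ∧ L b a = φ₀ then q (idx b) else 0) := by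
    intro q a b ha hb
    have e : ∀ a b, (∑ i ∈ Finset.range n, q i * if a = w i ∧ b = w (i + 1) then 1 else 0)
        = if K.Adj a b ∧ L a b = φ₀ then q (idx a) else 0 := by
      intro a b
      by_cases h : K.Adj a b ∧ L a b = φ₀
      · obtain ⟨k, hk, rfl, rfl⟩ := (hdart a b).1 h
        rw [if_pos h, hidx k hk, Finset.sum_eq_single k]
        · simp
        · intro i hi hik
          rw [if_neg, mul_zero]
          exact fun h => hik (hinj _ hk _ (Finset.mem_range.1 hi) h.1).symm
        · intro h; exact absurd (Finset.mem_range.2 hk) h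
      · rw [if_neg h]
        refine Finset.sum_eq_zero fun i hi => ?_
        rw [if_neg, mul_zero]
        rintro ⟨rfl, rfl⟩
        exact h (hwadj i (Finset.mem_range.1 hi))
    rw [← e a b, ← e b a, ← Finset.sum_sub_distrib]
    refine Finset.sum_congr rfl fun i hi => ?_
    simp only [triFlow, unitFlow, ha, hb, false_and, and_false, if_false]
    simp only [and_comm (a := a = w (i + 1))]
    ring
  let r := lastSpoke X
  let L' : V → V → Φ ⊕ ℕ := fun a b =>
    if a = x then Sum.inr (idx b)
    else if b = x then Sum.inr (r (cycPred n (idx a)))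
    else if K.Adj a b ∧ L a b = φ₀ then Sum.inr (r (idx a))
    else Sum.inl (L a b)
  have key : ∀ h : Φ ⊕ ℕ → ℤ, ∀ a b, pot K' L' h a b =
      pot K L (fun p => h (Sum.inl p)) a b
        + D (fun i => h (Sum.inr (r i)) - h (Sum.inl φ₀)) a b := by
    intro h
    have hxcase : ∀ b, pot K' L' h x b = pot K L (fun p => h (Sum.inl p)) x b
        + D (fun i => h (Sum.inr (r i)) - h (Sum.inl φ₀)) x b := by
      intro b
      rw [show pot K L (fun p => h (Sum.inl p)) x b = 0 from if_neg (hx b), zero_add]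
      by_cases hb : ∃ k < n, w k = b
      · obtain ⟨k, hk, rfl⟩ := hb
        rw [hDx _ k hk]
        by_cases hkX : k ∈ X
        · rw [pot, if_pos ((hK'x _).2 ⟨k, hkX, rfl⟩)]
          simp only [L', hwx k hk.le, if_true, if_false, hidx k hk, r, lastSpoke_of_mem hkX]
          ring
        · rw [pot, if_neg (fun h' => hkX ((hmemN k hk).1 ((hK'x _).1 h')))]
          have hk0 : k ≠ 0 := by
            rintro rfl; exact hkX hX0
          obtain ⟨j, rfl⟩ := Nat.exists_eq_succ_of_ne_zero hk0
          have : lastSpoke X (j + 1) = lastSpoke X j := if_neg hkX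
          simp [cycPred, r, this]
      · push Not at hb
        rw [hDx0 _ b hb, pot, if_neg]
        intro h'
        obtain ⟨k, hk, hkb⟩ := (hK'x b).1 h'
        exact hb k (hXn k hk) hkb
    intro a b
    by_cases ha : a = x
    · rw [ha]; exact hxcase b
    by_cases hb : b = x
    · rw [hb, pot_anti, hxcase, hDanti, pot_anti K L]; ring
    rw [hDo _ a b ha hb]
    by_cases hab : K.Adj a b
    · rw [pot, pot, if_pos ((hK'o a b ha hb).2 hab), if_pos hab]
      by_cases h1 : L a b = φ₀ <;> by_cases h2 : L b a = φ₀ <;>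
        simp [L', ha, hb, hab, hab.symm, h1, h2]
    · have hba : ¬ K.Adj b a := fun h => hab h.symm
      rw [pot, pot, if_neg (fun h => hab ((hK'o a b ha hb).1 h)), if_neg hab]
      simp [hab, hba]
  refine ⟨L', ⟨fun h v => ?_, fun f hf => ?_⟩, fun k hk0 hkX hmin => ?_⟩
  · simp only [key]
    rw [Finset.sum_add_distrib, hL.bal, hDbal, add_zero]
  · -- the heights of the new faces are the partial sums of the flow out of `x`
    let H : ℕ → ℤ := fun i => ∑ j ∈ Finset.range (i + 1), f x (w j)
    have hnotX : ∀ k < n, k ∉ X → f x (w k) = 0 := fun k hk hkX =>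
      hf.supp _ _ fun h => hkX ((hmemN k hk).1 ((hK'x _).1 h))
    have hHr : ∀ i < n, H (r i) = H i := by
      intro i hi
      induction i with
      | zero => rfl
      | succ i ih =>
        by_cases h : i + 1 ∈ X
        · rw [show r (i + 1) = i + 1 from if_pos h]
        · rw [show r (i + 1) = r i from if_neg h, ih (by omega)]
          simp only [H]
          rw [Finset.sum_range_succ _ (i + 1), hnotX _ hi h, add_zero]
    have hHlast : H (n - 1) = 0 := by
      simp only [H]
      rw [Nat.sub_add_cancel hn, ← hf.bal x, ← Finset.sum_image (f := fun u => f x u) (g := w)]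
      · refine Finset.sum_subset (Finset.subset_univ _) fun u _ hu => hf.supp _ _ fun h => hu ?_
        obtain ⟨k, hk, rfl⟩ := (hK'x u).1 h
        exact Finset.mem_image_of_mem _ (Finset.mem_range.2 (hXn k hk))
      · intro i hi j hj hij
        exact hinj i (by simpa using hi) j (by simpa using hj) hij
    have hxcase : ∀ b, f x b - D H x b = 0 := by
      intro b
      by_cases hb : ∃ k < n, w k = b
      · obtain ⟨k, hk, rfl⟩ := hb
        rw [hDx _ k hk]
        unfold cycPred
        split_ifs with h
        · subst h
          rw [hHlast]
          simp [H]
        · obtain ⟨j, rfl⟩ := Nat.exists_eq_succ_of_ne_zero h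
          simp only [H, Nat.succ_eq_add_one, Nat.add_sub_cancel]
          rw [Finset.sum_range_succ _ (j + 1)]; ring
      · push Not at hb
        rw [hDx0 _ b hb, hf.supp, sub_zero]
        intro h'
        obtain ⟨k, hk, hkb⟩ := (hK'x b).1 h'
        exact hb k (hXn k hk) hkb
    have hg : IsCirc K (fun a b => f a b - D H a b) := by
      refine ⟨fun a b => ?_, fun a b hab => ?_, fun v => ?_⟩
      · rw [hf.anti a b, hDanti H a b]; ring
      · by_cases ha : a = x
        · rw [ha]; exact hxcase b
        by_cases hb : b = x
        · have := hxcase a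
          rw [hb, hf.anti, hDanti]; linarith
        rw [hDo _ a b ha hb, hf.supp a b (fun h => hab ((hK'o a b ha hb).1 h))]
        have hba : ¬ K.Adj b a := fun h => hab h.symm
        simp [hab, hba]
      · rw [Finset.sum_sub_distrib, hf.bal, hDbal, sub_zero]
    obtain ⟨g, hg'⟩ := hL.exact _ hg
    refine ⟨Sum.elim g (fun k => H k + g φ₀), ?_⟩
    funext a b
    rw [key]
    have e1 := congrFun (congrFun hg' a) b
    have e2 : D (fun i => Sum.elim g (fun k => H k + g φ₀) (Sum.inr (r i))
        - Sum.elim g (fun k => H k + g φ₀) (Sum.inl φ₀)) a b = D H a b := by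
      refine Finset.sum_congr rfl fun i hi => ?_
      simp [hHr i (Finset.mem_range.1 hi)]
    rw [e2]
    simp only [Sum.elim_inl] at *
    linarith
  · have hkn := hXn k hkX
    have hr0 := lastSpoke_eq_zero_iff hk0 hkX hmin
    refine ⟨by omega, ?_, by simp, fun a b => ⟨?_, ?_⟩⟩
    · intro i hi j hj hij
      split_ifs at hij with h1 h2 h2
      · omega
      · exact absurd hij.symm (hwx _ (by omega))
      · exact absurd hij (hwx _ (by omega))
      · have := hinj _ (by omega) _ (by omega) hij
        omega
    · rintro ⟨hab, hface⟩
      by_cases ha : a = x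
      · subst ha
        obtain ⟨j, hj, rfl⟩ := (hK'x b).1 hab
        simp only [L', if_true, hidx j (hXn j hj), Sum.inr.injEq] at hface
        subst hface
        exact ⟨0, by omega, by simp, by simp⟩
      by_cases hb : b = x
      · subst hb
        obtain ⟨j, hj, rfl⟩ := (hK'x a).1 hab.symm
        simp only [L', ha, if_true, if_false, hidx j (hXn j hj), Sum.inr.injEq, r, hr0] at hface
        have hjk : j = k := by
          unfold cycPred at hface
          split_ifs at hface with h
          · omega
          · by_contra hne
            exact hmin j (by omega) (by omega) hj
        subst hjk
        exact ⟨j + 1, by omega, by simp, by simp⟩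
      · simp only [L', ha, hb, if_false] at hface
        split_ifs at hface with h
        obtain ⟨j, hj, rfl, rfl⟩ := (hdart a b).1 h
        simp only [Sum.inr.injEq, hidx j hj, r, hr0] at hface
        refine ⟨j + 1, by omega, ?_, ?_⟩
        · rw [if_neg (by omega)]; simp
        · rw [if_neg (by omega)]; simp
    · rintro ⟨i, hi, rfl, rfl⟩
      rcases Nat.eq_zero_or_pos i with rfl | hi0
      · rw [if_pos (Or.inl rfl), if_neg (by omega)]
        refine ⟨(hK'x _).2 ⟨0, hX0, rfl⟩, ?_⟩
        simp [L', hidx 0 hn]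
      rw [if_neg (by omega)]
      obtain ⟨j, rfl⟩ := Nat.exists_eq_succ_of_ne_zero hi0.ne'
      simp only [Nat.succ_eq_add_one, Nat.add_sub_cancel]
      rcases Nat.lt_or_ge j k with hjk | hjk
      · rw [if_neg (by omega)]
        have h1 := hwadj j (by omega)
        have h2 := hwx j (by omega)
        have h3 := hwx (j + 1) (by omega)
        refine ⟨(hK'o _ _ h2 h3).2 h1.1, ?_⟩
        simp [L', h1, h2, h3, hidx j (by omega), r, (hr0 j).2 hjk]
      · obtain rfl : j = k := by omega
        rw [if_pos (by omega)]
        refine ⟨((hK'x _).2 ⟨j, hkX, rfl⟩).symm, ?_⟩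
        have h2 := hwx j (by omega)
        have : cycPred n j < j := by
          unfold cycPred
          split_ifs <;> omega
        simp [L', h2, hidx j (by omega), r, (hr0 _).2 this]

end AddVertex

/-! ### Two adjacent vertices facing a cycle -/

section Cross

theorem IsFaceCycle.rotate {Φ : Type*} {K : SimpleGraph V} {L : V → V → Φ} {φ₀ : Φ} {n : ℕ}
    {w : ℕ → V} (h : IsFaceCycle K L φ₀ n w) (s : ℕ) :
    IsFaceCycle K L φ₀ n (fun i => w (s + i)) := by
  refine ⟨h.pos, fun i j => ?_, fun a b => ?_⟩
  · rw [h.inj]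
    exact ⟨fun h => Nat.ModEq.add_left_cancel' s h, fun h => Nat.ModEq.add_left s h⟩
  · rw [h.dart]
    constructor
    · rintro ⟨i, rfl, rfl⟩
      obtain ⟨m, hm⟩ := Nat.exists_eq_succ_of_ne_zero h.pos.ne'
      have e : ∀ i, s + (i + s * m) ≡ i [MOD n] := by
        intro i
        have : s + (i + s * m) = i + n * s := by rw [hm]; simp only [Nat.succ_eq_add_one]; ring
        rw [this]
        exact Nat.add_mul_mod_self_left i n s
      refine ⟨i + s * m, (h.inj _ _).2 (e i), ?_⟩
      rw [show s + (i + s * m + 1) = s + (i + 1 + s * m) by ring]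
      exact (h.inj _ _).2 (e (i + 1))
    · rintro ⟨i, h1, h2⟩
      exact ⟨s + i, h1, h2⟩

theorem IsFaceCycle.isFacePath {Φ : Type*} {K : SimpleGraph V} {L : V → V → Φ} {φ₀ : Φ} {n : ℕ}
    {w : ℕ → V} (h : IsFaceCycle K L φ₀ n w) : IsFacePath K L φ₀ n w := by
  refine ⟨h.pos, fun i hi j hj hij => Nat.ModEq.eq_of_lt_of_lt ((h.inj i j).1 hij) hi hj,
    (h.inj _ _).2 (by simp [Nat.ModEq]), fun a b => ?_⟩
  rw [h.dart]
  constructor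
  · rintro ⟨i, rfl, rfl⟩
    refine ⟨i % n, Nat.mod_lt _ h.pos, (h.inj _ _).2 (Nat.mod_modEq i n), (h.inj _ _).2 ?_⟩
    exact (Nat.mod_modEq i n).add_right 1
  · rintro ⟨i, -, h1, h2⟩
    exact ⟨i, h1, h2⟩

theorem connOn_arc {G : SimpleGraph V} {w : ℕ → V} (hadj : ∀ i, G.Adj (w i) (w (i + 1)))
    {a b : ℕ} (hab : a < b) : ConnOn G (w '' Set.Ico a b) := by
  obtain ⟨d, rfl⟩ := Nat.exists_eq_add_of_lt hab
  clear hab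
  induction d with
  | zero =>
    have : Set.Ico a (a + 0 + 1) = {a} := by ext; simp; omega
    rw [this, Set.image_singleton]
    exact connOn_singleton G _
  | succ d ih =>
    have : Set.Ico a (a + (d + 1) + 1) = insert (a + d + 1) (Set.Ico a (a + d + 1)) := by
      ext; simp; omega
    rw [this, Set.image_insert_eq]
    exact ih.insert (a := w (a + d)) ⟨a + d, by simp, rfl⟩ (hadj _).symm

/-- Two subsets `X` and `Y` of a cyclically ordered set of size `n`, with at least two elements
each: either all of `Y` lies between two consecutive elements of `X`, or two elements of `Y`
separate two elements of `X`, or `X` and `Y` have three common elements. -/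
theorem cyclic_trichotomy {n : ℕ} {X Y : ℕ → Prop} (hX : ∀ i, X (i + n) ↔ X i)
    (hY : ∀ i, Y (i + n) ↔ Y i)
    (hX2 : ∀ b, ∃ i j, i < j ∧ j < n ∧ X (b + i) ∧ X (b + j))
    (hY2 : ∃ i j, i < j ∧ j < n ∧ Y i ∧ Y j) :
    ∃ s, (X s ∧ ∃ k, 0 < k ∧ k < n ∧ X (s + k) ∧ (∀ j, 0 < j → j < k → ¬ X (s + j)) ∧
        ∀ j < n, Y (s + j) → j ≤ k) ∨
      (∃ e q e', 0 < e ∧ e < q ∧ q < e' ∧ e' < n ∧ Y s ∧ X (s + e) ∧ Y (s + q) ∧ X (s + e')) ∨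
      (∃ p q, 0 < p ∧ p < q ∧ q < n ∧ X s ∧ Y s ∧ X (s + p) ∧ Y (s + p) ∧ X (s + q) ∧
        Y (s + q)) := by
  classical
  by_cases hYX : ∃ b, Y b ∧ ¬ X b
  · obtain ⟨b, hYb, hXb⟩ := hYX
    obtain ⟨i₀, j₀, hij, hjn, hi, hj⟩ := hX2 b
    have hex : ∃ i, X (b + i) := ⟨i₀, hi⟩
    obtain ⟨i', hi', hmin⟩ : ∃ i', X (b + i') ∧ ∀ m < i', ¬ X (b + m) :=
      ⟨Nat.find hex, Nat.find_spec hex, fun m hm => Nat.find_min hex hm⟩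
    obtain ⟨i, hin, hi1, hmax⟩ : ∃ i < n, X (b + i) ∧ ∀ m, i < m → m < n → ¬ X (b + m) := by
      let P : ℕ → Prop := fun i => i < n ∧ X (b + i)
      have h1 : P (Nat.findGreatest P n) := Nat.findGreatest_spec (m := j₀) hjn.le ⟨hjn, hj⟩
      refine ⟨_, h1.1, h1.2, fun m hm hmn hX => ?_⟩
      exact absurd (Nat.le_findGreatest (P := P) hmn.le ⟨hmn, hX⟩) (by omega)
    have h1 : i' ≤ i₀ := by
      by_contra h; exact hmin _ (by omega) hi
    have h2 : j₀ ≤ i := by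
      by_contra h; exact hmax _ (by omega) hjn hj
    have h0 : i' ≠ 0 := by
      rintro rfl; exact hXb hi'
    by_cases hq : ∃ q, i' < q ∧ q < i ∧ Y (b + q)
    · obtain ⟨q, h3, h4, h5⟩ := hq
      exact ⟨b, Or.inr (Or.inl ⟨i', q, i, by omega, h3, h4, hin, hYb, hi', h5, hi1⟩)⟩
    · push Not at hq
      refine ⟨b + i, Or.inl ⟨hi1, n - i + i', by omega, by omega, ?_, fun j hj0 hjk => ?_,
        fun j hj hYj => ?_⟩⟩
      · rw [show b + i + (n - i + i') = b + i' + n by omega, hX]; exact hi'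
      · rcases Nat.lt_or_ge (i + j) n with h | h
        · rw [add_assoc]; exact hmax _ (by omega) h
        · rw [show b + i + j = b + (i + j - n) + n by omega, hX]
          exact hmin _ (by omega)
      · by_contra hcon
        rw [show b + i + j = b + (i + j - n) + n by omega, hY] at hYj
        exact hq _ (by omega) (by omega) hYj
  · push Not at hYX
    obtain ⟨p, q, hpq, hqn, hp, hq⟩ := hY2
    obtain ⟨r, rfl⟩ := Nat.exists_eq_add_of_lt hpq
    by_cases h1 : ∃ e, 0 < e ∧ e < r + 1 ∧ X (p + e)
    · by_cases h2 : ∃ e, r + 1 < e ∧ e < n ∧ X (p + e)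
      · obtain ⟨e, he0, he1, he⟩ := h1
        obtain ⟨e', he0', he1', he'⟩ := h2
        exact ⟨p, Or.inr (Or.inl ⟨e, r + 1, e', he0, he1, he0', he1', hp, he, hq, he'⟩)⟩
      · push Not at h2
        by_cases h3 : ∃ e, 0 < e ∧ e < r + 1 ∧ Y (p + e)
        · obtain ⟨e, he0, he1, he⟩ := h3
          exact ⟨p, Or.inr (Or.inr ⟨e, r + 1, he0, he1, by omega, hYX _ hp, hp, hYX _ he, he,
            hYX _ hq, hq⟩)⟩
        · push Not at h3
          refine ⟨p + r + 1, Or.inl ⟨hYX _ hq, n - (r + 1), by omega, by omega, ?_,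
            fun j hj0 hjk => ?_, fun j hj hYj => ?_⟩⟩
          · rw [show p + r + 1 + (n - (r + 1)) = p + n by omega, hX]; exact hYX _ hp
          · rw [show p + r + 1 + j = p + (r + 1 + j) by omega]
            exact h2 _ (by omega) (by omega)
          · by_contra hcon
            rw [show p + r + 1 + j = p + (r + 1 + j - n) + n by omega, hY] at hYj
            exact h3 _ (by omega) (by omega) hYj
    · push Not at h1
      by_cases h3 : ∃ e, r + 1 < e ∧ e < n ∧ Y (p + e)
      · obtain ⟨e, he0, he1, he⟩ := h3
        exact ⟨p, Or.inr (Or.inr ⟨r + 1, e, by omega, he0, he1, hYX _ hp, hp, hYX _ hq, hq,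
          hYX _ he, he⟩)⟩
      · push Not at h3
        refine ⟨p, Or.inl ⟨hYX _ hp, r + 1, by omega, by omega, hYX _ hq, h1,
          fun j hj hYj => ?_⟩⟩
        by_contra hcon
        exact h3 _ (by omega) hj hYj

variable {G : SimpleGraph V} {n : ℕ} {w : ℕ → V} {x y : V}

theorem disjoint_arcs (hinj : ∀ i < n, ∀ j < n, w i = w j → i = j) {a b c d : ℕ} (hbc : b ≤ c)
    (hdn : d ≤ n) : Disjoint (w '' Set.Ico a b) (w '' Set.Ico c d) := by
  rw [Set.disjoint_left]
  rintro _ ⟨i, hi, rfl⟩ ⟨j, hj, hij⟩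
  simp only [Set.mem_Ico] at hi hj
  have := hinj j (by omega) i (by omega) hij
  omega

/-- If neighbours of `x` and of `y` alternate along a cycle avoiding the edge `xy`, there is a
`K₃,₃` minor. -/
theorem Planar.not_alternating (hG : Planar G) (hadj : ∀ i, G.Adj (w i) (w (i + 1)))
    (hinj : ∀ i < n, ∀ j < n, w i = w j → i = j) (hclosed : w n = w 0)
    (hx : ∀ i, w i ≠ x) (hy : ∀ i, w i ≠ y) (hxy : G.Adj x y) {e q e' : ℕ} (h0 : 0 < e)
    (h1 : e < q) (h2 : q < e') (h3 : e' < n) (a0 : G.Adj y (w 0)) (a1 : G.Adj x (w e))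
    (a2 : G.Adj y (w q)) (a3 : G.Adj x (w e')) : False := by
  have hsx : ∀ a b, Disjoint {x} (w '' Set.Ico a b) := fun a b =>
    Set.disjoint_singleton_left.2 (by rintro ⟨i, -, h⟩; exact hx i h)
  have hsy : ∀ a b, Disjoint {y} (w '' Set.Ico a b) := fun a b =>
    Set.disjoint_singleton_left.2 (by rintro ⟨i, -, h⟩; exact hy i h)
  have hne : x ≠ y := hxy.ne
  have m : ∀ a b i, a ≤ i → i < b → w i ∈ w '' Set.Ico a b := fun a b i h h' => ⟨i, ⟨h, h'⟩, rfl⟩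
  have succ : ∀ i, 0 < i → G.Adj (w (i - 1)) (w i) := by
    intro i hi
    obtain ⟨j, rfl⟩ := Nat.exists_eq_succ_of_ne_zero hi.ne'
    exact hadj j
  refine hG.2 ⟨Sum.elim ![{x}, w '' Set.Ico 0 e, w '' Set.Ico q e']
    ![{y}, w '' Set.Ico e q, w '' Set.Ico e' n], fun i => ConnOn.connected ?_, ?_, ?_⟩
  · rcases i with i | i <;> fin_cases i
    · exact connOn_singleton G x
    · exact connOn_arc hadj h0
    · exact connOn_arc hadj h2
    · exact connOn_singleton G y
    · exact connOn_arc hadj h1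
    · exact connOn_arc hadj h3
  · have d01 : Disjoint (w '' Set.Ico 0 e) (w '' Set.Ico e q) := disjoint_arcs hinj le_rfl (by omega)
    have d02 : Disjoint (w '' Set.Ico 0 e) (w '' Set.Ico q e') :=
      disjoint_arcs hinj h1.le (by omega)
    have d03 : Disjoint (w '' Set.Ico 0 e) (w '' Set.Ico e' n) :=
      disjoint_arcs hinj (by omega) (by omega)
    have d12 : Disjoint (w '' Set.Ico e q) (w '' Set.Ico q e') :=
      disjoint_arcs hinj le_rfl (by omega)
    have d13 : Disjoint (w '' Set.Ico e q) (w '' Set.Ico e' n) :=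
      disjoint_arcs hinj h2.le (by omega)
    have d23 : Disjoint (w '' Set.Ico q e') (w '' Set.Ico e' n) :=
      disjoint_arcs hinj le_rfl (by omega)
    rintro (i | i) (j | j) hij <;> fin_cases i <;> fin_cases j <;>
      first
      | exact absurd rfl hij
      | exact hsx _ _
      | exact (hsx _ _).symm
      | exact hsy _ _
      | exact (hsy _ _).symm
      | exact Set.disjoint_singleton.2 hne
      | exact Set.disjoint_singleton.2 hne.symm
      | assumption
      | (apply Disjoint.symm; assumption)
  · have key : ∀ i j : Fin 3, ∃ v₁ ∈ ![{x}, w '' Set.Ico 0 e, w '' Set.Ico q e'] i,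
        ∃ v₂ ∈ ![{y}, w '' Set.Ico e q, w '' Set.Ico e' n] j, G.Adj v₁ v₂ := by
      intro i j
      fin_cases i <;> fin_cases j
      · exact ⟨x, rfl, y, rfl, hxy⟩
      · exact ⟨x, rfl, w e, m _ _ _ le_rfl h1, a1⟩
      · exact ⟨x, rfl, w e', m _ _ _ le_rfl h3, a3⟩
      · exact ⟨w 0, m _ _ _ le_rfl h0, y, rfl, a0.symm⟩
      · exact ⟨w (e - 1), m _ _ _ (by omega) (by omega), w e, m _ _ _ le_rfl h1, succ e h0⟩
      · exact ⟨w 0, m _ _ _ le_rfl h0, w (n - 1), m _ _ _ (by omega) (by omega),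
          hclosed ▸ (succ n (by omega)).symm⟩
      · exact ⟨w q, m _ _ _ le_rfl h2, y, rfl, a2.symm⟩
      · exact ⟨w q, m _ _ _ le_rfl h2, w (q - 1), m _ _ _ (by omega) (by omega),
          (succ q (by omega)).symm⟩
      · exact ⟨w (e' - 1), m _ _ _ (by omega) (by omega), w e', m _ _ _ le_rfl h3,
          succ e' (by omega)⟩
    rintro (i | i) (j | j) hij
    · simp at hij
    · exact key i j
    · obtain ⟨a, ha, b, hb, hab⟩ := key j i
      exact ⟨b, hb, a, ha, hab.symm⟩
    · simp at hij

/-- If adjacent vertices `x` and `y` have three common neighbours on a cycle avoiding them, there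
is a `K₅` minor. -/
theorem Planar.not_three_common (hG : Planar G) (hadj : ∀ i, G.Adj (w i) (w (i + 1)))
    (hinj : ∀ i < n, ∀ j < n, w i = w j → i = j) (hclosed : w n = w 0)
    (hx : ∀ i, w i ≠ x) (hy : ∀ i, w i ≠ y) (hxy : G.Adj x y) {p q : ℕ} (h0 : 0 < p)
    (h1 : p < q) (h2 : q < n) (a0 : G.Adj x (w 0)) (b0 : G.Adj y (w 0)) (a1 : G.Adj x (w p))
    (b1 : G.Adj y (w p)) (a2 : G.Adj x (w q)) (b2 : G.Adj y (w q)) : False := by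
  have hsx : ∀ a b, Disjoint {x} (w '' Set.Ico a b) := fun a b =>
    Set.disjoint_singleton_left.2 (by rintro ⟨i, -, h⟩; exact hx i h)
  have hsy : ∀ a b, Disjoint {y} (w '' Set.Ico a b) := fun a b =>
    Set.disjoint_singleton_left.2 (by rintro ⟨i, -, h⟩; exact hy i h)
  have m : ∀ a b i, a ≤ i → i < b → w i ∈ w '' Set.Ico a b := fun a b i h h' => ⟨i, ⟨h, h'⟩, rfl⟩
  have succ : ∀ i, 0 < i → G.Adj (w (i - 1)) (w i) := by
    intro i hi
    obtain ⟨j, rfl⟩ := Nat.exists_eq_succ_of_ne_zero hi.ne'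
    exact hadj j
  let F : Fin 5 → Set V := ![{x}, {y}, w '' Set.Ico 0 p, w '' Set.Ico p q, w '' Set.Ico q n]
  have hdis : ∀ i j, i < j → Disjoint (F i) (F j) := by
    intro i j hij
    fin_cases i <;> fin_cases j <;>
      first
      | exact absurd hij (by decide)
      | exact hsx _ _
      | exact hsy _ _
      | exact Set.disjoint_singleton.2 hxy.ne
      | exact disjoint_arcs hinj (by omega) (by omega)
  have key : ∀ i j, i < j → ∃ v₁ ∈ F i, ∃ v₂ ∈ F j, G.Adj v₁ v₂ := by
    intro i j hij
    fin_cases i <;> fin_cases j <;> first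
      | exact absurd hij (by decide)
      | exact ⟨x, rfl, y, rfl, hxy⟩
      | exact ⟨x, rfl, w 0, m _ _ _ le_rfl h0, a0⟩
      | exact ⟨x, rfl, w p, m _ _ _ le_rfl h1, a1⟩
      | exact ⟨x, rfl, w q, m _ _ _ le_rfl h2, a2⟩
      | exact ⟨y, rfl, w 0, m _ _ _ le_rfl h0, b0⟩
      | exact ⟨y, rfl, w p, m _ _ _ le_rfl h1, b1⟩
      | exact ⟨y, rfl, w q, m _ _ _ le_rfl h2, b2⟩
      | exact ⟨w (p - 1), m _ _ _ (by omega) (by omega), w p, m _ _ _ le_rfl h1, succ p h0⟩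
      | exact ⟨w 0, m _ _ _ le_rfl h0, w (n - 1), m _ _ _ (by omega) (by omega),
          hclosed ▸ (succ n (by omega)).symm⟩
      | exact ⟨w (q - 1), m _ _ _ (by omega) (by omega), w q, m _ _ _ le_rfl h2,
          succ q (by omega)⟩
  refine hG.1 ⟨F, fun i => ConnOn.connected ?_, fun i j hij => ?_, fun i j hij => ?_⟩
  · fin_cases i
    · exact connOn_singleton G x
    · exact connOn_singleton G y
    · exact connOn_arc hadj h0
    · exact connOn_arc hadj h1
    · exact connOn_arc hadj h2
  · rcases lt_or_gt_of_ne hij with h | h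
    · exact hdis i j h
    · exact (hdis j i h).symm
  · rcases lt_or_gt_of_ne hij.ne with h | h
    · exact key i j h
    · obtain ⟨a, ha, b, hb, hab⟩ := key j i h
      exact ⟨b, hb, a, ha, hab.symm⟩

end Cross

/-! ### The 3-connected case -/

section ThreeConnected

theorem IsFaceCycle.exists_index {Φ : Type*} {K : SimpleGraph V} {L : V → V → Φ} {φ₀ : Φ} {n : ℕ}
    {w : ℕ → V} (h : IsFaceCycle K L φ₀ n w) (b i₀ : ℕ) : ∃ i < n, w (b + i) = w i₀ := by
  obtain ⟨i, hi, h1, -⟩ := ((h.rotate b).isFacePath.dart _ _).1 ((h.dart _ _).2 ⟨i₀, rfl, rfl⟩)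
  exact ⟨i, hi, h1⟩

variable [Fintype V]

/-- Deleting a vertex `z` whose deletion leaves a sufficiently connected graph merges the faces
around `z` into one face, whose boundary is a cycle through all neighbours of `z`. -/
theorem exists_face_around {Φ : Type} {H : SimpleGraph V} {L : V → V → Φ} (hL : IsDual H L)
    {z : V} {T : Set V} (hz : z ∉ T) (hHS : ∀ a b, H.Adj a b → a = z ∨ a ∈ T)
    (h0 : ConnOn H T) (h1 : ∀ v, ConnOn H (T \ {v}))
    (h2 : ∀ v ∈ T, ∃ a b, a ≠ b ∧ a ∈ T ∧ b ∈ T ∧ H.Adj v a ∧ H.Adj v b)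
    (hz1 : ∃ u, H.Adj z u) (hz2 : ∀ w, H.Adj z w → ConnOn H (insert z T \ {w})) :
    ∃ (Φ' : Type) (L' : V → V → Φ') (φ₀ : Φ') (n : ℕ) (w : ℕ → V), IsDual (res H T) L' ∧
      IsFaceCycle (res H T) L' φ₀ n w ∧ ∀ u, H.Adj z u → ∃ i, w i = u := by
  have hle : res H T ≤ H := fun a b h => h.1
  have hL' := hL.merge hle
  set L' : V → V → Quot (mergeRel H (res H T) L) :=
    fun u v => Quot.mk (mergeRel H (res H T) L) (L u v) with hLdef
  obtain ⟨u₁, hu₁⟩ := hz1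
  have hzT : ∀ u, H.Adj z u → u ∈ T := fun u hu =>
    (hHS u z hu.symm).resolve_left hu.ne'
  have hsame : ∀ u, H.Adj z u → L' z u = L' u z := fun u hu =>
    Quot.sound ⟨z, u, hu, fun h => hz h.2.1, rfl, rfl⟩
  have hface : ∀ u, H.Adj z u → L' z u = L' z u₁ := fun u hu =>
    hL.side_iff' h0 hz hzT (fun p => Quot.mk _ p = L' z u₁)
      (fun v hv => by rw [show Quot.mk _ (L z v) = Quot.mk _ (L v z) from hsame v hv])
      hu₁ hu rfl
  have hdart : ∀ u, H.Adj z u → ∃ b, (res H T).Adj u b ∧ (L' u b = L' z u₁ ∨ L' b u = L' z u₁) := by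
    intro u hu
    by_contra hcon
    push Not at hcon
    obtain ⟨a, -, -, haT, -, hua, -⟩ := h2 u (hzT u hu)
    have hres : ∀ b, H.Adj u b → b ≠ z → (res H T).Adj u b := fun b hb hbz =>
      ⟨hb, hzT u hu, (hHS b u hb.symm).resolve_left hbz⟩
    have key := hL.side_iff' (hz2 u hu) (v := u) (by simp)
      (fun b hb => ⟨hHS b u hb.symm, hb.ne'⟩) (fun p => Quot.mk _ p = L' z u₁) (fun b hb => by
        by_cases hbz : b = z
        · subst hbz
          exact iff_of_true ((hsame u hu).symm.trans (hface u hu)) (hface u hu)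
        · have := hcon b (hres b hb hbz)
          exact iff_of_false this.1 this.2)
      hu.symm hua ((hsame u hu).symm.trans (hface u hu))
    exact (hcon a (hres a hua (fun h => hz (h ▸ haT)))).1 key
  have hmono : ∀ A, A ⊆ T → ConnOn H A → ConnOn (res H T) A := fun A hA h =>
    h.mono fun a ha b hb hab => ⟨hab, hA ha, hA hb⟩
  have hbr : ∀ a b, (res H T).Adj a b → L' a b ≠ L' b a := by
    intro a b hab
    obtain ⟨c, d, hcd, hc, hd, hac, had⟩ := h2 a hab.2.1
    obtain ⟨e, heb, he⟩ : ∃ e, b ≠ e ∧ (res H T).Adj a e := by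
      by_cases h : b = c
      · exact ⟨d, by rw [h]; exact hcd, had, hab.2.1, hd⟩
      · exact ⟨c, h, hac, hab.2.1, hc⟩
    exact hL'.ne_of_two (hmono _ Set.sdiff_subset (h1 a)) (v := a) (by simp)
      (fun u hu => ⟨hu.2.2, hu.ne'⟩) hab he heb
  obtain ⟨n, w, hw⟩ := hL'.exists_faceCycle (fun a b hab => hab.2.1) (hmono T le_rfl h0)
    (fun v => hmono _ Set.sdiff_subset (h1 v)) hbr (L' z u₁) (by
      obtain ⟨b, hb, h | h⟩ := hdart u₁ hu₁
      · exact ⟨_, _, hb, h⟩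
      · exact ⟨_, _, hb.symm, h⟩)
  refine ⟨_, L', L' z u₁, n, w, hL', hw, fun u hu => ?_⟩
  obtain ⟨b, hb, h | h⟩ := hdart u hu
  · obtain ⟨i, hi, -⟩ := (hw.dart u b).1 ⟨hb, h⟩
    exact ⟨i, hi⟩
  · obtain ⟨i, -, hi⟩ := (hw.dart b u).1 ⟨hb.symm, h⟩
    exact ⟨i + 1, hi⟩

theorem exists_notMem_four {S : Set V} (hS : 5 ≤ S.ncard) (a b c d : V) :
    ∃ e ∈ S, e ≠ a ∧ e ≠ b ∧ e ≠ c ∧ e ≠ d := by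
  have h1 := Set.ncard_insert_le a {b, c, d}
  have h2 := Set.ncard_insert_le b {c, d}
  have h3 := Set.ncard_insert_le c {d}
  rw [Set.ncard_singleton] at h3
  obtain ⟨e, he, hne⟩ := Set.exists_mem_notMem_of_ncard_lt_ncard
    (s := {a, b, c, d}) (t := S) (by omega)
  simp only [Set.mem_insert_iff, Set.mem_singleton_iff, not_or] at hne
  exact ⟨e, he, hne⟩

theorem hasDual_of_three_connected {G : SimpleGraph V} {S : Set V}
    (hGS : ∀ a b, G.Adj a b → a ∈ S) (hG : Planar G) (hS : 5 ≤ S.ncard)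
    (h3 : ∀ u v, ConnOn G (S \ {u, v}))
    (ih : ∀ (H : SimpleGraph V) (S' : Set V), S'.ncard < S.ncard →
      (∀ a b, H.Adj a b → a ∈ S') → Planar H → HasDual H) : HasDual G := by
  obtain ⟨x, y, hxy, hc⟩ := exists_contractible hS h3
  have hxS := hGS x y hxy
  have hyS := hGS y x hxy.symm
  have hne : x ≠ y := hxy.ne
  set T : Set V := S \ {x, y} with hT
  have hxT : x ∉ T := by simp [hT]
  have hyT : y ∉ T := by simp [hT]
  have hmemT : ∀ a, a ∈ T ↔ a ∈ S ∧ a ≠ x ∧ a ≠ y := by simp [hT]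
  set H := contract G {x, y} (S \ {y}) x with hH
  have hGH : ∀ a b, G.Adj a b → a ≠ y → b ≠ y → H.Adj a b := fun a b h ha hb =>
    ⟨h.ne, ⟨hGS a b h, ha⟩, ⟨hGS b a h.symm, hb⟩, Or.inl h⟩
  have hHy : ∀ b, G.Adj y b → b ≠ x → H.Adj x b := fun b h hb =>
    ⟨hb.symm, ⟨hxS, hne⟩, ⟨hGS b y h.symm, h.ne'⟩, Or.inr (Or.inl ⟨rfl, y, by simp, h⟩)⟩
  have hTH : ∀ a ∈ T, ∀ b ∈ T, G.Adj a b → H.Adj a b := fun a ha b hb h =>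
    hGH a b h ((hmemT a).1 ha).2.2 ((hmemT b).1 hb).2.2
  have hHT : ∀ a ∈ T, ∀ b ∈ T, H.Adj a b → G.Adj a b := by
    rintro a ha b hb ⟨-, -, -, h | ⟨rfl, -⟩ | ⟨rfl, -⟩⟩
    · exact h
    · exact absurd ha hxT
    · exact absurd hb hxT
  have hconnH : ∀ A ⊆ T, ConnOn G A → ConnOn H A := fun A hA h =>
    h.mono fun a ha b hb hab => hTH a (hA ha) b (hA hb) hab
  have hPH : Planar H := by
    refine hG.contract (by simp) ?_ ?_
    · exact (connOn_singleton G y).insert rfl hxy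
    · rintro m (rfl | rfl) hm
      · rfl
      · exact absurd rfl hm.2
  obtain ⟨Φ, L, hL⟩ := ih H (S \ {y}) (Set.ncard_sdiff_singleton_lt_of_mem hyS)
    (fun a b h => h.2.1) hPH
  -- in `G`, every vertex has two neighbours avoiding any given vertex
  have two : ∀ p q, p ∈ S → p ≠ q → ∃ a b, a ≠ b ∧ a ≠ q ∧ b ≠ q ∧ G.Adj p a ∧ G.Adj p b := by
    intro p q hp hpq
    have one : ∀ r, p ≠ r → ∃ a, a ≠ q ∧ a ≠ r ∧ G.Adj p a := by
      intro r hr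
      obtain ⟨e, heS, h1, h2, h4, -⟩ := exists_notMem_four hS p q r r
      obtain ⟨a, ha, b, hb, -, hab⟩ := (h3 q r).exists_adj (A := {p}) (by simp [hp, hpq, hr])
        ⟨p, rfl⟩ (c := e) (by simp [heS, h2, h4]) (by simpa using h1)
      obtain rfl : a = p := ha
      simp only [Set.mem_sdiff, Set.mem_insert_iff, Set.mem_singleton_iff, not_or] at hb
      exact ⟨b, hb.2.1, hb.2.2, hab⟩
    obtain ⟨a, haq, -, ha⟩ := one q hpq
    obtain ⟨b, hbq, hba, hb⟩ := one a ha.ne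
    exact ⟨a, b, hba.symm, haq, hbq, ha, hb⟩
  have twoT : ∀ v ∈ T, ∃ a b, a ≠ b ∧ a ∈ T ∧ b ∈ T ∧ H.Adj v a ∧ H.Adj v b := by
    intro v hv
    obtain ⟨hvS, hvx, hvy⟩ := (hmemT v).1 hv
    have one : ∀ r, v ≠ r → ∃ a ∈ T, a ≠ r ∧ G.Adj v a := by
      intro r hr
      obtain ⟨e, heS, h1, h2, h4, h5⟩ := exists_notMem_four hS v x y r
      obtain ⟨a, ha, b, hb, -, hab⟩ := (hc r).exists_adj (A := {v}) (by simp [hvS, hvx, hvy, hr])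
        ⟨v, rfl⟩ (c := e) (by simp [heS, h2, h4, h5]) (by simpa using h1)
      obtain rfl : a = v := ha
      simp only [Set.mem_sdiff, Set.mem_insert_iff, Set.mem_singleton_iff, not_or] at hb
      exact ⟨b, (hmemT b).2 ⟨hb.1, hb.2.1, hb.2.2.1⟩, hb.2.2.2, hab⟩
    obtain ⟨a, haT, -, ha⟩ := one x hvx
    obtain ⟨b, hbT, hba, hb⟩ := one a ha.ne
    exact ⟨a, b, hba.symm, haT, hbT, hTH _ hv _ haT ha, hTH _ hv _ hbT hb⟩
  have hcT : ∀ v, ConnOn G (T \ {v}) := by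
    intro v
    have : T \ {v} = S \ {x, y, v} := by
      ext a; simp [hT]; tauto
    rw [this]; exact hc v
  obtain ⟨Φ', L', φ₀, n, w, hL', hw, hwn⟩ := exists_face_around hL hxT
    (fun a b h => by
      by_cases hax : a = x
      · exact Or.inl hax
      · exact Or.inr ((hmemT a).2 ⟨h.2.1.1, hax, h.2.1.2⟩))
    (hconnH T le_rfl (h3 x y)) (fun v => hconnH _ Set.sdiff_subset (hcT v)) twoT
    (by
      obtain ⟨a, -, -, ha, -, hxa, -⟩ := two x y hxS hne
      exact ⟨a, hGH x a hxa hne ha⟩)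
    (fun v hv => by
      have : insert x T \ {v} = insert x (T \ {v}) := by
        ext a
        have := hv.ne
        simp only [Set.mem_sdiff, Set.mem_insert_iff, Set.mem_singleton_iff]
        constructor
        · tauto
        · rintro (rfl | h)
          · exact ⟨Or.inl rfl, this⟩
          · exact ⟨Or.inr h.1, h.2⟩
      rw [this]
      obtain ⟨a, b, hab, ha, hb, hxa, hxb⟩ := two x y hxS hne
      obtain ⟨c, hcv, hcy, hxc⟩ : ∃ c, c ≠ v ∧ c ≠ y ∧ G.Adj x c := by
        by_cases h : a = v
        · exact ⟨b, fun h' => hab (h.trans h'.symm), hb, hxb⟩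
        · exact ⟨a, h, ha, hxa⟩
      exact (hconnH _ Set.sdiff_subset (hcT v)).insert (a := c)
        ⟨(hmemT c).2 ⟨hGS c x hxc.symm, hxc.ne', hcy⟩, hcv⟩ (hGH x c hxc hne hcy))
  have hwF : ∀ i, (res H T).Adj (w i) (w (i + 1)) := fun i => ((hw.dart _ _).2 ⟨i, rfl, rfl⟩).1
  have hwT : ∀ i, w i ∈ T := fun i => (hwF i).2.1
  have hwG : ∀ i, G.Adj (w i) (w (i + 1)) := fun i => hHT _ (hwT i) _ (hwT _) (hwF i).1
  have hper : ∀ i, w (i + n) = w i := fun i => (hw.inj _ _).2 (by simp [Nat.ModEq])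
  have hnx : ∀ a, G.Adj x a → a ≠ y → ∃ i, w i = a := fun a ha hay => hwn a (hGH x a ha hne hay)
  have hny : ∀ a, G.Adj y a → a ≠ x → ∃ i, w i = a := fun a ha hax => hwn a (hHy a ha hax)
  have order : ∀ (P : ℕ → Prop) (i j : ℕ), i < n → j < n → i ≠ j → P i → P j →
      ∃ i j, i < j ∧ j < n ∧ P i ∧ P j := by
    intro P i j hi hj hij hPi hPj
    rcases lt_or_gt_of_ne hij with h | h
    · exact ⟨i, j, h, hj, hPi, hPj⟩
    · exact ⟨j, i, h, hi, hPj, hPi⟩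
  obtain ⟨s, hs⟩ := cyclic_trichotomy (n := n) (X := fun i => G.Adj x (w i))
    (Y := fun i => G.Adj y (w i)) (fun i => by rw [hper]) (fun i => by rw [hper])
    (fun b => by
      obtain ⟨c, d, hcd, hcy, hdy, hxc, hxd⟩ := two x y hxS hne
      obtain ⟨i₀, rfl⟩ := hnx c hxc hcy
      obtain ⟨j₀, rfl⟩ := hnx d hxd hdy
      obtain ⟨i, hi, hi'⟩ := hw.exists_index b i₀
      obtain ⟨j, hj, hj'⟩ := hw.exists_index b j₀
      refine order (fun i => G.Adj x (w (b + i))) i j hi hj ?_ (by simpa [hi'] using hxc)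
        (by simpa [hj'] using hxd)
      rintro rfl
      exact hcd (hi'.symm.trans hj'))
    (by
      obtain ⟨c, d, hcd, hcy, hdy, hxc, hxd⟩ := two y x hyS hne.symm
      obtain ⟨i₀, rfl⟩ := hny c hxc hcy
      obtain ⟨j₀, rfl⟩ := hny d hxd hdy
      obtain ⟨i, hi, hi'⟩ := hw.exists_index 0 i₀
      obtain ⟨j, hj, hj'⟩ := hw.exists_index 0 j₀
      rw [zero_add] at hi' hj'
      refine order (fun i => G.Adj y (w i)) i j hi hj ?_ (by simpa [hi'] using hxc)
        (by simpa [hj'] using hxd)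
      rintro rfl
      exact hcd (hi'.symm.trans hj'))
  have hP := (hw.rotate s).isFacePath
  have hxw : ∀ i, w (s + i) ≠ x := fun i h => hxT (h ▸ hwT _)
  have hyw : ∀ i, w (s + i) ≠ y := fun i h => hyT (h ▸ hwT _)
  rcases hs with ⟨hs0, k, hk0, hkn, hsk, hgap, hYk⟩ | ⟨e, q, e', h0, h1, h2, h4, a0, a1, a2, a3⟩ |
    ⟨p, q, h0, h1, h2, a0, b0, a1, b1, a2, b2⟩
  · -- insert `x` into the face, then `y` into the new face `x, w s, …, w (s + k)`
    obtain ⟨L₁, hL₁, hface⟩ := hL'.addVertex hP (x := x) (fun u hu => hxT hu.2.1)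
      (X := {i | i < n ∧ G.Adj x (w (s + i))}) ⟨hw.pos, hs0⟩ (fun i hi => hi.1)
    have hP₁ := hface k hk0 ⟨hkn, hsk⟩ (fun j hj0 hjk hj => hgap j hj0 hjk hj.2)
    set K₁ := addNbrs (res H T) x ((fun i => w (s + i)) '' {i | i < n ∧ G.Adj x (w (s + i))})
    obtain ⟨L₂, hL₂, -⟩ := hL₁.addVertex hP₁ (x := y) (by
        rintro u (h | ⟨h, -⟩ | ⟨-, ⟨i, -, h⟩, -⟩)
        · exact hyT h.2.1
        · exact hne h.symm
        · exact hyw i h)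
      (X := insert 0 {i | ∃ j ≤ k, i = j + 1 ∧ G.Adj y (w (s + j))}) (Set.mem_insert _ _) (by
        rintro _ (rfl | ⟨j, hj, rfl, -⟩) <;> omega)
    refine HasDual.mono ⟨_, L₂, hL₂⟩ ?_
    set K₂ := addNbrs K₁ y _
    have c1 : ∀ b, G.Adj x b → b ≠ y → K₂.Adj x b := by
      intro b hb hby
      obtain ⟨i₀, rfl⟩ := hnx b hb hby
      obtain ⟨i, hi, hi'⟩ := hw.exists_index s i₀
      exact Or.inl (Or.inr (Or.inl ⟨rfl, ⟨i, ⟨hi, by rwa [hi']⟩, hi'⟩, hb.ne'⟩))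
    have c2 : ∀ b, G.Adj y b → K₂.Adj y b := by
      intro b hb
      refine Or.inr (Or.inl ⟨rfl, ?_, hb.ne'⟩)
      by_cases hbx : b = x
      · exact ⟨0, Set.mem_insert _ _, by simp [hbx]⟩
      obtain ⟨i₀, rfl⟩ := hny b hb hbx
      obtain ⟨i, hi, hi'⟩ := hw.exists_index s i₀
      have hy' : G.Adj y (w (s + i)) := by rwa [hi']
      have hik := hYk i hi hy'
      refine ⟨i + 1, Or.inr ⟨i, hik, rfl, hy'⟩, ?_⟩
      have : ¬ (i + 1 = 0 ∨ i + 1 = k + 2) := by omega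
      simpa [this, show i ≠ k + 1 by omega] using hi'
    intro a b hab
    by_cases hay : a = y
    · rw [hay] at hab ⊢; exact c2 b hab
    by_cases hby : b = y
    · rw [hby] at hab ⊢; exact (c2 a hab.symm).symm
    by_cases hax : a = x
    · rw [hax] at hab ⊢; exact c1 b hab hby
    by_cases hbx : b = x
    · rw [hbx] at hab ⊢; exact (c1 a hab.symm hay).symm
    have haT := (hmemT a).2 ⟨hGS a b hab, hax, hay⟩
    have hbT := (hmemT b).2 ⟨hGS b a hab.symm, hbx, hby⟩
    exact Or.inl (Or.inl ⟨hTH a haT b hbT hab, haT, hbT⟩)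
  · exact (hG.not_alternating (w := fun i => w (s + i)) (fun i => hwG (s + i)) hP.inj hP.closed
      hxw hyw hxy h0 h1 h2 h4 a0 a1 a2 a3).elim
  · exact (hG.not_three_common (w := fun i => w (s + i)) (fun i => hwG (s + i)) hP.inj hP.closed
      hxw hyw hxy h0 h1 h2 a0 b0 a1 b1 a2 b2).elim

end ThreeConnected

/-! ### Planar graphs have algebraic duals -/

section Planarity

/-- One half of a separation of order two: contracting the other half to `u` produces the
virtual edge `uv`. -/
theorem contract_half {G : SimpleGraph V} {S A B : Set V} {u v : V} (hu : u ∈ S)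
    (huv : u ≠ v) (hcu : ConnOn G (S \ {u})) (hcv : ConnOn G (S \ {v})) (hA : A.Nonempty)
    (hB : B.Nonempty) (hdis : Disjoint A B) (hAB : A ∪ B = S \ {u, v})
    (hno : ∀ a ∈ A, ∀ b ∈ B, ¬ G.Adj a b) :
    ConnOn G (insert u B) ∧ ∃ b ∈ B, G.Adj b v := by
  have hmem : ∀ a, a ∈ A ∨ a ∈ B ↔ a ∈ S ∧ a ≠ u ∧ a ≠ v := by
    intro a
    have : a ∈ A ∪ B ↔ a ∈ S \ {u, v} := by rw [hAB]
    simpa using this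
  obtain ⟨a₀, ha₀⟩ := hA
  have ha₀' := (hmem a₀).1 (Or.inl ha₀)
  have ha₀B := Set.disjoint_left.1 hdis ha₀
  constructor
  · refine ⟨⟨u, Set.mem_insert _ _⟩, fun C hC hne hcl => ?_⟩
    have huC : u ∈ C := by
      by_contra huC
      have hCB : C ⊆ B := fun c hc => (hC hc).resolve_left (fun h => huC (h ▸ hc))
      have := hcv.2 C (fun c hc => ⟨((hmem c).1 (Or.inr (hCB hc))).1,
        ((hmem c).1 (Or.inr (hCB hc))).2.2⟩) hne (fun c hc d hd hcd => by
          by_cases hdu : d = u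
          · exact hcl c hc d (hdu ▸ Set.mem_insert _ _) hcd
          rcases (hmem d).2 ⟨hd.1, hdu, hd.2⟩ with h | h
          · exact absurd hcd.symm (hno d h c (hCB hc))
          · exact hcl c hc d (Set.mem_insert_of_mem _ h) hcd)
      exact huC (this ⟨hu, huv⟩)
    have := hcv.2 (C ∪ A) (by
        rintro c (hc | hc)
        · rcases hC hc with rfl | h
          · exact ⟨hu, huv⟩
          · exact ⟨((hmem c).1 (Or.inr h)).1, ((hmem c).1 (Or.inr h)).2.2⟩
        · exact ⟨((hmem c).1 (Or.inl hc)).1, ((hmem c).1 (Or.inl hc)).2.2⟩)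
      ⟨u, Or.inl huC⟩ (fun c hc d hd hcd => by
        by_cases hdu : d = u
        · exact Or.inl (hdu ▸ huC)
        rcases (hmem d).2 ⟨hd.1, hdu, hd.2⟩ with h | h
        · exact Or.inr h
        · rcases hc with hc | hc
          · exact Or.inl (hcl c hc d (Set.mem_insert_of_mem _ h) hcd)
          · exact absurd hcd (hno c hc d h))
    refine Set.insert_subset huC fun b hb => ?_
    have hb' := (hmem b).1 (Or.inr hb)
    exact (this ⟨hb'.1, hb'.2.2⟩).resolve_right (fun h => Set.disjoint_left.1 hdis h hb)
  · obtain ⟨b, hb, c, hc, hcB, hbc⟩ := hcu.exists_adj (A := B)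
      (fun b hb => ⟨((hmem b).1 (Or.inr hb)).1, ((hmem b).1 (Or.inr hb)).2.1⟩) hB (c := a₀)
      ⟨ha₀'.1, ha₀'.2.1⟩ ha₀B
    by_cases hcv' : c = v
    · exact ⟨b, hb, hcv' ▸ hbc⟩
    · rcases (hmem c).2 ⟨hc.1, hc.2, hcv'⟩ with h | h
      · exact absurd hbc.symm (hno c h b hb)
      · exact absurd h hcB

variable [Fintype V]

theorem hasDual_of_planar_aux (m : ℕ) : ∀ (G : SimpleGraph V) (S : Set V), S.ncard = m →
    (∀ a b, G.Adj a b → a ∈ S) → Planar G → HasDual G := by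
  induction m using Nat.strong_induction_on with
  | _ m ihm =>
  intro G S hm hGS hG
  have ih : ∀ (H : SimpleGraph V) (S' : Set V), S'.ncard < S.ncard →
      (∀ a b, H.Adj a b → a ∈ S') → Planar H → HasDual H := fun H S' h =>
    ihm _ (hm ▸ h) H S' rfl
  rcases Nat.lt_or_ge S.ncard 5 with hS | hS
  · exact hasDual_of_ncard_le_four (by omega) hGS
  by_cases h1 : ∀ u, ConnOn G (S \ {u})
  swap
  · -- a separation of order at most one
    push Not at h1
    obtain ⟨u, hcon⟩ := h1
    obtain ⟨e, he, hu, -⟩ := exists_notMem_four hS u u u u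
    have hne : (S \ {u}).Nonempty := ⟨e, he, by simpa using hu⟩
    obtain ⟨A, B, ⟨a, ha⟩, ⟨b, hb⟩, hdis, hAB, hno⟩ := exists_split hne hcon
    have hA : A ⊆ S \ {u} := hAB ▸ Set.subset_union_left
    have hB : B ⊆ S \ {u} := hAB ▸ Set.subset_union_right
    have hlt : ∀ (C : Set V) (d : V), d ∈ S \ {u} → d ∉ C →
        (S ∩ insert u C).ncard < S.ncard := by
      intro C d hd hdC
      refine Set.ncard_lt_ncard ⟨Set.inter_subset_left, fun h => ?_⟩
      rcases (h hd.1).2 with h | h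
      · exact hd.2 h
      · exact hdC h
    have d₁ : HasDual (res G (insert u A)) := ih _ (S ∩ insert u A)
      (hlt A b (hB hb) (Set.disjoint_right.1 hdis hb))
      (fun a b h => ⟨hGS a b h.1, h.2.1⟩) (hG.res _)
    have d₂ : HasDual (res G (insert u B)) := ih _ (S ∩ insert u B)
      (hlt B a (hA ha) (Set.disjoint_left.1 hdis ha))
      (fun a b h => ⟨hGS a b h.1, h.2.1⟩) (hG.res _)
    refine (d₁.glue_one d₂ u fun w hw => ?_).mono fun p q hpq => ?_
    · by_cases hwA : w ∈ A
      · refine Or.inr fun b hb => ?_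
        rcases hb.2.1 with h | h
        · exact hw h
        · exact Set.disjoint_left.1 hdis hwA h
      · refine Or.inl fun b hb => ?_
        rcases hb.2.1 with h | h
        · exact hw h
        · exact hwA h
    · have hmem : ∀ p q, G.Adj p q → p = u ∨ p ∈ A ∨ p ∈ B := by
        intro p q h
        by_cases hp : p = u
        · exact Or.inl hp
        · have : p ∈ A ∪ B := by rw [hAB]; exact ⟨hGS p q h, hp⟩
          exact Or.inr this
      rcases hmem p q hpq with h | h | h <;> rcases hmem q p hpq.symm with h' | h' | h'
      · exact absurd (h.trans h'.symm) hpq.ne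
      · exact Or.inl ⟨hpq, Or.inl h, Or.inr h'⟩
      · exact Or.inr ⟨hpq, Or.inl h, Or.inr h'⟩
      · exact Or.inl ⟨hpq, Or.inr h, Or.inl h'⟩
      · exact Or.inl ⟨hpq, Or.inr h, Or.inr h'⟩
      · exact absurd hpq (hno p h q h')
      · exact Or.inr ⟨hpq, Or.inr h, Or.inl h'⟩
      · exact absurd hpq.symm (hno q h' p h)
      · exact Or.inr ⟨hpq, Or.inr h, Or.inr h'⟩
  by_cases h3 : ∀ u v, ConnOn G (S \ {u, v})
  · exact hasDual_of_three_connected hGS hG hS h3 ih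
  -- a separation of order two
  push Not at h3
  obtain ⟨u, v, hcon⟩ := h3
  have huv : u ≠ v := by
    rintro rfl
    exact hcon (by simpa using h1 u)
  have hu : u ∈ S := by
    by_contra h
    refine hcon ?_
    rw [Set.insert_eq, ← Set.sdiff_sdiff, Set.sdiff_singleton_eq_self h]
    exact h1 v
  have hv : v ∈ S := by
    by_contra h
    refine hcon ?_
    rw [Set.pair_comm, Set.insert_eq, ← Set.sdiff_sdiff, Set.sdiff_singleton_eq_self h]
    exact h1 u
  obtain ⟨e, he, heu, hev, -⟩ := exists_notMem_four hS u v v v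
  have hne : (S \ {u, v}).Nonempty := ⟨e, he, by simp [heu, hev]⟩
  obtain ⟨A, B, hAne, hBne, hdis, hAB, hno⟩ := exists_split hne hcon
  have hno' : ∀ b ∈ B, ∀ a ∈ A, ¬ G.Adj b a := fun b hb a ha h => hno a ha b hb h.symm
  obtain ⟨cB, b, hb, hbv⟩ := contract_half hu huv (h1 u) (h1 v) hAne hBne hdis hAB hno
  obtain ⟨cA, a, ha, hav⟩ := contract_half hu huv (h1 u) (h1 v) hBne hAne hdis.symm
    (Set.union_comm A B ▸ hAB) hno'
  have hmem : ∀ a, a ∈ A ∨ a ∈ B ↔ a ∈ S ∧ a ≠ u ∧ a ≠ v := by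
    intro a
    have : a ∈ A ∪ B ↔ a ∈ S \ {u, v} := by rw [hAB]
    simpa using this
  have half : ∀ C D : Set V, (∀ c ∈ C, c ∈ S ∧ c ≠ u ∧ c ≠ v) →
      (∀ d ∈ D, d ∈ S ∧ d ≠ u ∧ d ≠ v) → Disjoint C D → ConnOn G (insert u D) →
      (∃ d ∈ D, G.Adj d v) →
      HasDual (contract G (insert u D) (insert u (insert v C)) u) ∧
        (contract G (insert u D) (insert u (insert v C)) u).Adj u v := by
    rintro C D hC hD hCD hc ⟨d, hd, hdv⟩
    refine ⟨ih _ (insert u (insert v C)) (Set.ncard_lt_ncard ⟨?_, fun h => ?_⟩)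
      (fun a b h => h.2.1) (hG.contract (Set.mem_insert _ _) hc ?_), huv, by simp, by simp,
      Or.inr (Or.inl ⟨rfl, d, Or.inr hd, hdv⟩)⟩
    · rintro c (rfl | rfl | hc)
      · exact hu
      · exact hv
      · exact (hC c hc).1
    · rcases h (hD d hd).1 with h | h | h
      · exact (hD d hd).2.1 h
      · exact (hD d hd).2.2 h
      · exact Set.disjoint_left.1 hCD h hd
    · rintro m (h | hm) (h' | h' | h')
      · exact h
      · exact h
      · exact h
      · exact h'
      · exact absurd h' (hD m hm).2.2
      · exact absurd hm (Set.disjoint_left.1 hCD h')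
  have hA : ∀ c ∈ A, c ∈ S ∧ c ≠ u ∧ c ≠ v := fun c hc => (hmem c).1 (Or.inl hc)
  have hB : ∀ c ∈ B, c ∈ S ∧ c ≠ u ∧ c ≠ v := fun c hc => (hmem c).1 (Or.inr hc)
  obtain ⟨d₁, e₁⟩ := half A B hA hB hdis cB ⟨b, hb, hbv⟩
  obtain ⟨d₂, e₂⟩ := half B A hB hA hdis.symm cA ⟨a, ha, hav⟩
  refine (d₁.glue_two d₂ e₁ e₂ fun w hwu hwv => ?_).mono fun p q hpq => ?_
  · by_cases hwA : w ∈ A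
    · refine Or.inr fun b hb => ?_
      rcases hb.2.1 with h | h | h
      · exact hwu h
      · exact hwv h
      · exact Set.disjoint_left.1 hdis hwA h
    · refine Or.inl fun b hb => ?_
      rcases hb.2.1 with h | h | h
      · exact hwu h
      · exact hwv h
      · exact hwA h
  · have hcase : ∀ p, p ∈ S → (p = u ∨ p = v) ∨ p ∈ A ∨ p ∈ B := by
      intro p hp
      by_cases h : p = u ∨ p = v
      · exact Or.inl h
      · exact Or.inr ((hmem p).2 ⟨hp, not_or.1 h⟩)
    have base : ∀ (C : Set V) p, (p = u ∨ p = v) → p ∈ insert u (insert v C) := by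
      rintro C p (rfl | rfl) <;> simp
    have up : ∀ (C : Set V) p, p ∈ C → p ∈ insert u (insert v C) :=
      fun C p h => Or.inr (Or.inr h)
    rcases hcase p (hGS p q hpq) with h | h | h <;> rcases hcase q (hGS q p hpq.symm) with h' | h' | h'
    · exact Or.inl ⟨hpq.ne, base _ _ h, base _ _ h', Or.inl hpq⟩
    · exact Or.inl ⟨hpq.ne, base _ _ h, up _ _ h', Or.inl hpq⟩
    · exact Or.inr ⟨hpq.ne, base _ _ h, up _ _ h', Or.inl hpq⟩
    · exact Or.inl ⟨hpq.ne, up _ _ h, base _ _ h', Or.inl hpq⟩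
    · exact Or.inl ⟨hpq.ne, up _ _ h, up _ _ h', Or.inl hpq⟩
    · exact absurd hpq (hno p h q h')
    · exact Or.inr ⟨hpq.ne, up _ _ h, base _ _ h', Or.inl hpq⟩
    · exact absurd hpq.symm (hno q h' p h)
    · exact Or.inr ⟨hpq.ne, up _ _ h, up _ _ h', Or.inl hpq⟩

/-- Every finite planar graph has an algebraic dual. -/
theorem Planar.hasDual {G : SimpleGraph V} (hG : Planar G) : HasDual G :=
  hasDual_of_planar_aux _ G Set.univ rfl (fun _ _ _ => Set.mem_univ _) hG

end Planarity

/-! ### Duals of bipartite multigraphs -/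

section MultiDual

open scoped Classical

/-- A numbering of the fibres of `π`: `ρ` maps the fibre over `p` bijectively to
`{0, …, N p - 1}`. -/
theorem exists_rank {β P : Type*} [Fintype β] (π : β → P) :
    ∃ (N : P → ℕ) (ρ : β → ℕ), (∀ e, ρ e < N (π e)) ∧
      (∀ e e', π e = π e' → ρ e = ρ e' → e = e') ∧
      ∀ p (g : ℕ → ℤ), ∑ e with π e = p, g (ρ e) = ∑ k ∈ Finset.range (N p), g k := by
  let ε : ∀ p, {e // π e = p} ≃ Fin (Fintype.card {e // π e = p}) := fun p => Fintype.equivFin _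
  have key : ∀ p (e : β) (h : π e = p), (ε (π e) ⟨e, rfl⟩ : ℕ) = ε p ⟨e, h⟩ := by
    rintro p e rfl; rfl
  refine ⟨fun p => Fintype.card {e // π e = p}, fun e => ε (π e) ⟨e, rfl⟩,
    fun e => (ε (π e) ⟨e, rfl⟩).2, fun e e' h he => ?_, fun p g => ?_⟩
  · replace he : (ε (π e) ⟨e, rfl⟩ : ℕ) = ε (π e') ⟨e', rfl⟩ := he
    rw [key _ e h] at he
    have := (ε (π e')).injective (Fin.ext he)
    simpa using this
  · rw [Finset.sum_subtype (p := fun e => π e = p) (F := inferInstance) _ (by simp),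
      ← Fin.sum_univ_eq_sum_range, ← Equiv.sum_comp (ε p)]
    exact Finset.sum_congr rfl fun e _ => congrArg g (key p e.1 e.2)

/-- A bipartition directs every edge. -/
theorem exists_ends {α β : Type} (G : Multigraph α β) (C : G.toSimple.Coloring (Fin 2)) (e : β) :
    ∃ a b, G.ends e = s(a, b) ∧ C a = 0 ∧ C b = 1 := by
  obtain ⟨a, b, hab⟩ : ∃ a b, G.ends e = s(a, b) := by
    induction h : G.ends e with
    | _ a b => exact ⟨a, b, rfl⟩
  have hadj : G.toSimple.Adj a b := by
    rw [Multigraph.toSimple, SimpleGraph.fromEdgeSet_adj]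
    refine ⟨⟨e, hab⟩, ?_⟩
    rintro rfl
    exact G.not_isDiag e (by rw [hab]; rfl)
  have hC := C.valid hadj
  have h01 : (C a = 0 ∧ C b = 1) ∨ (C b = 0 ∧ C a = 1) := by
    revert hC
    generalize C a = p
    generalize C b = q
    revert p q
    decide
  rcases h01 with h | h
  · exact ⟨a, b, hab, h⟩
  · exact ⟨b, a, by rw [hab, Sym2.eq_swap], h⟩

variable {α β : Type} [Fintype α] [Fintype β]

/-- The edges of a bipartite multigraph `G` directed from one colour class to the other have
faces `l e` and `r e` on their sides, such that the edge functions with zero sum at every vertex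
are exactly the differences of potentials on the faces. Parallel edges are separated by digons:
the faces of `G` are those of the underlying simple graph together with one face between any two
consecutive parallel edges. -/
theorem exists_multi_dual (G : Multigraph α β) (hd : HasDual G.toSimple)
    (hbip : G.toSimple.Colorable 2) :
    ∃ (Φ : Type) (_ : Fintype Φ) (l r : β → Φ),
      (∀ (h : Φ → ℤ) x, ∑ e with x ∈ G.ends e, (h (l e) - h (r e)) = 0) ∧
      ∀ c : β → ℤ, (∀ x, ∑ e with x ∈ G.ends e, c e = 0) →
        ∃ h : Φ → ℤ, ∀ e, c e = h (l e) - h (r e) := by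
  suffices hmain : ∃ (Φ : Type) (l r : β → Φ),
      (∀ (h : Φ → ℤ) x, ∑ e with x ∈ G.ends e, (h (l e) - h (r e)) = 0) ∧
      ∀ c : β → ℤ, (∀ x, ∑ e with x ∈ G.ends e, c e = 0) →
        ∃ h : Φ → ℤ, ∀ e, c e = h (l e) - h (r e) by
    obtain ⟨Φ, l, r, h1, h2⟩ := hmain
    -- discard the faces incident with no edge
    let l' : β → ↥(Set.range l ∪ Set.range r) := fun e => ⟨l e, Or.inl ⟨e, rfl⟩⟩
    let r' : β → ↥(Set.range l ∪ Set.range r) := fun e => ⟨r e, Or.inr ⟨e, rfl⟩⟩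
    refine ⟨_, Fintype.ofFinite _, l', r', fun h x => ?_, fun c hc => ?_⟩
    · have := h1 (fun φ => if hφ : φ ∈ Set.range l ∪ Set.range r then h ⟨φ, hφ⟩ else 0) x
      refine Eq.trans (Finset.sum_congr rfl fun e _ => ?_) this
      have hl : l e ∈ Set.range l ∪ Set.range r := Or.inl ⟨e, rfl⟩
      have hr : r e ∈ Set.range l ∪ Set.range r := Or.inr ⟨e, rfl⟩
      rw [dif_pos hl, dif_pos hr]
    · obtain ⟨h, hh⟩ := h2 c hc
      exact ⟨fun φ => h φ.1, hh⟩
  obtain ⟨Φ, L, hL⟩ := hd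
  obtain ⟨C⟩ := hbip
  choose u v huv hu hv using exists_ends G C
  have hadj : ∀ e, G.toSimple.Adj (u e) (v e) := by
    intro e
    rw [Multigraph.toSimple, SimpleGraph.fromEdgeSet_adj]
    refine ⟨⟨e, huv e⟩, fun h => ?_⟩
    have h1 := hv e
    rw [← h, hu e] at h1
    exact absurd h1 (by decide)
  obtain ⟨N, ρ, hρN, hρinj, hρsum⟩ := exists_rank (fun e => (u e, v e))
  have hN : ∀ a b, N (a, b) ≠ 0 → ∃ e, u e = a ∧ v e = b := by
    intro a b h
    by_contra hcon
    push Not at hcon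
    have h1 := hρsum (a, b) (fun _ => 1)
    rw [Finset.sum_eq_zero] at h1
    · simp at h1
      exact h (by exact_mod_cast h1.symm)
    · intro e he
      simp only [Finset.mem_filter, Finset.mem_univ, true_and, Prod.mk.injEq] at he
      exact absurd he.2 (hcon e he.1)
  have hN' : ∀ e, N (u e, v e) ≠ 0 := fun e h => by
    have := hρN e
    omega
  have hedge : ∀ a b, G.toSimple.Adj a b → C a = 0 → ∃ e, u e = a ∧ v e = b := by
    intro a b hab hCa
    obtain ⟨⟨e, he⟩, -⟩ := (SimpleGraph.fromEdgeSet_adj _).1 hab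
    rw [huv e, Sym2.eq_iff] at he
    rcases he with h | ⟨h1, h2⟩
    · exact ⟨e, h⟩
    · have := hv e
      rw [h2, hCa] at this
      exact absurd this (by decide)
  have hC01 : ∀ a, C a = 0 ∨ C a = 1 := by
    intro a
    generalize C a = p
    revert p
    decide
  -- sums over bundles of parallel edges, and their relation to sums at a vertex
  let s : (β → ℤ) → α → α → ℤ := fun d a b => ∑ e with (u e, v e) = (a, b), d e
  have hs0 : ∀ d a b, (∀ e, ¬ (u e = a ∧ v e = b)) → s d a b = 0 := by
    intro d a b h
    refine Finset.sum_eq_zero fun e he => ?_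
    simp only [Finset.mem_filter, Finset.mem_univ, true_and, Prod.mk.injEq] at he
    exact absurd he (h e)
  have hsrev : ∀ d a b, C a = 0 → s d b a = 0 := by
    intro d a b h
    refine hs0 d b a fun e he => ?_
    have := hv e
    rw [he.2, h] at this
    exact absurd this (by decide)
  have hsum0 : ∀ d x, C x = 0 → ∑ b, s d x b = ∑ e with x ∈ G.ends e, d e := by
    intro d x hx
    have h1 : ∀ b, s d x b = ∑ e with x ∈ G.ends e, if v e = b then d e else 0 := by
      intro b
      rw [← Finset.sum_filter, Finset.filter_filter]
      refine Finset.sum_congr (Finset.filter_congr fun e _ => ?_) fun _ _ => rfl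
      rw [huv e, Sym2.mem_iff, Prod.mk.injEq, eq_comm (a := x) (b := u e)]
      have : x ≠ v e := by
        rintro rfl
        rw [hv e] at hx
        exact absurd hx (by decide)
      tauto
    simp only [h1]
    rw [Finset.sum_comm]
    exact Finset.sum_congr rfl fun e _ => by simp
  have hsum1 : ∀ d x, C x = 1 → ∑ b, s d b x = ∑ e with x ∈ G.ends e, d e := by
    intro d x hx
    have h1 : ∀ b, s d b x = ∑ e with x ∈ G.ends e, if u e = b then d e else 0 := by
      intro b
      rw [← Finset.sum_filter, Finset.filter_filter]
      refine Finset.sum_congr (Finset.filter_congr fun e _ => ?_) fun _ _ => rfl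
      rw [huv e, Sym2.mem_iff, Prod.mk.injEq, eq_comm (a := x) (b := v e)]
      have : x ≠ u e := by
        rintro rfl
        rw [hu e] at hx
        exact absurd hx (by decide)
      tauto
    simp only [h1]
    rw [Finset.sum_comm]
    exact Finset.sum_congr rfl fun e _ => by simp
  -- the `k`-th face of the bundle of edges from `a` to `b`
  let F : α × α → ℕ → Φ ⊕ ((α × α) × ℕ) := fun p k =>
    if k = 0 then Sum.inl (L p.1 p.2) else if k = N p then Sum.inl (L p.2 p.1) else Sum.inr (p, k)
  refine ⟨_, fun e => F (u e, v e) (ρ e), fun e => F (u e, v e) (ρ e + 1), fun h => ?_,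
    fun c hc => ?_⟩
  · set d : β → ℤ := fun e => h (F (u e, v e) (ρ e)) - h (F (u e, v e) (ρ e + 1)) with hd
    have hsd : ∀ a b, C a = 0 → s d a b = pot G.toSimple L (fun φ => h (Sum.inl φ)) a b := by
      intro a b hCa
      by_cases hab : G.toSimple.Adj a b
      · obtain ⟨e, rfl, rfl⟩ := hedge a b hab hCa
        have h1 : s d (u e) (v e) = ∑ k ∈ Finset.range (N (u e, v e)),
            (h (F (u e, v e) k) - h (F (u e, v e) (k + 1))) := by
          rw [← hρsum (u e, v e)]
          refine Finset.sum_congr (by ext; simp) fun e' he' => ?_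
          simp only [Finset.mem_filter, Finset.mem_univ, true_and] at he'
          simp only [hd, he']
        rw [h1, Finset.sum_range_sub', pot, if_pos hab]
        simp [F, hN' e]
      · rw [pot, if_neg hab]
        refine hs0 d a b fun e he => hab ?_
        rw [← he.1, ← he.2]
        exact hadj e
    intro x
    rcases hC01 x with hx | hx
    · rw [← hsum0 d x hx, Finset.sum_congr rfl fun b _ => hsd x b hx]
      exact hL.bal _ x
    · rw [← hsum1 d x hx]
      have : ∀ b, s d b x = - pot G.toSimple L (fun φ => h (Sum.inl φ)) x b := by
        intro b
        rw [← pot_anti]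
        rcases hC01 b with hb | hb
        · exact hsd b x hb
        · have hbx : ¬ G.toSimple.Adj b x := fun h => C.valid h (hb.trans hx.symm)
          rw [pot, if_neg hbx]
          refine hs0 d b x fun e he => hbx ?_
          rw [← he.1, ← he.2]
          exact hadj e
      rw [Finset.sum_congr rfl fun b _ => this b, Finset.sum_neg_distrib, hL.bal, neg_zero]
  · have hcirc : IsCirc G.toSimple (fun a b => s c a b - s c b a) := by
      refine ⟨fun a b => by ring, fun a b hab => ?_, fun x => ?_⟩
      · rw [hs0 c a b, hs0 c b a, sub_zero]
        · rintro e ⟨rfl, rfl⟩; exact hab (hadj e).symm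
        · rintro e ⟨rfl, rfl⟩; exact hab (hadj e)
      · rw [Finset.sum_sub_distrib]
        rcases hC01 x with hx | hx
        · rw [hsum0 c x hx, hc, Finset.sum_congr rfl fun b _ => hsrev c x b hx]
          simp
        · rw [hsum1 c x hx, hc, Finset.sum_eq_zero fun b _ => ?_, sub_zero]
          refine hs0 c x b ?_
          rintro e ⟨rfl, -⟩
          rw [hu e] at hx
          exact absurd hx (by decide)
    obtain ⟨g, hg⟩ := hL.exact _ hcirc
    let S : α × α → ℕ → ℤ := fun p k => ∑ e with (u e, v e) = p ∧ ρ e < k, c e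
    let h : Φ ⊕ ((α × α) × ℕ) → ℤ :=
      Sum.elim g (fun q => g (L q.1.1 q.1.2) - S q.1 q.2)
    have hF : ∀ e k, k ≤ N (u e, v e) → h (F (u e, v e) k) = g (L (u e) (v e)) - S (u e, v e) k := by
      intro e k hk
      by_cases h0 : k = 0
      · subst h0
        simp [F, h, S]
      by_cases h1 : k = N (u e, v e)
      · have h2 := congrFun (congrFun hg (u e)) (v e)
        simp only [hsrev c (u e) (v e) (hu e), sub_zero, pot, if_pos (hadj e)] at h2
        have h3 : S (u e, v e) k = s c (u e) (v e) := by
          refine Finset.sum_congr (Finset.filter_congr fun e' _ => ?_) fun _ _ => rfl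
          refine and_iff_left_of_imp fun h' => ?_
          have := hρN e'
          rw [h1, ← h']; exact this
        rw [h3, h2]
        simp [F, h, h1, hN' e]
      · simp [F, h, h0, h1]
    refine ⟨h, fun e => ?_⟩
    have hlt : ρ e < N (u e, v e) := hρN e
    rw [hF e _ hlt.le, hF e _ hlt]
    have h4 : S (u e, v e) (ρ e + 1) = c e + S (u e, v e) (ρ e) := by
      have : (Finset.univ.filter fun e' => (u e', v e') = (u e, v e) ∧ ρ e' < ρ e + 1)
          = insert e (Finset.univ.filter fun e' => (u e', v e') = (u e, v e) ∧ ρ e' < ρ e) := by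
        ext e'
        simp only [Finset.mem_filter, Finset.mem_univ, true_and, Finset.mem_insert]
        constructor
        · rintro ⟨h1, h2⟩
          rcases Nat.lt_or_ge (ρ e') (ρ e) with h3 | h3
          · exact Or.inr ⟨h1, h3⟩
          · exact Or.inl (hρinj _ _ h1 (by omega))
        · rintro (rfl | ⟨h1, h2⟩)
          · exact ⟨rfl, by omega⟩
          · exact ⟨h1, by omega⟩
      simp only [S]
      rw [this, Finset.sum_insert (by simp)]
    rw [h4]; ring

end MultiDual

/-! ### Height functions of edge colorings -/

section Heights

open Multigraph

variable {β Φ : Type}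

/-- The height functions `H i` represent the coloring `f` with colors `1, …, t`: relative to the
fixed edge function `m`, the indicator function of the color class `i` is the difference of `H i`
across the edges. -/
def Rep (t : ℕ) (l r : β → Φ) (m : β → ℤ) (f : β → ℕ) (H : ℕ → Φ → ℤ) : Prop :=
  (∀ e, f e ∈ Finset.Icc 1 t) ∧
    ∀ i ∈ Finset.Icc 1 t, ∀ e, (if f e = i then 1 else 0) = m e + H i (l e) - H i (r e)

/-- The height functions obtained from `H` by averaging those of the colors `i` and `j`, rounding
up for `i` and down for `j`. -/
def avg (H : ℕ → Φ → ℤ) (i j : ℕ) : ℕ → Φ → ℤ := fun k φ =>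
  if k = i then (H i φ + H j φ + 1) / 2 else if k = j then (H i φ + H j φ) / 2 else H k φ

/-- All height functions agree up to rounding, the smaller of two colors having the larger height. -/
def Balanced (t : ℕ) (H : ℕ → Φ → ℤ) : Prop :=
  ∀ φ, ∀ i ∈ Finset.Icc 1 t, ∀ j ∈ Finset.Icc 1 t, i < j →
    H i φ - H j φ = 0 ∨ H i φ - H j φ = 1

/-- Averaging the heights of two colors is a Kempe change: each edge has an indicator sum of `0`
or `1` over the two colors, and rounding splits this sum into indicators again. -/
theorem Rep.step {t : ℕ} {l r : β → Φ} {m : β → ℤ} {f : β → ℕ} {H : ℕ → Φ → ℤ}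
    (h : Rep t l r m f H) (hm : ∀ e, m e = 0 ∨ m e = 1) {i j : ℕ} (hi : i ∈ Finset.Icc 1 t)
    (hj : j ∈ Finset.Icc 1 t) (hij : i < j) :
    ∃ f', Rep t l r m f' (avg H i j) ∧ MDifferAtMost 2 f f' := by
  have hsplit : ∀ e, ∃ c : ℕ, c ∈ Finset.Icc 1 t ∧
      (∀ k, k ≠ i → k ≠ j → (c = k ↔ f e = k)) ∧
      (if c = i then (1 : ℤ) else 0) = m e + avg H i j i (l e) - avg H i j i (r e) ∧
      (if c = j then (1 : ℤ) else 0) = m e + avg H i j j (l e) - avg H i j j (r e) := by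
    intro e
    have h1 := h.2 i hi e
    have h2 := h.2 j hj e
    have h0 := h.1 e
    have h3 := hm e
    simp only [avg, if_true, if_neg hij.ne']
    by_cases hfi : f e = i
    · have hfj : f e ≠ j := by omega
      rw [if_pos hfi] at h1
      rw [if_neg hfj] at h2
      by_cases hc : m e + (H i (l e) + H j (l e) + 1) / 2 - (H i (r e) + H j (r e) + 1) / 2 = 1
      · refine ⟨i, hi, fun k hk hk' => by omega, ?_, ?_⟩
        · rw [if_pos rfl]; omega
        · rw [if_neg hij.ne]; omega
      · refine ⟨j, hj, fun k hk hk' => by omega, ?_, ?_⟩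
        · rw [if_neg hij.ne']; omega
        · rw [if_pos rfl]; omega
    · rw [if_neg hfi] at h1
      by_cases hfj : f e = j
      · rw [if_pos hfj] at h2
        by_cases hc : m e + (H i (l e) + H j (l e) + 1) / 2 - (H i (r e) + H j (r e) + 1) / 2 = 1
        · refine ⟨i, hi, fun k hk hk' => by omega, ?_, ?_⟩
          · rw [if_pos rfl]; omega
          · rw [if_neg hij.ne]; omega
        · refine ⟨j, hj, fun k hk hk' => by omega, ?_, ?_⟩
          · rw [if_neg hij.ne']; omega
          · rw [if_pos rfl]; omega
      · rw [if_neg hfj] at h2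
        refine ⟨f e, h0, fun k _ _ => Iff.rfl, ?_, ?_⟩
        · rw [if_neg hfi]; omega
        · rw [if_neg hfj]; omega
  choose f' hf't hf'k hf'i hf'j using hsplit
  refine ⟨f', ⟨hf't, fun k hk e => ?_⟩, ?_⟩
  · by_cases hki : k = i
    · subst hki; exact hf'i e
    by_cases hkj : k = j
    · subst hkj; exact hf'j e
    have := h.2 k hk e
    simp only [hf'k e k hki hkj, avg, if_neg hki, if_neg hkj]
    exact this
  · have hsub : {k : ℕ | mColorClass f k ≠ mColorClass f' k} ⊆ ({i, j} : Set ℕ) := by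
      intro k hk
      by_contra hcon
      simp only [Set.mem_insert_iff, Set.mem_singleton_iff, not_or] at hcon
      exact hk (Set.ext fun e => (hf'k e k hcon.1 hcon.2).symm)
    exact (Set.ncard_le_ncard hsub (Set.toFinite _)).trans (Set.ncard_insert_le _ _ |>.trans (by simp))

theorem sum_change {t : ℕ} {i j : ℕ} (hi : i ∈ Finset.Icc 1 t) (hj : j ∈ Finset.Icc 1 t)
    (hij : i ≠ j) (a b : ℕ → ℤ) (hab : ∀ k, k ≠ i → k ≠ j → a k = b k) :
    ∑ k ∈ Finset.Icc 1 t, a k - ∑ k ∈ Finset.Icc 1 t, b k = (a i - b i) + (a j - b j) := by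
  rw [← Finset.sum_sub_distrib]
  exact Finset.sum_eq_add_of_mem i j hi hj hij fun k _ hk => by rw [hab k hk.1 hk.2, sub_self]

theorem sum_avg {t : ℕ} {i j : ℕ} (hi : i ∈ Finset.Icc 1 t) (hj : j ∈ Finset.Icc 1 t)
    (hij : i < j) (H : ℕ → Φ → ℤ) (φ : Φ) :
    ∑ k ∈ Finset.Icc 1 t, avg H i j k φ = ∑ k ∈ Finset.Icc 1 t, H k φ := by
  have := sum_change hi hj hij.ne (fun k => avg H i j k φ) (fun k => H k φ)
    (fun k h1 h2 => by simp [avg, h1, h2])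
  simp only [avg, if_true, if_neg hij.ne'] at this ⊢
  omega

/-- Averaging two colors does not increase the energy `∑ (t H k + k) ^ 2`, and keeps it only if
the two heights already differ by rounding. The tie-break `k` makes rounding up for the smaller
color strictly favorable. -/
theorem energy_avg {t : ℕ} {i j : ℕ} (hi : i ∈ Finset.Icc 1 t) (hj : j ∈ Finset.Icc 1 t)
    (hij : i < j) (H : ℕ → Φ → ℤ) (φ : Φ) :
    (∑ k ∈ Finset.Icc 1 t, (t * avg H i j k φ + k) ^ 2
      ≤ ∑ k ∈ Finset.Icc 1 t, (t * H k φ + k) ^ 2) ∧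
    (¬ (H i φ - H j φ = 0 ∨ H i φ - H j φ = 1) →
      ∑ k ∈ Finset.Icc 1 t, (t * avg H i j k φ + k) ^ 2
        < ∑ k ∈ Finset.Icc 1 t, (t * H k φ + k) ^ 2) := by
  have h := sum_change hi hj hij.ne (fun k => (t * H k φ + k) ^ 2)
    (fun k => (t * avg H i j k φ + k) ^ 2) (fun k h1 h2 => by simp [avg, h1, h2])
  simp only [avg, if_true, if_neg hij.ne'] at h ⊢
  rw [Finset.mem_Icc] at hi hj
  obtain ⟨k, hk⟩ : ∃ k, H i φ = (H i φ + H j φ + 1) / 2 + k := ⟨_, (add_sub_cancel _ _).symm⟩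
  have hk' : H j φ = (H i φ + H j φ) / 2 - k := by omega
  have hd : (H i φ + H j φ + 1) / 2 - (H i φ + H j φ) / 2 = 0 ∨
    (H i φ + H j φ + 1) / 2 - (H i φ + H j φ) / 2 = 1 := by omega
  have hnot : ¬ (H i φ - H j φ = 0 ∨ H i φ - H j φ = 1) → k ≠ 0 := by omega
  generalize (H i φ + H j φ + 1) / 2 = a at *
  generalize (H i φ + H j φ) / 2 = b at *
  rw [hk, hk'] at h
  obtain ⟨q, rfl⟩ : ∃ q : ℕ, j = i + q := ⟨j - i, by omega⟩
  have hq1 : (1 : ℤ) ≤ q := by omega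
  have hqt : (q : ℤ) < t := by omega
  obtain ⟨δ, hδ⟩ : ∃ δ, a = b + δ := ⟨a - b, by ring⟩
  have hδ' : δ = 0 ∨ δ = 1 := by omega
  have key : (t * (a + k) + i : ℤ) ^ 2 - (t * a + i) ^ 2
      + ((t * (b - k) + (i + q : ℕ)) ^ 2 - (t * b + (i + q : ℕ)) ^ 2)
      = 2 * t * (k * (t * (δ + k) - q)) := by
    rw [hδ]; push_cast; ring
  have hpos : k ≠ 0 → 0 < k * (t * (δ + k) - q) := by
    intro hk0
    rcases lt_or_gt_of_ne hk0 with hneg | hpos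
    · refine mul_pos_of_neg_of_neg hneg ?_
      have : (t : ℤ) * (δ + k) ≤ 0 := mul_nonpos_of_nonneg_of_nonpos (by omega) (by omega)
      omega
    · refine mul_pos hpos ?_
      have : (t : ℤ) * 1 ≤ t * (δ + k) := mul_le_mul_of_nonneg_left (by omega) (by omega)
      omega
  rw [key] at h
  have hlt : k ≠ 0 → 0 < 2 * (t : ℤ) * (k * (t * (δ + k) - q)) := fun h0 =>
    mul_pos (by omega) (hpos h0)
  refine ⟨?_, fun hb => ?_⟩
  · by_cases h0 : k = 0
    · rw [h0] at h
      simp only [zero_mul, mul_zero] at h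
      linarith
    · linarith [hlt h0]
  · linarith [hlt (hnot hb)]

/-- One move of a Kempe sequence between colorings represented by heights. -/
def KMove (t : ℕ) (l r : β → Φ) (m : β → ℤ) (f f' : β → ℕ) : Prop :=
  (∃ H, Rep t l r m f H) ∧ (∃ H, Rep t l r m f' H) ∧ MDifferAtMost 2 f f'

/-- Averaging moves lead from every coloring to a balanced one with the same total heights. -/
theorem Rep.exists_balanced [Fintype Φ] {t : ℕ} {l r : β → Φ} {m : β → ℤ}
    (hm : ∀ e, m e = 0 ∨ m e = 1) : ∀ (n : ℕ) {f : β → ℕ} {H : ℕ → Φ → ℤ},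
    (∑ φ, ∑ k ∈ Finset.Icc 1 t, (t * H k φ + k : ℤ) ^ 2).toNat = n → Rep t l r m f H →
    ∃ f' H', Rep t l r m f' H' ∧ Balanced t H' ∧
      (∀ φ, ∑ k ∈ Finset.Icc 1 t, H' k φ = ∑ k ∈ Finset.Icc 1 t, H k φ) ∧
      Relation.ReflTransGen (KMove t l r m) f f' := by
  intro n
  induction n using Nat.strong_induction_on with
  | _ n ih =>
    intro f H hn h
    by_cases hb : Balanced t H
    · exact ⟨f, H, h, hb, fun _ => rfl, Relation.ReflTransGen.refl⟩
    · unfold Balanced at hb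
      push Not at hb
      obtain ⟨φ₀, i, hi, j, hj, hij, hne⟩ := hb
      obtain ⟨f₁, h₁, hd⟩ := h.step hm hi hj hij
      have hlt : ∑ φ, ∑ k ∈ Finset.Icc 1 t, (t * avg H i j k φ + k : ℤ) ^ 2
          < ∑ φ, ∑ k ∈ Finset.Icc 1 t, (t * H k φ + k : ℤ) ^ 2 :=
        Finset.sum_lt_sum (fun φ _ => (energy_avg hi hj hij H φ).1)
          ⟨φ₀, Finset.mem_univ _, (energy_avg hi hj hij H φ₀).2 (by tauto)⟩
      have h0 : 0 ≤ ∑ φ, ∑ k ∈ Finset.Icc 1 t, (t * avg H i j k φ + k : ℤ) ^ 2 :=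
        Finset.sum_nonneg fun _ _ => Finset.sum_nonneg fun _ _ => sq_nonneg _
      obtain ⟨f', H', h', hb', hs, hr⟩ := ih _ (by omega) rfl h₁
      exact ⟨f', H', h', hb', fun φ => (hs φ).trans (sum_avg hi hj hij H φ),
        Relation.ReflTransGen.head ⟨⟨H, h⟩, ⟨_, h₁⟩, hd⟩ hr⟩

/-- Balanced heights are determined by their sums. -/
theorem Balanced.unique {t : ℕ} {H H' : ℕ → Φ → ℤ} (hH : Balanced t H) (hH' : Balanced t H')
    (hs : ∀ φ, ∑ k ∈ Finset.Icc 1 t, H k φ = ∑ k ∈ Finset.Icc 1 t, H' k φ) :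
    ∀ i ∈ Finset.Icc 1 t, ∀ φ, H i φ = H' i φ := by
  have key : ∀ {H H' : ℕ → Φ → ℤ}, Balanced t H → Balanced t H' →
      (∀ φ, ∑ k ∈ Finset.Icc 1 t, H k φ = ∑ k ∈ Finset.Icc 1 t, H' k φ) →
      ∀ i ∈ Finset.Icc 1 t, ∀ φ, H i φ ≤ H' i φ := by
    intro H H' hH hH' hs i hi φ
    by_contra! hlt
    obtain ⟨j, hj, hjlt⟩ : ∃ j ∈ Finset.Icc 1 t, H j φ < H' j φ := by
      by_contra! hcon
      exact absurd (hs φ) (Finset.sum_lt_sum hcon ⟨i, hi, hlt⟩).ne'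
    rcases lt_trichotomy i j with h | h | h
    · have h1 := hH φ i hi j hj h
      have h2 := hH' φ i hi j hj h
      omega
    · subst h; omega
    · have h1 := hH φ j hj i hi h
      have h2 := hH' φ j hj i hi h
      omega
  exact fun i hi φ => le_antisymm (key hH hH' hs i hi φ)
    (key hH' hH (fun φ => (hs φ).symm) i hi φ)

/-- Heights of two colorings can be chosen with equal sums, so averaging takes both colorings to
the same balanced coloring. -/
theorem Rep.connected [Fintype Φ] {t : ℕ} (ht : 1 ≤ t) {l r : β → Φ} {m : β → ℤ}
    (hm : ∀ e, m e = 0 ∨ m e = 1) {f g : β → ℕ} {H K : ℕ → Φ → ℤ}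
    (hf : Rep t l r m f H) (hg : Rep t l r m g K) :
    Relation.ReflTransGen (KMove t l r m) f g := by
  have h1t : (1 : ℕ) ∈ Finset.Icc 1 t := Finset.mem_Icc.2 ⟨le_rfl, ht⟩
  have htot : ∀ {f : β → ℕ} {H : ℕ → Φ → ℤ}, Rep t l r m f H → ∀ e,
      1 = t * m e + ∑ k ∈ Finset.Icc 1 t, H k (l e) - ∑ k ∈ Finset.Icc 1 t, H k (r e) := by
    intro f H h e
    have h1 := Finset.sum_congr rfl fun i hi => h.2 i hi e
    rw [Finset.sum_ite_eq, if_pos (h.1 e), Finset.sum_sub_distrib, Finset.sum_add_distrib,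
      Finset.sum_const, Nat.card_Icc, nsmul_eq_mul] at h1
    simpa using h1
  set D : Φ → ℤ := fun φ => ∑ k ∈ Finset.Icc 1 t, H k φ - ∑ k ∈ Finset.Icc 1 t, K k φ with hD
  set K' : ℕ → Φ → ℤ := fun k φ => if k = 1 then K 1 φ + D φ else K k φ with hK'
  have hDlr : ∀ e, D (l e) = D (r e) := by
    intro e
    have h1 := htot hf e
    have h2 := htot hg e
    simp only [hD]
    linarith
  have hg' : Rep t l r m g K' := by
    refine ⟨hg.1, fun i hi e => ?_⟩
    rw [hg.2 i hi e]
    by_cases h1 : i = 1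
    · subst h1
      simp only [hK', if_true, hDlr e]
      ring
    · simp only [hK', if_neg h1]
  have hsum : ∀ φ, ∑ k ∈ Finset.Icc 1 t, K' k φ = ∑ k ∈ Finset.Icc 1 t, H k φ := by
    intro φ
    have h1 : ∀ k, K' k φ = K k φ + if k = 1 then D φ else 0 := by
      intro k
      by_cases h1 : k = 1
      · subst h1; simp [hK']
      · simp [hK', h1]
    rw [Finset.sum_congr rfl fun k _ => h1 k, Finset.sum_add_distrib, Finset.sum_ite_eq',
      if_pos h1t, hD]
    ring
  obtain ⟨f₁, H₁, hf₁, hb₁, hs₁, hr₁⟩ := Rep.exists_balanced hm _ rfl hf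
  obtain ⟨g₁, K₁, hg₁, hc₁, ht₁, hq₁⟩ := Rep.exists_balanced hm _ rfl hg'
  have hHK := hb₁.unique hc₁ fun φ => by rw [hs₁, ht₁, hsum]
  have hfg : f₁ = g₁ := by
    funext e
    have h1 := hf₁.2 (f₁ e) (hf₁.1 e) e
    have h2 := hg₁.2 (f₁ e) (hf₁.1 e) e
    rw [hHK _ (hf₁.1 e), hHK _ (hf₁.1 e), ← h2, if_pos rfl] at h1
    by_contra hne
    rw [if_neg (Ne.symm hne)] at h1
    exact one_ne_zero h1
  have hsymm : Std.Symm (KMove t l r m : (β → ℕ) → (β → ℕ) → Prop) := by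
    constructor
    rintro a b ⟨h1, h2, h3⟩
    refine ⟨h2, h1, ?_⟩
    unfold MDifferAtMost at h3 ⊢
    simpa only [ne_comm] using h3
  rw [← hfg] at hq₁
  exact hr₁.trans ((Relation.ReflTransGen.stdSymm (r := KMove t l r m)).symm _ _ hq₁)

end Heights

/-! ### Regular bipartite multigraphs: matchings and edge colorings -/

section Koenig

open scoped Classical

/-- Hall's theorem for the multigraph with edge set `E`, where `e` joins `u e` to `v e`: if it is
regular of positive degree, it has a perfect matching. -/
theorem exists_matching {A B β : Type*} [Fintype A] [Fintype B] (u : β → A) (v : β → B)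
    (E : Finset β) {d : ℕ} (hd : 0 < d) (hu : ∀ a, (E.filter fun e => u e = a).card = d)
    (hv : ∀ b, (E.filter fun e => v e = b).card = d) :
    ∃ ε : A → β, (∀ a, ε a ∈ E ∧ u (ε a) = a) ∧ Function.Bijective (fun a => v (ε a)) := by
  have hhall : ∀ s : Finset A,
      s.card ≤ (s.biUnion fun a => (E.filter fun e => u e = a).image v).card := by
    intro s
    set N := s.biUnion fun a => (E.filter fun e => u e = a).image v with hN
    have h1 : (E.filter fun e => u e ∈ s).card = d * s.card := by
      refine (Finset.card_eq_sum_card_fiberwise (f := u) (t := s)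
        fun e he => (Finset.mem_filter.1 he).2).trans ?_
      rw [Finset.sum_congr rfl fun a ha => ?_, Finset.sum_const, smul_eq_mul, mul_comm]
      rw [← hu a, Finset.filter_filter]
      exact congrArg _ (Finset.filter_congr fun e _ => and_iff_right_of_imp fun h => h ▸ ha)
    have h2 : (E.filter fun e => v e ∈ N).card = d * N.card := by
      refine (Finset.card_eq_sum_card_fiberwise (f := v) (t := N)
        fun e he => (Finset.mem_filter.1 he).2).trans ?_
      rw [Finset.sum_congr rfl fun a ha => ?_, Finset.sum_const, smul_eq_mul, mul_comm]
      rw [← hv a, Finset.filter_filter]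
      exact congrArg _ (Finset.filter_congr fun e _ => and_iff_right_of_imp fun h => h ▸ ha)
    have h3 : (E.filter fun e => u e ∈ s) ⊆ E.filter fun e => v e ∈ N := by
      intro e he
      rw [Finset.mem_filter] at he ⊢
      exact ⟨he.1, Finset.mem_biUnion.2 ⟨u e, he.2,
        Finset.mem_image_of_mem v (Finset.mem_filter.2 ⟨he.1, rfl⟩)⟩⟩
    have h4 := Finset.card_le_card h3
    rw [h1, h2] at h4
    exact Nat.le_of_mul_le_mul_left h4 hd
  obtain ⟨ι, hinj, hι⟩ := (Finset.all_card_le_biUnion_card_iff_exists_injective _).1 hhall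
  have hcard : Fintype.card A = Fintype.card B := by
    have h1 := Finset.card_eq_sum_card_fiberwise (f := u) (s := E) (t := Finset.univ)
      fun e _ => Finset.mem_coe.2 (Finset.mem_univ _)
    have h2 := Finset.card_eq_sum_card_fiberwise (f := v) (s := E) (t := Finset.univ)
      fun e _ => Finset.mem_coe.2 (Finset.mem_univ _)
    simp only [hu, Finset.sum_const, Finset.card_univ, smul_eq_mul] at h1
    simp only [hv, Finset.sum_const, Finset.card_univ, smul_eq_mul] at h2
    exact Nat.eq_of_mul_eq_mul_right hd (h1.symm.trans h2)
  have hex : ∀ a, ∃ e, (e ∈ E ∧ u e = a) ∧ v e = ι a := by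
    intro a
    obtain ⟨e, he, hev⟩ := Finset.mem_image.1 (hι a)
    exact ⟨e, Finset.mem_filter.1 he, hev⟩
  choose ε hε hεv using hex
  refine ⟨ε, hε, ?_⟩
  rw [show (fun a => v (ε a)) = ι from funext hεv]
  exact (Fintype.bijective_iff_injective_and_card ι).2 ⟨hinj, hcard⟩

/-- König's theorem for regular bipartite multigraphs, by removing perfect matchings. -/
theorem exists_edge_coloring {A B β : Type*} [Fintype A] [Fintype B] (u : β → A) (v : β → B) :
    ∀ (d : ℕ) (E : Finset β), (∀ a, (E.filter fun e => u e = a).card = d) →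
      (∀ b, (E.filter fun e => v e = b).card = d) →
      ∃ c : β → ℕ, (∀ e ∈ E, c e ∈ Finset.Icc 1 d) ∧
        ∀ e ∈ E, ∀ e' ∈ E, e ≠ e' → (u e = u e' ∨ v e = v e') → c e ≠ c e' := by
  intro d
  induction d with
  | zero =>
    intro E hu _
    have hE : ∀ e, e ∉ E := fun e he => by
      have := Finset.card_eq_zero.1 (hu (u e))
      exact Finset.notMem_empty e (this ▸ Finset.mem_filter.2 ⟨he, rfl⟩)
    exact ⟨fun _ => 0, fun e he => absurd he (hE e), fun e he => absurd he (hE e)⟩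
  | succ d ih =>
    intro E hu hv
    obtain ⟨ε, hε, hbij⟩ := exists_matching u v E d.succ_pos hu hv
    have hinj : Function.Injective ε := fun a a' h => by rw [← (hε a).2, h, (hε a').2]
    set M := Finset.univ.image ε with hM
    have hMu : ∀ e ∈ M, ∀ e' ∈ M, (u e = u e' ∨ v e = v e') → e = e' := by
      intro e he e' he' h
      obtain ⟨a, -, rfl⟩ := Finset.mem_image.1 he
      obtain ⟨a', -, rfl⟩ := Finset.mem_image.1 he'
      rcases h with h | h
      · rw [(hε a).2, (hε a').2] at h
        rw [h]
      · rw [hbij.1 h]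
    have hMa : ∀ a, ((E \ M).filter fun e => u e = a).card = d := by
      intro a
      have h1 : ((E \ M).filter fun e => u e = a) = (E.filter fun e => u e = a).erase (ε a) := by
        ext e
        simp only [Finset.mem_filter, Finset.mem_sdiff, Finset.mem_erase, hM, Finset.mem_image,
          Finset.mem_univ, true_and, not_exists]
        constructor
        · rintro ⟨⟨h1, h2⟩, h3⟩
          exact ⟨fun h => h2 a h.symm, h1, h3⟩
        · rintro ⟨h1, h2, h3⟩
          refine ⟨⟨h2, fun a' ha' => h1 ?_⟩, h3⟩
          rw [← ha', (hε a').2] at h3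
          rw [← ha', h3]
      rw [h1, Finset.card_erase_of_mem (Finset.mem_filter.2 (hε a)), hu, Nat.add_sub_cancel]
    have hMb : ∀ b, ((E \ M).filter fun e => v e = b).card = d := by
      intro b
      obtain ⟨a, ha⟩ := hbij.2 b
      have h1 : ((E \ M).filter fun e => v e = b) = (E.filter fun e => v e = b).erase (ε a) := by
        ext e
        simp only [Finset.mem_filter, Finset.mem_sdiff, Finset.mem_erase, hM, Finset.mem_image,
          Finset.mem_univ, true_and, not_exists]
        constructor
        · rintro ⟨⟨h1, h2⟩, h3⟩
          exact ⟨fun h => h2 a h.symm, h1, h3⟩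
        · rintro ⟨h1, h2, h3⟩
          refine ⟨⟨h2, fun a' ha' => h1 ?_⟩, h3⟩
          rw [← ha', ← ha] at h3
          rw [← ha', hbij.1 h3]
      rw [h1, Finset.card_erase_of_mem (Finset.mem_filter.2 ⟨(hε a).1, ha⟩), hv,
        Nat.add_sub_cancel]
    obtain ⟨c, hc1, hc2⟩ := ih (E \ M) hMa hMb
    refine ⟨fun e => if e ∈ M then d + 1 else c e, fun e he => ?_, fun e he e' he' hne h => ?_⟩
    · by_cases hm : e ∈ M
      · simp [hm]
      · have := hc1 e (Finset.mem_sdiff.2 ⟨he, hm⟩)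
        simp only [if_neg hm, Finset.mem_Icc] at this ⊢
        omega
    · by_cases hm : e ∈ M <;> by_cases hm' : e' ∈ M
      · exact absurd (hMu e hm e' hm' h) hne
      · have := hc1 e' (Finset.mem_sdiff.2 ⟨he', hm'⟩)
        simp only [if_pos hm, if_neg hm', Finset.mem_Icc] at this ⊢
        omega
      · have := hc1 e (Finset.mem_sdiff.2 ⟨he, hm⟩)
        simp only [if_pos hm', if_neg hm, Finset.mem_Icc] at this ⊢
        omega
      · simp only [if_neg hm, if_neg hm']
        exact hc2 e (Finset.mem_sdiff.2 ⟨he, hm⟩) e' (Finset.mem_sdiff.2 ⟨he', hm'⟩) hne h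

end Koenig

/-! ### Edge colorings of regular bipartite multigraphs -/

section Regular

open scoped Classical
open Multigraph

variable {α β : Type}

theorem mDeg_eq_card [Fintype β] (G : Multigraph α β) (x : α) :
    G.mDeg x = (Finset.univ.filter fun e => x ∈ G.ends e).card := by
  rw [Multigraph.mDeg, Set.ncard_eq_toFinset_card']
  congr 1
  ext; simp

/-- König's theorem for a `t`-regular bipartite multigraph. -/
theorem exists_isProper [Fintype α] [Fintype β] (G : Multigraph α β) {t : ℕ} (hreg : ∀ x, G.mDeg x = t)
    (hbip : G.toSimple.Colorable 2) : ∃ f, G.IsProper t f := by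
  obtain ⟨C⟩ := hbip
  choose u v huv hu hv using exists_ends G C
  have hne : ∀ x, C x = 0 → C x = 1 → False := fun x h0 h1 => by
    rw [h0] at h1; exact absurd h1 (by decide)
  have hmemu : ∀ x e, C x = 0 → (x ∈ G.ends e ↔ u e = x) := by
    intro x e hx
    rw [huv, Sym2.mem_iff]
    refine ⟨?_, fun h => Or.inl h.symm⟩
    rintro (h | h)
    · exact h.symm
    · exact (hne x hx (h ▸ hv e)).elim
  have hmemv : ∀ x e, C x = 1 → (x ∈ G.ends e ↔ v e = x) := by
    intro x e hx
    rw [huv, Sym2.mem_iff]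
    refine ⟨?_, fun h => Or.inr h.symm⟩
    rintro (h | h)
    · exact (hne x (h ▸ hu e) hx).elim
    · exact h.symm
  obtain ⟨c, hc1, hc2⟩ := exists_edge_coloring (A := {x // C x = 0}) (B := {x // C x = 1})
    (fun e => ⟨u e, hu e⟩) (fun e => ⟨v e, hv e⟩) t Finset.univ
    (fun a => by
      rw [← hreg a.1, mDeg_eq_card]
      refine congrArg _ ?_
      ext e
      simp only [Finset.mem_filter, hmemu a.1 e a.2, Subtype.ext_iff])
    (fun a => by
      rw [← hreg a.1, mDeg_eq_card]
      refine congrArg _ ?_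
      ext e
      simp only [Finset.mem_filter, hmemv a.1 e a.2, Subtype.ext_iff])
  refine ⟨c, fun e => hc1 e (Finset.mem_univ _), fun e e' hee => ?_⟩
  rintro ⟨x, hx, hx'⟩
  refine hc2 e (Finset.mem_univ _) e' (Finset.mem_univ _) hee ?_
  have hC01 : C x = 0 ∨ C x = 1 := by
    generalize C x = p
    revert p
    decide
  rcases hC01 with h | h
  · exact Or.inl (Subtype.ext (((hmemu x e h).1 hx).trans ((hmemu x e' h).1 hx').symm))
  · exact Or.inr (Subtype.ext (((hmemv x e h).1 hx).trans ((hmemv x e' h).1 hx').symm))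

theorem isProper_le [Fintype β] {G : Multigraph α β} {s : ℕ} {f : β → ℕ} (hf : G.IsProper s f) (x : α) :
    G.mDeg x ≤ s := by
  rw [mDeg_eq_card]
  have := Finset.card_le_card_of_injOn (s := Finset.univ.filter fun e => x ∈ G.ends e)
    (t := Finset.Icc 1 s) f (fun e _ => hf.1 e) (by
      intro e he e' he' h
      by_contra hne
      exact hf.2 e e' hne ⟨x, (Finset.mem_filter.1 he).2, (Finset.mem_filter.1 he').2⟩ h)
  simpa using this

/-- In a `t`-regular multigraph each of the `t` colors occurs exactly once at every vertex. -/
theorem sum_indicator [Fintype β] {G : Multigraph α β} {t : ℕ} (hreg : ∀ x, G.mDeg x = t)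
    {f : β → ℕ} (hf : G.IsProper t f) (x : α) {i : ℕ} (hi : i ∈ Finset.Icc 1 t) :
    ∑ e with x ∈ G.ends e, (if f e = i then (1 : ℤ) else 0) = 1 := by
  set S := Finset.univ.filter fun e => x ∈ G.ends e with hS
  have hinj : Set.InjOn f S := by
    intro e he e' he' h
    by_contra hne
    exact hf.2 e e' hne ⟨x, (Finset.mem_filter.1 he).2, (Finset.mem_filter.1 he').2⟩ h
  have himg : S.image f = Finset.Icc 1 t := by
    refine Finset.eq_of_subset_of_card_le ?_ ?_
    · intro k hk
      obtain ⟨e, -, rfl⟩ := Finset.mem_image.1 hk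
      exact hf.1 e
    · rw [Finset.card_image_of_injOn hinj, Nat.card_Icc, ← mDeg_eq_card, hreg]
      simp
  rw [← himg] at hi
  obtain ⟨e₀, he₀, hfe⟩ := Finset.mem_image.1 hi
  rw [Finset.sum_eq_single_of_mem e₀ he₀, if_pos hfe]
  intro e he hne
  rw [if_neg]
  exact fun h => hne (hinj he he₀ (h.trans hfe.symm))

/-- Colorings represented by heights relative to a perfect matching are proper. -/
theorem Rep.isProper [Fintype β] {G : Multigraph α β} {t : ℕ} {Φ : Type} {l r : β → Φ} {m : β → ℤ}
    (hbal : ∀ (h : Φ → ℤ) x, ∑ e with x ∈ G.ends e, (h (l e) - h (r e)) = 0)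
    (hm : ∀ x, ∑ e with x ∈ G.ends e, m e = 1) {f : β → ℕ} {H : ℕ → Φ → ℤ}
    (hf : Rep t l r m f H) : G.IsProper t f := by
  refine ⟨hf.1, ?_⟩
  rintro e e' hne ⟨x, hx, hx'⟩ h
  have h1 : ∑ e₁ with x ∈ G.ends e₁, (if f e₁ = f e then (1 : ℤ) else 0) = 1 := by
    rw [Finset.sum_congr rfl fun e₁ _ => hf.2 (f e) (hf.1 e) e₁]
    simp only [add_sub_assoc]
    rw [Finset.sum_add_distrib, hm, hbal, add_zero]
  have h2 : ∑ e₁ ∈ ({e, e'} : Finset β), (if f e₁ = f e then (1 : ℤ) else 0)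
      ≤ ∑ e₁ with x ∈ G.ends e₁, (if f e₁ = f e then (1 : ℤ) else 0) := by
    refine Finset.sum_le_sum_of_subset_of_nonneg ?_ fun e₁ _ _ => by split_ifs <;> simp
    intro e₁ he₁
    simp only [Finset.mem_insert, Finset.mem_singleton] at he₁
    rcases he₁ with rfl | rfl
    · simpa using hx
    · simpa using hx'
  rw [h1, Finset.sum_pair hne, if_pos rfl, if_pos h.symm] at h2
  omega

/-- A chain of Kempe moves between represented colorings is a Kempe equivalence. -/
theorem mNEquiv_of_kMove {G : Multigraph α β} {t : ℕ} {Φ : Type} {l r : β → Φ} {m : β → ℤ}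
    (hprop : ∀ {f : β → ℕ} {H : ℕ → Φ → ℤ}, Rep t l r m f H → G.IsProper t f)
    {f g : β → ℕ} (hf : G.IsProper t f) (h : Relation.ReflTransGen (KMove t l r m) f g) :
    G.MNEquiv t 2 f g := by
  induction h with
  | refl => exact ⟨1, fun _ => f, le_rfl, rfl, rfl, fun _ _ => hf, fun _ _ => by
      simp [MDifferAtMost]⟩
  | @tail b c _ hstep ih =>
    obtain ⟨k, F, hk, h0, hFk, hF, hd⟩ := ih
    obtain ⟨-, ⟨H, hH⟩, hbc⟩ := hstep
    refine ⟨k + 1, fun i => if i ≤ k then F i else c, by omega, by simpa using h0, by simp,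
      fun i hi => ?_, fun i hi => ?_⟩
    · by_cases hik : i ≤ k
      · simpa only [if_pos hik] using hF i hik
      · simpa only [if_neg hik] using hprop hH
    · by_cases hik : i < k
      · simpa only [if_pos hik.le, if_pos (Nat.succ_le_of_lt hik)] using hd i hik
      · obtain rfl : i = k := by omega
        simpa only [le_refl, if_true, if_neg (Nat.not_succ_le_self _), hFk] using hbc

/-- All proper colorings are represented by heights relative to one color class of one of them. -/
theorem mNEquiv_of_isProper [Fintype α] [Fintype β] {G : Multigraph α β} {t : ℕ} (ht : 1 ≤ t)
    (hreg : ∀ x, G.mDeg x = t) (hplanar : Planar G.toSimple) (hbip : G.toSimple.Colorable 2)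
    {f g : β → ℕ} (hf : G.IsProper t f) (hg : G.IsProper t g) : G.MNEquiv t 2 f g := by
  obtain ⟨Φ, _, l, r, hbal, hex⟩ := exists_multi_dual G hplanar.hasDual hbip
  have h1t : (1 : ℕ) ∈ Finset.Icc 1 t := Finset.mem_Icc.2 ⟨le_rfl, ht⟩
  set m : β → ℤ := fun e => if f e = 1 then 1 else 0 with hm
  have hm01 : ∀ e, m e = 0 ∨ m e = 1 := fun e => by
    simp only [hm]; split_ifs <;> simp
  have hmsum : ∀ x, ∑ e with x ∈ G.ends e, m e = 1 := fun x => sum_indicator hreg hf x h1t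
  have hrep : ∀ {f' : β → ℕ}, G.IsProper t f' → ∃ H, Rep t l r m f' H := by
    intro f' hf'
    have : ∀ i, ∃ h : Φ → ℤ, i ∈ Finset.Icc 1 t →
        ∀ e, (if f' e = i then 1 else 0) = m e + h (l e) - h (r e) := by
      intro i
      by_cases hi : i ∈ Finset.Icc 1 t
      · obtain ⟨h, hh⟩ := hex (fun e => (if f' e = i then 1 else 0) - m e) fun x => by
          rw [Finset.sum_sub_distrib, sum_indicator hreg hf' x hi, hmsum, sub_self]
        exact ⟨h, fun _ e => by have := hh e; linarith⟩
      · exact ⟨fun _ => 0, fun h => absurd h hi⟩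
    choose H hH using this
    exact ⟨H, hf'.1, hH⟩
  obtain ⟨H, hH⟩ := hrep hf
  obtain ⟨K, hK⟩ := hrep hg
  exact mNEquiv_of_kMove (fun h => h.isProper hbal hmsum) hf (hH.connected ht hm01 hK)

end Regular

/-! ### Kempe equivalence -/

/-- If `G` is a `t`-regular planar bipartite multigraph, `t ≥ 2`, then all
proper `t`-edge-colorings of `G` are Kempe-equivalent (2-equivalent), and `χ'_trans(G) = 2`. -/
theorem kempe_equivalent_of_regular_planar_bipartite_multigraph
    {α β : Type} [Finite α] [Finite β] (G : Multigraph α β) (t : ℕ) (ht : 2 ≤ t)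
    (hreg : ∀ x : α, G.mDeg x = t)
    (hplanar : Planar G.toSimple)
    (hbip : G.toSimple.Colorable 2) :
    (∀ f g, G.IsProper t f → G.IsProper t g → G.MNEquiv t 2 f g) ∧
    G.mTransIdx = 2 := by
  have := Fintype.ofFinite α
  have := Fintype.ofFinite β
  have hmain : ∀ f g, G.IsProper t f → G.IsProper t g → G.MNEquiv t 2 f g := fun f g hf hg =>
    mNEquiv_of_isProper (by omega) hreg hplanar hbip hf hg
  refine ⟨hmain, ?_⟩
  have h2 : ∀ f g, G.IsProper G.mChromIdx f → G.IsProper G.mChromIdx g →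
      G.MNEquiv G.mChromIdx 2 f g := by
    rcases isEmpty_or_nonempty α with hα | ⟨⟨x⟩⟩
    · -- without vertices the chromatic index is `0`, but there is only one coloring
      have hβ : IsEmpty β := ⟨fun e => by
        induction h : G.ends e with
        | _ a b => exact hα.elim a⟩
      intro f g hf _
      refine ⟨1, fun _ => f, le_rfl, rfl, Subsingleton.elim _ _, fun _ _ => hf, fun _ _ => ?_⟩
      simp [Multigraph.MDifferAtMost]
    · have hidx : G.mChromIdx = t := by
        refine le_antisymm (Nat.sInf_le (exists_isProper G hreg hbip)) ?_
        refine le_csInf ⟨t, exists_isProper G hreg hbip⟩ ?_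
        rintro s ⟨f, hf⟩
        exact hreg x ▸ isProper_le hf x
      rw [hidx]
      exact hmain
  exact le_antisymm (Nat.sInf_le ⟨le_rfl, h2⟩) (le_csInf ⟨2, le_rfl, h2⟩ fun n hn => hn.1)

end EdgeTrans
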